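/- arXiv:2411.12684 — 7 statements merged into one kernel-verified Lean document; each statement's English description precedes it below -/
import Mathlib

section
/- The set 𝒮₁(6) ∩ (1/3, 1/2] contains the set { 1/3 + 1/(6(6s + 11)) : s ∈ ℤ, s ≥ 0 }. -/
noncomputable section

abbrev Torus (n : ℕ) : Type := Fin n → AddCircle (1 : ℝ)

def torusProj {n : ℕ} (x : Fin n → ℝ) : Torus n := fun i => (x i : AddCircle (1 : ℝ))

def spanTorus {n k : ℕ} (v : Fin k → Fin n → ℤ) : Set (Torus n) :=
  {p | ∃ t : Fin k → ℝ, p = torusProj fun i => ∑ j, t j * (v j i : ℝ)}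

def IsSubtorus {n : ℕ} (k : ℕ) (S : Set (Torus n)) : Prop :=
  ∃ v : Fin k → Fin n → ℤ,
    LinearIndependent ℝ (fun j : Fin k => fun i : Fin n => (v j i : ℝ)) ∧ S = spanTorus v

def IsProperSub {n : ℕ} (S : Set (Torus n)) : Prop :=
  ¬ S ⊆ ⋃ i : Fin n, {x : Torus n | x i = 0}

def DVal {n : ℕ} (S : Set (Torus n)) : ℝ :=
  sInf ((fun x : Torus n => ⨆ i, dist (x i) ((1 / 2 : ℝ) : AddCircle (1 : ℝ))) '' S)

def relSpec1 {n : ℕ} (U : Set (Torus n)) : Set ℝ :=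
  {d | ∃ T : Set (Torus n), IsSubtorus 1 T ∧ IsProperSub T ∧ T ⊆ U ∧ d = DVal T}

def Spec (k n : ℕ) : Set ℝ :=
  {d | ∃ T : Set (Torus n), IsSubtorus k T ∧ IsProperSub T ∧ d = DVal T}

def progSet (d : ℝ) (α β : ℚ) : Set ℝ :=
  {x | ∃ s : ℕ, x = d + 1 / ((α : ℝ) * s + (β : ℝ))}

abbrev spd (s : ℕ) : Fin 6 → ℤ :=
  ![6, 6 * s - 1, 6 * s + 5, 6 * s + 11, 6 * s + 17, 12 * s + 16]

lemma dist_le_of (y r : ℝ) (n : ℤ) (h1 : n + 1/2 - r ≤ y) (h2 : y ≤ n + 1/2 + r) :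
    dist (y : AddCircle (1:ℝ)) ((1/2 : ℝ) : AddCircle (1:ℝ)) ≤ r := by
  rw [dist_eq_norm, ← AddCircle.coe_sub, UnitAddCircle.norm_eq]
  refine (round_le (y - 1/2) n).trans ?_
  rw [abs_le]; constructor <;> linarith

lemma of_dist_lt (y r : ℝ)
    (h : dist (y : AddCircle (1:ℝ)) ((1/2 : ℝ) : AddCircle (1:ℝ)) < r) :
    ∃ n : ℤ, n + 1/2 - r < y ∧ y < n + 1/2 + r := by
  rw [dist_eq_norm, ← AddCircle.coe_sub, UnitAddCircle.norm_eq, abs_lt] at h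
  exact ⟨round (y - 1/2), by linarith [h.1], by linarith [h.2]⟩

/-- Endgame: an integer in an open unit interval. -/
lemma int_gap (M j : ℤ) (V : ℝ) (hV : V = M) (h1 : (j : ℝ) < V) (h2 : V < j + 1) : False := by
  rw [hV] at h1 h2
  have h1' : j < M := by exact_mod_cast h1
  have h2' : M < j + 1 := by exact_mod_cast h2
  omega

set_option maxHeartbeats 4000000 in
lemma core (c d X Z S : ℝ) (N σ : ℤ) (a b e f : ℤ) (hσ : S = σ)
    (hc : 11 ≤ c) (hcS : c = 6 * S + 11) (hd : c * d = 1/6) (hd0 : 0 < d) (hd1 : d ≤ 1/66)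
    (hN : 6 * Z - c * X = N)
    (x1 : 1/6 - d < X) (x2 : X < 5/6 + d)
    (z1 : 1/6 - d < Z) (z2 : Z < 5/6 + d)
    (a1 : a + 1/6 - d < Z - 2 * X) (a2 : Z - 2 * X < a + 5/6 + d)
    (b1 : b + 1/6 - d < Z - X) (b2 : Z - X < b + 5/6 + d)
    (e1 : e + 1/6 - d < Z + X) (e2 : Z + X < e + 5/6 + d)
    (f1 : f + 1/6 - d < 2 * Z - X) (f2 : 2 * Z - X < f + 5/6 + d) : False := by
  have ha : -3 < a ∧ a < 1 := by
    constructor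
    · have : (-3 : ℝ) < a := by linarith
      exact_mod_cast this
    · have : (a : ℝ) < 1 := by linarith
      exact_mod_cast this
  have hb : -2 < b ∧ b < 1 := by
    constructor
    · have : (-2 : ℝ) < b := by linarith
      exact_mod_cast this
    · have : (b : ℝ) < 1 := by linarith
      exact_mod_cast this
  have he : -1 < e ∧ e < 2 := by
    constructor
    · have : (-1 : ℝ) < e := by linarith
      exact_mod_cast this
    · have : (e : ℝ) < 2 := by linarith
      exact_mod_cast this
  have hf : -2 < f ∧ f < 2 := by
    constructor
    · have : (-2 : ℝ) < f := by linarith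
      exact_mod_cast this
    · have : (f : ℝ) < 2 := by linarith
      exact_mod_cast this
  have key : ∀ k j : ℤ, (j : ℝ) < 6 * Z - c * X + S * k → 6 * Z - c * X + S * k < j + 1 → False := by
    intro k j h1 h2
    exact int_gap (N + σ * k) j _ (by push_cast; rw [hN, hσ]) h1 h2
  have hc' : 0 ≤ c - 11 := by linarith
  have x1' := mul_nonneg hc' (sub_nonneg.2 x1.le)
  have x2' := mul_nonneg hc' (sub_nonneg.2 x2.le)
  have z1' := mul_nonneg hc' (sub_nonneg.2 z1.le)
  have z2' := mul_nonneg hc' (sub_nonneg.2 z2.le)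
  have a1' := mul_nonneg hc' (sub_nonneg.2 a1.le)
  have a2' := mul_nonneg hc' (sub_nonneg.2 a2.le)
  have b1' := mul_nonneg hc' (sub_nonneg.2 b1.le)
  have b2' := mul_nonneg hc' (sub_nonneg.2 b2.le)
  have e1' := mul_nonneg hc' (sub_nonneg.2 e1.le)
  have e2' := mul_nonneg hc' (sub_nonneg.2 e2.le)
  have f1' := mul_nonneg hc' (sub_nonneg.2 f1.le)
  have f2' := mul_nonneg hc' (sub_nonneg.2 f2.le)
  obtain ⟨ha, ha'⟩ := ha
  obtain ⟨hb, hb'⟩ := hb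
  obtain ⟨he, he'⟩ := he
  obtain ⟨hf, hf'⟩ := hf
  clear hN
  interval_cases a <;> interval_cases b <;> interval_cases e <;> interval_cases f <;>
    push_cast at * <;>
    first
    | (exfalso; clear x1' x2' z1' z2' a1' a2' b1' b2' e1' e2' f1' f2'; linarith)
    | exact key (1) (1) (by push_cast; linarith) (by push_cast; linarith)
    | exact key (1) (2) (by push_cast; linarith) (by push_cast; linarith)
    | exact key (3) (-5) (by push_cast; linarith) (by push_cast; linarith)
    | exact key (3) (-4) (by push_cast; linarith) (by push_cast; linarith)
    | exact key (3) (-2) (by push_cast; linarith) (by push_cast; linarith)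
    | exact key (3) (-1) (by push_cast; linarith) (by push_cast; linarith)
    | exact key (2) (-1) (by push_cast; linarith) (by push_cast; linarith)
    | exact key (2) (1) (by push_cast; linarith) (by push_cast; linarith)
    | exact key (5) (-7) (by push_cast; linarith) (by push_cast; linarith)
    | exact key (5) (-8) (by push_cast; linarith) (by push_cast; linarith)
    | exact key (4) (-5) (by push_cast; linarith) (by push_cast; linarith)
    | exact key (4) (-7) (by push_cast; linarith) (by push_cast; linarith)

lemma lower (s : ℕ) (t : ℝ) (d : ℝ) (hd : (6 * (s:ℝ) + 11) * d = 1/6)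
    (h : ∀ i : Fin 6, dist ((t * (spd s i : ℝ) : ℝ) : AddCircle (1:ℝ))
      ((1/2 : ℝ) : AddCircle (1:ℝ)) < 1/3 + d) : False := by
  have hs : (0:ℝ) ≤ s := Nat.cast_nonneg s
  have hd0 : 0 < d := by
    by_contra hh
    nlinarith
  have hd1 : d ≤ 1/66 := by nlinarith
  obtain ⟨p, p1, p2⟩ := of_dist_lt _ _ (h 0)
  obtain ⟨a, a1, a2⟩ := of_dist_lt _ _ (h 1)
  obtain ⟨b, b1, b2⟩ := of_dist_lt _ _ (h 2)
  obtain ⟨q, q1, q2⟩ := of_dist_lt _ _ (h 3)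
  obtain ⟨e, e1, e2⟩ := of_dist_lt _ _ (h 4)
  obtain ⟨f, f1, f2⟩ := of_dist_lt _ _ (h 5)
  simp [spd] at p1 p2 a1 a2 b1 b2 q1 q2 e1 e2 f1 f2
  refine core (6 * s + 11) d (6 * t - p) ((6 * s + 11) * t - q) s
    ((6 * s + 11) * p - 6 * q) s (a - q + 2 * p) (b - q + p) (e - q - p) (f - 2 * q + p)
    (by simp) (by linarith) rfl hd hd0 hd1 (by push_cast; ring) ?_ ?_ ?_ ?_ ?_ ?_ ?_ ?_ ?_ ?_ ?_ ?_ <;>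
    push_cast <;> linarith

lemma upper (s : ℕ) (d : ℝ) (hd : (6 * (s:ℝ) + 11) * d = 1/6) :
    ∃ t : ℝ, ∀ i : Fin 6, dist ((t * (spd s i : ℝ) : ℝ) : AddCircle (1:ℝ))
      ((1/2 : ℝ) : AddCircle (1:ℝ)) ≤ 1/3 + d := by
  have hs : (0:ℝ) ≤ s := Nat.cast_nonneg s
  have hd0 : 0 < d := by
    by_contra hh
    nlinarith
  have hd1 : d ≤ 1/66 := by nlinarith
  obtain ⟨t, ht⟩ : ∃ t : ℝ, t = (1/6 + d + (s - 2)) / 6 := ⟨_, rfl⟩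
  have hx : 6 * t = 1/6 + d + (s - 2) := by rw [ht]; ring
  have hz : s * t = (2/3 + (s^2 - 4) - 11 * t) / 6 := by
    rw [ht]; linear_combination (1/36) * hd
  refine ⟨t, fun i => ?_⟩
  fin_cases i
  · apply dist_le_of _ _ (s - 2) <;> simp [spd] <;> linarith
  · apply dist_le_of _ _ (s^2 - 4 - 2 * (s - 2)) <;> simp [spd] <;> linarith
  · apply dist_le_of _ _ (s^2 - 4 - (s - 2)) <;> simp [spd] <;> linarith
  · apply dist_le_of _ _ (s^2 - 4) <;> simp [spd] <;> linarith
  · apply dist_le_of _ _ (s^2 - 4 + (s - 2)) <;> simp [spd] <;> linarith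
  · apply dist_le_of _ _ (2 * (s^2 - 4) - (s - 2) + 1) <;> simp [spd] <;> linarith

/-- `𝒮₁(6) ∩ (1/3, 1/2]` contains `1/3 + 1/6Prog(6,11)`. -/
theorem stmt5 :
    {x : ℝ | ∃ s : ℕ, x = 1/3 + 1/(6 * (6 * (s : ℝ) + 11))} ⊆
      Spec 1 6 ∩ Set.Ioc (1/3 : ℝ) (1/2) := by
  rintro x ⟨s, hx⟩
  have hs : (0:ℝ) ≤ s := Nat.cast_nonneg s
  obtain ⟨d, hdd⟩ : ∃ d : ℝ, d = 1/(6 * (6 * (s : ℝ) + 11)) := ⟨_, rfl⟩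
  rw [← hdd] at hx
  have hd : (6 * (s:ℝ) + 11) * d = 1/6 := by rw [hdd]; field_simp
  have hd0 : 0 < d := by rw [hdd]; positivity
  have hd1 : d ≤ 1/66 := by nlinarith
  obtain ⟨t, ht⟩ := upper s d hd
  refine ⟨⟨spanTorus (fun _ : Fin 1 => spd s), ⟨_, ?_, rfl⟩, ?_, ?_⟩, ?_, ?_⟩
  · rw [linearIndependent_unique_iff]
    intro h
    have := congrFun h 0
    simp [spd] at this
  · intro hsub
    have hm : (torusProj fun i => t * (spd s i : ℝ)) ∈ spanTorus (fun _ : Fin 1 => spd s) :=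
      ⟨fun _ => t, by simp⟩
    obtain ⟨i, hi⟩ := Set.mem_iUnion.1 (hsub hm)
    have h1 := ht i
    have h2 : ((t * (spd s i : ℝ) : ℝ) : AddCircle (1:ℝ)) = 0 := hi
    have h4 : dist ((t * (spd s i : ℝ) : ℝ) : AddCircle (1:ℝ))
      ((1/2 : ℝ) : AddCircle (1:ℝ)) < 1/2 := by linarith
    rw [h2, ← AddCircle.coe_zero] at h4
    obtain ⟨n, n1, n2⟩ := of_dist_lt _ _ h4
    have n1' : (n : ℝ) < 0 := by linarith
    have n2' : (-1 : ℝ) < n := by linarith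
    have : n < 0 := by exact_mod_cast n1'
    have : -1 < n := by exact_mod_cast n2'
    omega
  · rw [hx]
    symm
    apply IsLeast.csInf_eq
    have hlow : ∀ u : ℝ, 1/3 + d ≤ ⨆ i : Fin 6,
        dist ((t * 0 + u * (spd s i : ℝ) : ℝ) : AddCircle (1:ℝ))
          ((1/2 : ℝ) : AddCircle (1:ℝ)) := by
      intro u
      by_contra hh
      push Not at hh
      refine lower s u d hd fun i => lt_of_le_of_lt ?_ hh
      have := le_ciSup (f := fun i : Fin 6 =>
        dist ((t * 0 + u * (spd s i : ℝ) : ℝ) : AddCircle (1:ℝ))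
          ((1/2 : ℝ) : AddCircle (1:ℝ))) (Set.finite_range _).bddAbove i
      simpa only [mul_zero, zero_add] using this
    simp only [mul_zero, zero_add] at hlow
    constructor
    · refine ⟨torusProj fun i => t * (spd s i : ℝ), ⟨fun _ => t, by simp⟩, ?_⟩
      exact le_antisymm (ciSup_le ht) (hlow t)
    · rintro _ ⟨_, ⟨u, rfl⟩, rfl⟩
      have := hlow (u 0)
      simp only [Fin.sum_univ_one]
      exact this
  · rw [hx]; linarith
  · rw [hx]; linarith
end
end

section
/- Let K ≥ 1 be a natural number, and let A', B' be coprime integers with B' ≠ 0. Set q := |B'|, and let 0 ≤ a < K be the integer satisfying a ≡ A' (mod K) if B' > 0 and a ≡ −A' (mod K) if B' < 0. Then, in (ℝ/ℤ)², one has ((ℝ/ℤ) × ⟨1/K⟩) ∩ ⟨(A',B')⟩_ℝ = ⋃_{ℓ=0}^{K−1} ( (aℓ/(Kq) + ⟨1/q⟩) × {ℓ/K} ). -/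
noncomputable section

/-- The 2-dimensional torus `(ℝ/ℤ)²`. -/
abbrev T2 : Type := AddCircle (1 : ℝ) × AddCircle (1 : ℝ)

/-- The image mod `ℤ²` of the real line `ℝ·(A,B)`. -/
def lineT2 (A B : ℤ) : Set T2 :=
  {p | ∃ t : ℝ, p = (((t * A : ℝ) : AddCircle (1 : ℝ)), ((t * B : ℝ) : AddCircle (1 : ℝ)))}

/-- **Lemma (intersection structure).** For coprime `A', B'` with `B' ≠ 0`,
`((ℝ/ℤ) × ⟨1/K⟩) ∩ ⟨(A',B')⟩_ℝ = ⋃_{ℓ=0}^{K-1} ((aℓ/(Kq) + ⟨1/q⟩) × {ℓ/K})`,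
where `q = |B'|` and `0 ≤ a < K` with `a ≡ A' (mod K)` if `B' > 0` and
`a ≡ -A' (mod K)` if `B' < 0`. -/
theorem stmt7 (K : ℕ) (hK : 1 ≤ K) (A' B' : ℤ) (hcop : Int.gcd A' B' = 1) (hB' : B' ≠ 0)
    (q : ℕ) (hq : q = B'.natAbs)
    (a : ℤ) (ha0 : 0 ≤ a) (haK : a < (K : ℤ))
    (hapos : 0 < B' → Int.ModEq (K : ℤ) a A')
    (haneg : B' < 0 → Int.ModEq (K : ℤ) a (-A')) :
    {p : T2 | ∃ m : ℤ, p.2 = (((m : ℝ) / (K : ℝ) : ℝ) : AddCircle (1 : ℝ))} ∩ lineT2 A' B' =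
      ⋃ ℓ ∈ Finset.range K, {p : T2 |
        (∃ m : ℤ, p.1 =
          (((a : ℝ) * (ℓ : ℝ) / ((K : ℝ) * (q : ℝ)) + (m : ℝ) / (q : ℝ) : ℝ) : AddCircle (1 : ℝ))) ∧
        p.2 = (((ℓ : ℝ) / (K : ℝ) : ℝ) : AddCircle (1 : ℝ))} := by
  obtain ⟨s, c, hs, hB, hc⟩ : ∃ s c : ℤ, s * s = 1 ∧ B' = s * q ∧ s * A' = a + K * c := by
    rcases lt_or_gt_of_ne hB' with h | h
    · obtain ⟨c, hc⟩ := (haneg h).dvd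
      exact ⟨-1, c, by norm_num, by omega, by linarith⟩
    · obtain ⟨c, hc⟩ := (hapos h).dvd
      exact ⟨1, c, by norm_num, by omega, by linarith⟩
  have hq0 : (q : ℝ) ≠ 0 := by
    have : q ≠ 0 := by omega
    exact_mod_cast this
  have hK0 : (K : ℝ) ≠ 0 := by
    have : K ≠ 0 := by omega
    exact_mod_cast this
  have hsR : (s : ℝ) * s = 1 := by exact_mod_cast hs
  have hBR : (B' : ℝ) = s * q := by exact_mod_cast hB
  have hcR : (s : ℝ) * A' = a + K * c := by exact_mod_cast hc
  have key : ∀ x y : ℝ, ((x : AddCircle (1 : ℝ)) = (y : AddCircle (1 : ℝ))) ↔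
      ∃ n : ℤ, x = y + n := by
    intro x y
    rw [eq_comm, QuotientAddGroup.eq, AddSubgroup.mem_zmultiples_iff]
    constructor
    · rintro ⟨n, hn⟩
      refine ⟨n, ?_⟩
      simp at hn
      linarith
    · rintro ⟨n, hn⟩
      refine ⟨n, ?_⟩
      simp
      linarith
  ext ⟨x, y⟩
  simp only [lineT2, Set.mem_inter_iff, Set.mem_setOf_eq, Set.mem_iUnion, Finset.mem_range,
    Prod.mk.injEq, exists_prop]
  constructor
  · rintro ⟨⟨m, hm⟩, t, rfl, hy⟩
    have hKz : (0 : ℤ) < K := by omega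
    obtain ⟨l, hl⟩ := Int.eq_ofNat_of_zero_le (Int.emod_nonneg m hKz.ne')
    have hlK := Int.emod_lt_of_pos m hKz
    have hdm := Int.mul_ediv_add_emod m K
    have hmR : (m : ℝ) = K * (m / (K : ℤ) : ℤ) + l := by
      rw [hl] at hdm
      exact_mod_cast hdm.symm
    have hyl : y = (((l : ℝ) / (K : ℝ) : ℝ) : AddCircle (1 : ℝ)) := by
      rw [hm, key]
      refine ⟨m / (K : ℤ), ?_⟩
      rw [hmR]
      field_simp
      ring
    refine ⟨l, by omega, ?_, hyl⟩
    rw [hy, key] at hyl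
    obtain ⟨n, hn⟩ := hyl
    refine ⟨a * n + c * l + K * c * n, ?_⟩
    congr 1
    have ht : t * q = s * (l / K + n) := by
      rw [← hn, hBR]
      linear_combination (-t * q) * hsR
    have h2 : t * A' * q = (a + K * c) * (l / K + n) := by
      rw [← hcR]
      linear_combination (A' : ℝ) * ht
    have h3 : t * A' = (a + K * c) * (l / K + n) / q := by
      rw [← h2]
      field_simp
    rw [h3]
    push_cast
    field_simp
    ring
  · rintro ⟨l, hl, ⟨m, rfl⟩, rfl⟩
    refine ⟨⟨l, by simp⟩, ?_⟩
    have hb := Int.gcd_eq_gcd_ab A' B'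
    rw [hcop] at hb
    set u := Int.gcdA A' B'
    set v := Int.gcdB A' B'
    have hbR : (1 : ℝ) = A' * u + s * q * v := by
      rw [← hBR]
      exact_mod_cast hb
    have hu : ((a : ℝ) + K * c) * (s * u) = 1 - s * v * q := by
      rw [← hcR]
      linear_combination (A' * u : ℝ) * hsR - hbR
    refine ⟨s * (l / K + ((s * u * (m - c * l) : ℤ) : ℝ)) / q, ?_, ?_⟩
    · rw [key]
      refine ⟨s * v * (m - c * l), ?_⟩
      have h1 : s * (l / K + ((s * u * (m - c * l) : ℤ) : ℝ)) / q * A' =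
        ((a + K * c) * l / K + (1 - s * v * q) * (m - c * l)) / q := by
        rw [← hu, ← hcR]
        push_cast
        ring
      rw [h1]
      push_cast
      field_simp
      ring
    · rw [eq_comm, key]
      refine ⟨s * u * (m - c * l), ?_⟩
      rw [hBR]
      have h1 : ∀ z : ℝ, s * z / q * (s * q) = z := by
        intro z
        field_simp
        linear_combination z * hsR
      exact h1 _
end
end

section
/- Let f : ℝ/ℤ → ℝ be a continuous piecewise-linear function with finitely many pieces, each piece having rational slope and rational endpoints, and let b be a rational number. Then there is a natural number M ≥ 1 such that for each integer 0 ≤ Q < M there is a nonnegative rational number γ_Q with the following property: for all sufficiently large natural numbers q with q ≡ Q (mod M), one has min_{t ∈ b/q + ⟨1/q⟩} f(t) = min_{t ∈ ℝ/ℤ} f(t) + γ_Q/q. -/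
noncomputable section

/-- `f : ℝ/ℤ → ℝ` is piecewise linear with finitely many pieces, each with rational
slope and rational endpoints: there is a finite rational partition `0 = t₀ < t₁ < ⋯ < tₘ = 1`
of the circle such that on each piece `[tᵢ, tᵢ₊₁]` the function is affine with rational slope. -/
def IsRatPiecewiseLinear (f : AddCircle (1 : ℝ) → ℝ) : Prop :=
  ∃ (m : ℕ) (t : Fin (m + 1) → ℚ) (lam : Fin m → ℚ),
    t 0 = 0 ∧ t (Fin.last m) = 1 ∧ StrictMono t ∧
    ∀ i : Fin m, ∀ s : ℝ, ((t i.castSucc : ℚ) : ℝ) ≤ s → s ≤ ((t i.succ : ℚ) : ℝ) →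
      f ((s : ℝ) : AddCircle (1 : ℝ)) =
        f ((((t i.castSucc : ℚ) : ℝ)) : AddCircle (1 : ℝ)) +
          ((lam i : ℚ) : ℝ) * (s - ((t i.castSucc : ℚ) : ℝ))

/-- One piece with nonnegative slope. -/
lemma piece_nonneg (F : ℝ → ℝ) (u v l b : ℚ) (huv : u < v) (hl : 0 ≤ l) (M : ℕ)
    (hM : ∃ k : ℤ, (M : ℚ) * u = k)
    (hF : ∀ s : ℝ, (u : ℝ) ≤ s → s ≤ v → F s = F u + l * (s - u)) :
    ∃ c : ℝ, (∃ s, F s = c) ∧ (∀ s : ℝ, (u : ℝ) ≤ s → s ≤ v → c ≤ F s) ∧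
      ∀ Q : ℕ, ∃ g : ℚ, 0 ≤ g ∧
        (∀ q : ℕ, 0 < q → q % M = Q → ∀ r : ℤ, (u : ℝ) ≤ ((b : ℝ) + r) / q →
          ((b : ℝ) + r) / q ≤ v → c + g / q ≤ F (((b : ℝ) + r) / q)) ∧
        (∃ q₀ : ℕ, ∀ q : ℕ, q₀ ≤ q → q % M = Q →
          ∃ r : ℤ, F (((b : ℝ) + r) / q) = c + g / q) := by
  have hlR : (0 : ℝ) ≤ l := by exact_mod_cast hl
  have huvR : (u : ℝ) < v := by exact_mod_cast huv
  refine ⟨F u, ⟨u, rfl⟩, fun s h1 h2 => ?_, fun Q => ?_⟩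
  · rw [hF s h1 h2]
    nlinarith [mul_nonneg hlR (sub_nonneg.2 h1)]
  obtain ⟨k, hk⟩ := hM
  have key : ∀ q : ℕ, q % M = Q → ∃ n : ℤ, (q : ℚ) * u = Q * u + n := by
    intro q hq
    generalize hd : q / M = d at *
    refine ⟨(d : ℤ) * k, ?_⟩
    have h := Nat.mod_add_div q M
    rw [hq, hd] at h
    have h' : (q : ℚ) = Q + M * d := by exact_mod_cast h.symm
    rw [h']
    push_cast
    rw [← hk]
    ring
  refine ⟨l * Int.fract (b - Q * u), mul_nonneg hl (Int.fract_nonneg _), ?_, ?_⟩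
  · intro q hq0 hq r h1 h2
    obtain ⟨n, hn⟩ := key q hq
    have hqR : (0 : ℝ) < q := by exact_mod_cast hq0
    rw [hF _ h1 h2]
    have h3 : (u : ℝ) * q ≤ b + r := (le_div_iff₀ hqR).1 h1
    have h3' : u * q ≤ b + r := by exact_mod_cast h3
    have h4 : Int.fract (b - Q * u) ≤ b + r - q * u := by
      have e : b - Q * u = (b + r - q * u) + ((n - r : ℤ) : ℚ) := by
        rw [hn]; push_cast; ring
      rw [e, Int.fract_add_intCast]
      have := Int.floor_nonneg.2 (show 0 ≤ b + r - q * u by linarith)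
      have t : (0 : ℚ) ≤ (⌊b + r - q * u⌋ : ℤ) := by exact_mod_cast this
      rw [Int.fract]; linarith
    have h5 : ((Int.fract (b - Q * u) : ℚ) : ℝ) ≤ b + r - q * u := by exact_mod_cast h4
    have e : ((b : ℝ) + r) / q - u = (b + r - q * u) / q := by field_simp
    rw [e, Rat.cast_mul, mul_div_assoc]
    gcongr
  · obtain ⟨q₀, hq₀⟩ := exists_nat_gt (1 / ((v : ℝ) - u))
    refine ⟨q₀ + 1, fun q hq hqM => ?_⟩
    obtain ⟨n, hn⟩ := key q hqM
    have hqR : (0 : ℝ) < q := by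
      have : 0 < q := by omega
      exact_mod_cast this
    have hq0R : (q₀ : ℝ) ≤ q := by
      have : q₀ ≤ q := by omega
      exact_mod_cast this
    set x := Int.fract (b - Q * u) with hx
    have hx0 : (0 : ℝ) ≤ x := by exact_mod_cast Int.fract_nonneg (b - Q * u)
    have hx1 : (x : ℝ) ≤ 1 := by exact_mod_cast (Int.fract_lt_one (b - Q * u)).le
    have e : (b + ((n - ⌊b - Q * u⌋ : ℤ) : ℚ)) = q * u + x := by
      rw [hn, hx, Int.fract]; push_cast; ring
    have eR : ((b : ℝ) + ((n - ⌊b - Q * u⌋ : ℤ) : ℝ)) = q * u + x := by exact_mod_cast e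
    refine ⟨n - ⌊b - Q * u⌋, ?_⟩
    have e2 : ((q : ℝ) * u + x) / q = u + x / q := by field_simp
    rw [eR, e2, hF]
    · push_cast; ring
    · have : 0 ≤ (x : ℝ) / q := by positivity
      linarith
    · have h1 : (x : ℝ) / q ≤ v - u := by
        rw [div_le_iff₀ hqR]
        have := (div_lt_iff₀ (sub_pos.2 huvR)).1 hq₀
        nlinarith
      linarith

/-- One piece with arbitrary slope. -/
lemma piece (F : ℝ → ℝ) (u v l b : ℚ) (huv : u < v) (M : ℕ)
    (hM : ∃ k : ℤ, (M : ℚ) * u = k) (hM' : ∃ k : ℤ, (M : ℚ) * v = k)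
    (hF : ∀ s : ℝ, (u : ℝ) ≤ s → s ≤ v → F s = F u + l * (s - u)) :
    ∃ c : ℝ, (∃ s, F s = c) ∧ (∀ s : ℝ, (u : ℝ) ≤ s → s ≤ v → c ≤ F s) ∧
      ∀ Q : ℕ, ∃ g : ℚ, 0 ≤ g ∧
        (∀ q : ℕ, 0 < q → q % M = Q → ∀ r : ℤ, (u : ℝ) ≤ ((b : ℝ) + r) / q →
          ((b : ℝ) + r) / q ≤ v → c + g / q ≤ F (((b : ℝ) + r) / q)) ∧
        (∃ q₀ : ℕ, ∀ q : ℕ, q₀ ≤ q → q % M = Q →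
          ∃ r : ℤ, F (((b : ℝ) + r) / q) = c + g / q) := by
  rcases le_total 0 l with hl | hl
  · exact piece_nonneg F u v l b huv hl M hM hF
  have huvR : (u : ℝ) < v := by exact_mod_cast huv
  obtain ⟨c, ⟨s, hs⟩, h1, h2⟩ := piece_nonneg (fun s => F (-s)) (-v) (-u) (-l) (-b)
    (neg_lt_neg huv) (neg_nonneg.2 hl) M
    (by obtain ⟨k, hk⟩ := hM'; exact ⟨-k, by push_cast; rw [← hk]; ring⟩)
    (by
      intro s h1 h2
      push_cast at h1 h2 ⊢
      rw [neg_neg, hF (-s) (by linarith) (by linarith), hF v huvR.le le_rfl]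
      ring)
  push_cast at h1 h2
  have neg_div' : ∀ (q : ℕ) (r : ℤ), -((-(b : ℝ) + ((-r : ℤ) : ℝ)) / q) = (b + r) / q := by
    intro q r; push_cast; ring
  refine ⟨c, ⟨-s, hs⟩, fun s a1 a2 => ?_, fun Q => ?_⟩
  · have := h1 (-s) (by linarith) (by linarith)
    simpa using this
  obtain ⟨g, g0, g1, q₀, g2⟩ := h2 Q
  refine ⟨g, g0, fun q hq hqM r a1 a2 => ?_, q₀, fun q hq hqM => ?_⟩
  · have e := neg_div' q r
    have := g1 q hq hqM (-r) (by linarith) (by linarith)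
    rwa [e] at this
  · obtain ⟨r, hr⟩ := g2 q hq hqM
    refine ⟨-r, ?_⟩
    have e := neg_div' q (-r)
    rw [neg_neg] at e
    rwa [e] at hr

/-- **Lemma (minimum of a piecewise-linear function on a coset `b/q + ⟨1/q⟩`).** -/
theorem stmt10 (f : AddCircle (1 : ℝ) → ℝ) (hf : Continuous f)
    (hpl : IsRatPiecewiseLinear f) (b : ℚ) :
    ∃ M : ℕ, 1 ≤ M ∧ ∀ Q : ℕ, Q < M → ∃ γ : ℚ, 0 ≤ γ ∧
      ∃ q₀ : ℕ, ∀ q : ℕ, q₀ ≤ q → q % M = Q →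
        sInf (f '' {p : AddCircle (1 : ℝ) |
            ∃ r : ℤ, p = (((b : ℝ) / q + (r : ℝ) / q : ℝ) : AddCircle (1 : ℝ))}) =
          sInf (Set.range f) + (γ : ℝ) / q := by
  obtain ⟨m, t, lam, t0, t1, tm, hpc⟩ := hpl
  have hfind : ∀ s : ℝ, 0 ≤ s → s < 1 → ∃ i : Fin m,
      ((t i.castSucc : ℚ) : ℝ) ≤ s ∧ s ≤ ((t i.succ : ℚ) : ℝ) := by
    intro s h0 h1
    have : ∀ j : Fin (m + 1), s < ((t j : ℚ) : ℝ) → ∃ i : Fin m,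
        ((t i.castSucc : ℚ) : ℝ) ≤ s ∧ s ≤ ((t i.succ : ℚ) : ℝ) := by
      intro j
      induction j using Fin.induction with
      | zero => intro h; rw [t0] at h; push_cast at h; linarith
      | succ i ih =>
        intro h
        by_cases h' : s < ((t i.castSucc : ℚ) : ℝ)
        · exact ih h'
        · exact ⟨i, not_lt.1 h', h.le⟩
    exact this (Fin.last m) (by rw [t1]; push_cast; exact h1)
  have hne : Nonempty (Fin m) := ⟨(hfind 0 le_rfl one_pos).choose⟩
  have hMd : ∀ j, ∃ k : ℤ, ((∏ j, (t j).den : ℕ) : ℚ) * t j = k := by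
    intro j
    obtain ⟨k, hk⟩ := Finset.dvd_prod_of_mem (fun j => (t j).den) (Finset.mem_univ j)
    refine ⟨k * (t j).num, ?_⟩
    rw [hk]
    push_cast
    rw [← Rat.den_mul_eq_num (t j)]
    ring
  have hM1 : 1 ≤ ∏ j, (t j).den := Finset.prod_pos fun j _ => (t j).den_pos
  generalize (∏ j, (t j).den) = M at hMd hM1
  have hP := fun i : Fin m => piece (fun s : ℝ => f (s : AddCircle (1 : ℝ))) (t i.castSucc)
    (t i.succ) (lam i) b (tm Fin.castSucc_lt_succ) M (hMd _) (hMd _) (hpc i)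
  choose c hc1 hc2 hc3 using hP
  refine ⟨M, hM1, fun Q _ => ?_⟩
  choose g hg0 hg1 q₁ hg2 using fun i => hc3 i Q
  obtain ⟨i₀, hi₀⟩ := Finite.exists_min (fun i => toLex (c i, g i))
  have hlex : ∀ i, c i₀ < c i ∨ c i₀ = c i ∧ g i₀ ≤ g i := by
    intro i
    simpa [Prod.Lex.toLex_le_toLex] using hi₀ i
  have hcle : ∀ i, c i₀ ≤ c i := fun i => (hlex i).elim le_of_lt fun h => h.1.le
  have hev : ∀ i, ∃ n : ℕ, ∀ q : ℕ, n ≤ q → 0 < q → c i₀ + g i₀ / q ≤ c i + g i / q := by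
    intro i
    rcases hlex i with h | ⟨h, h'⟩
    · obtain ⟨n, hn⟩ := exists_nat_gt ((g i₀ : ℝ) / (c i - c i₀))
      refine ⟨n, fun q hq hq0 => ?_⟩
      have hqR : (0 : ℝ) < q := by exact_mod_cast hq0
      have hnq : (n : ℝ) ≤ q := by exact_mod_cast hq
      have h1 := (div_lt_iff₀ (sub_pos.2 h)).1 hn
      have h2 : (g i₀ : ℝ) / q ≤ c i - c i₀ := by
        rw [div_le_iff₀ hqR]
        nlinarith
      have h3 : (0 : ℝ) ≤ g i / q := div_nonneg (by exact_mod_cast hg0 i) hqR.le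
      linarith
    · refine ⟨0, fun q _ hq0 => ?_⟩
      have : (g i₀ : ℝ) ≤ g i := by exact_mod_cast h'
      rw [h]
      gcongr
  choose n hn using hev
  have hrep : ∀ s : ℝ, ((Int.fract s : ℝ) : AddCircle (1 : ℝ)) = (s : AddCircle (1 : ℝ)) := by
    intro s
    have h : s = Int.fract s + (⌊s⌋ : ℤ) • (1 : ℝ) := by simp
    conv_rhs => rw [h]
    rw [AddCircle.coe_add, AddCircle.coe_zsmul, AddCircle.coe_period, smul_zero, add_zero]
  have hmin : sInf (Set.range f) = c i₀ := by
    apply IsLeast.csInf_eq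
    refine ⟨?_, ?_⟩
    · obtain ⟨s, hs⟩ := hc1 i₀
      exact ⟨_, hs⟩
    · rintro _ ⟨p, rfl⟩
      obtain ⟨s, rfl⟩ := QuotientAddGroup.mk_surjective p
      obtain ⟨i, h1, h2⟩ := hfind (Int.fract s) (Int.fract_nonneg s) (Int.fract_lt_one s)
      have := hc2 i _ h1 h2
      simp only [hrep] at this
      exact (hcle i).trans this
  refine ⟨g i₀, hg0 i₀, q₁ i₀ + 1 + ∑ i, n i, fun q hq hqM => ?_⟩
  have hq0 : 0 < q := by omega
  have hqR : (0 : ℝ) < q := by exact_mod_cast hq0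
  rw [hmin]
  apply IsLeast.csInf_eq
  refine ⟨?_, ?_⟩
  · obtain ⟨r, hr⟩ := hg2 i₀ q (by omega) hqM
    exact ⟨_, ⟨r, rfl⟩, by rw [← add_div]; exact hr⟩
  · rintro _ ⟨_, ⟨r, rfl⟩, rfl⟩
    rw [← add_div, ← hrep]
    have e : Int.fract (((b : ℝ) + r) / q)
        = ((b : ℝ) + ((r - q * ⌊((b : ℝ) + r) / q⌋ : ℤ) : ℝ)) / q := by
      rw [Int.fract]
      push_cast
      field_simp
      ring
    obtain ⟨i, h1, h2⟩ := hfind (Int.fract (((b : ℝ) + r) / q)) (Int.fract_nonneg _)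
      (Int.fract_lt_one _)
    have hni : n i ≤ q := by
      have := Finset.single_le_sum (f := n) (fun _ _ => Nat.zero_le _) (Finset.mem_univ i)
      omega
    refine (hn i q hni hq0).trans ?_
    rw [e] at h1 h2 ⊢
    exact hg1 i q hq0 hqM _ h1 h2
end
end

section
/- Let C ≥ 0 be a real number and let a₁, a₂ be nonzero integers. Then for every natural number k there exists N₀ such that for every natural number N ≥ N₀, every pair of integers b₁, b₂ with |b₁| ≤ CN, |b₂| ≤ CN, gcd(a₁, a₂, b₁, b₂) = 1 and a₁b₂ ≠ a₂b₁, and every set I of N consecutive integers, one has |{ x ∈ I : gcd(a₁x + b₁, a₂x + b₂) = 1 }| ≥ k. -/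
/-- Legendre sieve for one linear form per prime. -/
theorem sieve_aux (S : Finset ℕ) : (∀ p ∈ S, p.Prime) → ∀ c d : ℕ → ℤ,
    (∀ p ∈ S, ¬ (p : ℤ) ∣ c p) → ∀ (m : ℤ) (N : ℕ),
    |(((Finset.Ico m (m + (N : ℤ))).filter
      (fun x => ∀ p ∈ S, ¬ (p : ℤ) ∣ c p * x + d p)).card : ℝ)
      - N * ∏ p ∈ S, (1 - 1 / (p : ℝ))| ≤ 2 ^ S.card - 1 := by
  induction S using Finset.induction_on with
  | empty => intro _ c d _ m N; simp
  | insert p S hpS ih =>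
    intro hS c d hc m N
    have hp : p.Prime := hS p (Finset.mem_insert_self _ _)
    have hS' : ∀ q ∈ S, q.Prime := fun q hq => hS q (Finset.mem_insert_of_mem hq)
    have hc' : ∀ q ∈ S, ¬ (q : ℤ) ∣ c q := fun q hq => hc q (Finset.mem_insert_of_mem hq)
    have hpz : Prime (p : ℤ) := Nat.prime_iff_prime_int.mp hp
    have hp0 : (0 : ℤ) < p := by exact_mod_cast hp.pos
    have hpR : (0 : ℝ) < p := by exact_mod_cast hp.pos
    -- the bad residue class
    obtain ⟨r, hr⟩ : ∃ r : ℤ, ∀ x : ℤ, (p : ℤ) ∣ c p * x + d p ↔ ∃ y, x = r + p * y := by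
      have hcop : IsCoprime (p : ℤ) (c p) :=
        (hpz.coprime_iff_not_dvd).2 (hc p (Finset.mem_insert_self _ _))
      obtain ⟨u, v, huv⟩ := hcop
      refine ⟨-(v * d p), fun x => ⟨?_, ?_⟩⟩
      · rintro ⟨t, ht⟩
        refine ⟨u * x + v * t, ?_⟩
        linear_combination (-x) * huv + v * ht
      · rintro ⟨y, rfl⟩
        refine ⟨c p * y + u * d p, ?_⟩
        linear_combination (-d p) * huv
    set A := (Finset.Ico m (m + (N : ℤ))).filter
      (fun x => ∀ q ∈ S, ¬ (q : ℤ) ∣ c q * x + d q) with hA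
    set m' : ℤ := -((r - m) / p) with hm'
    set M' : ℤ := -((r - (m + N)) / p) with hM'
    have e1 := Int.mul_ediv_add_emod (r - m) p
    have e2 := Int.emod_nonneg (r - m) hp0.ne'
    have e3 := Int.emod_lt_of_pos (r - m) hp0
    have f1 := Int.mul_ediv_add_emod (r - (m + N)) p
    have f2 := Int.emod_nonneg (r - (m + N)) hp0.ne'
    have f3 := Int.emod_lt_of_pos (r - (m + N)) hp0
    have hle : m' ≤ M' := by
      have : (r - (m + N)) / (p : ℤ) ≤ (r - m) / p := Int.ediv_le_ediv hp0 (by omega)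
      omega
    obtain ⟨L, hL⟩ := Int.eq_ofNat_of_zero_le (sub_nonneg.2 hle)
    have hLM : M' = m' + L := by omega
    have hLb1 : (p : ℤ) * L ≤ N + p := by
      have : (p : ℤ) * L = p * M' - p * m' := by rw [← mul_sub, hL]
      have h1 : (p : ℤ) * M' = - (p * ((r - (m + N)) / p)) := by rw [hM']; ring
      have h2 : (p : ℤ) * m' = - (p * ((r - m) / p)) := by rw [hm']; ring
      linarith
    have hLb2 : (N : ℤ) ≤ p * L + p := by
      have : (p : ℤ) * L = p * M' - p * m' := by rw [← mul_sub, hL]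
      have h1 : (p : ℤ) * M' = - (p * ((r - (m + N)) / p)) := by rw [hM']; ring
      have h2 : (p : ℤ) * m' = - (p * ((r - m) / p)) := by rw [hm']; ring
      linarith
    set B := (Finset.Ico m' (m' + (L : ℤ))).filter
      (fun y => ∀ q ∈ S, ¬ (q : ℤ) ∣ (c q * p) * y + (c q * r + d q)) with hB
    have hlow : ∀ y : ℤ, m' ≤ y ↔ m ≤ r + p * y := by
      intro y
      rw [hm', neg_le, Int.le_ediv_iff_mul_le hp0]
      constructor <;> intro h <;> linarith
    have hup : ∀ y : ℤ, y < M' ↔ r + p * y < m + N := by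
      intro y
      rw [hM', lt_neg, Int.ediv_lt_iff_lt_mul hp0]
      constructor <;> intro h <;> linarith
    have hform : ∀ (q : ℕ) (y : ℤ), c q * (r + p * y) + d q
        = (c q * p) * y + (c q * r + d q) := by intro q y; ring
    have hbad : (A.filter (fun x => (p : ℤ) ∣ c p * x + d p)).card = B.card := by
      symm
      apply Finset.card_bij (fun y _ => r + p * y)
      · intro y hy
        simp only [hB, Finset.mem_filter, Finset.mem_Ico, ← hLM, hlow, hup] at hy
        simp only [hA, Finset.mem_filter, Finset.mem_Ico, hr]
        refine ⟨⟨hy.1, ?_⟩, y, rfl⟩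
        intro q hq
        rw [hform]; exact hy.2 q hq
      · intro y _ z _ h
        exact mul_left_cancel₀ hp0.ne' (add_left_cancel h)
      · intro x hx
        simp only [hA, Finset.mem_filter, Finset.mem_Ico, hr] at hx
        obtain ⟨⟨h1, h2⟩, y, rfl⟩ := hx
        refine ⟨y, ?_, rfl⟩
        simp only [hB, Finset.mem_filter, Finset.mem_Ico, ← hLM, hlow, hup]
        refine ⟨h1, ?_⟩
        intro q hq
        rw [← hform]; exact h2 q hq
    have hgood : ((Finset.Ico m (m + (N : ℤ))).filter
        (fun x => ∀ q ∈ insert p S, ¬ (q : ℤ) ∣ c q * x + d q))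
        = A.filter (fun x => ¬ (p : ℤ) ∣ c p * x + d p) := by
      ext x
      simp only [hA, Finset.mem_filter, Finset.forall_mem_insert]
      tauto
    have hsplit := Finset.card_filter_add_card_filter_not (s := A)
      (fun x => (p : ℤ) ∣ c p * x + d p)
    rw [hbad, ← hgood] at hsplit
    have ihA := ih hS' c d hc' m N
    have ihB := ih hS' (fun q => c q * p) (fun q => c q * r + d q) (by
      intro q hq hdiv
      have hqz : Prime (q : ℤ) := Nat.prime_iff_prime_int.mp (hS' q hq)
      rcases hqz.dvd_or_dvd hdiv with h | h
      · exact hc' q hq h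
      · have h' : q ∣ p := by exact_mod_cast h
        have := (Nat.prime_dvd_prime_iff_eq (hS' q hq) hp).1 h'
        exact hpS (this ▸ hq)) m' L
    rw [← hA] at ihA
    rw [← hB] at ihB
    set P := ∏ q ∈ S, (1 - 1 / (q : ℝ)) with hP
    have hP0 : 0 ≤ P := Finset.prod_nonneg fun q hq => by
      have : (1 : ℝ) ≤ q := by exact_mod_cast (hS' q hq).one_le
      have := (div_le_one (by linarith : (0 : ℝ) < q)).2 this
      linarith
    have hP1 : P ≤ 1 := Finset.prod_le_one (fun q hq => by
      have : (1 : ℝ) ≤ q := by exact_mod_cast (hS' q hq).one_le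
      have := (div_le_one (by linarith : (0 : ℝ) < q)).2 this
      linarith) (fun q hq => by
      have : (0 : ℝ) ≤ 1 / q := by positivity
      linarith)
    have hsR : (B.card : ℝ) + (((Finset.Ico m (m + (N : ℤ))).filter
        (fun x => ∀ q ∈ insert p S, ¬ (q : ℤ) ∣ c q * x + d q)).card : ℝ) = A.card := by
      exact_mod_cast hsplit
    have hLR : |(L : ℝ) - N / p| ≤ 1 := by
      have g1 : (p : ℝ) * L ≤ N + p := by exact_mod_cast hLb1
      have g2 : (N : ℝ) ≤ p * L + p := by exact_mod_cast hLb2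
      have : (L : ℝ) - N / p = (p * L - N) / p := by field_simp
      rw [this, abs_le, le_div_iff₀ hpR, div_le_iff₀ hpR]
      constructor <;> linarith
    have hLP : |((L : ℝ) - N / p) * P| ≤ 1 := by
      rw [abs_mul, abs_of_nonneg hP0]
      exact mul_le_one₀ hLR hP0 hP1
    rw [Finset.prod_insert hpS, Finset.card_insert_of_notMem hpS, ← hP, pow_succ]
    have key : (N : ℝ) * ((1 - 1 / p) * P) = N * P - L * P + (L - N / p) * P := by ring
    rw [key]
    rw [abs_le] at *
    constructor <;> linarith [ihA.1, ihA.2, ihB.1, ihB.2, hLP.1, hLP.2]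

theorem prod_aux (S : Finset ℕ) : (∀ p ∈ S, 2 ≤ p) →
    (1 / ((S.card : ℝ) + 1) ≤ ∏ p ∈ S, (1 - 1 / (p : ℝ))) ∧
      (S.card + 1).factorial ≤ ∏ p ∈ S, p := by
  induction S using Finset.induction_on_max with
  | empty => intro _; simp
  | insert p S hmax ih =>
    intro hS
    have hpS : p ∉ S := fun h => lt_irrefl _ (hmax p h)
    obtain ⟨h1, h2⟩ := ih fun q hq => hS q (Finset.mem_insert_of_mem hq)
    have hp2 := hS p (Finset.mem_insert_self _ _)
    have hcard : S.card + 2 ≤ p := by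
      have : S ⊆ Finset.Ico 2 p := fun q hq =>
        Finset.mem_Ico.2 ⟨hS q (Finset.mem_insert_of_mem hq), hmax q hq⟩
      have := Finset.card_le_card this
      rw [Nat.card_Ico] at this
      omega
    rw [Finset.prod_insert hpS, Finset.prod_insert hpS, Finset.card_insert_of_notMem hpS]
    constructor
    · have hcR : (S.card : ℝ) + 2 ≤ p := by exact_mod_cast hcard
      have hs : (0 : ℝ) ≤ S.card := by positivity
      have hinv : 1 / (p : ℝ) ≤ 1 / ((S.card : ℝ) + 2) :=
        one_div_le_one_div_of_le (by linarith) hcR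
      have e : 1 / (((S.card + 1 : ℕ) : ℝ) + 1)
          = (1 - 1 / ((S.card : ℝ) + 2)) * (1 / ((S.card : ℝ) + 1)) := by
        push_cast
        field_simp
        ring
      rw [e]
      have h3 : 1 / ((S.card : ℝ) + 2) ≤ 1 := by
        rw [div_le_one (by linarith)]; linarith
      apply mul_le_mul _ h1 (by positivity) (by linarith)
      linarith
    · rw [Nat.factorial_succ]
      exact Nat.mul_le_mul (by omega) h2

/-- **Lemma (coprime pairs in arithmetic progressions).** -/
theorem stmt11 (C : ℝ) (hC : 0 ≤ C) (a₁ a₂ : ℤ) (ha₁ : a₁ ≠ 0) (ha₂ : a₂ ≠ 0) :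
    ∀ k : ℕ, ∃ N₀ : ℕ, ∀ N : ℕ, N₀ ≤ N → ∀ b₁ b₂ : ℤ,
      (|b₁| : ℝ) ≤ C * N → (|b₂| : ℝ) ≤ C * N →
      Nat.gcd (Int.gcd a₁ a₂) (Int.gcd b₁ b₂) = 1 →
      a₁ * b₂ ≠ a₂ * b₁ →
      ∀ m : ℤ, k ≤ ((Finset.Ico m (m + (N : ℤ))).filter
        (fun x => Int.gcd (a₁ * x + b₁) (a₂ * x + b₂) = 1)).card := by
  intro k
  set K : ℝ := C * (|(a₁ : ℝ)| + |(a₂ : ℝ)|) + 1 with hK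
  have hK0 : 0 < K := by positivity
  obtain ⟨W, hW⟩ : ∃ W : ℕ, ∀ s : ℕ, W ≤ s → 2 ^ s * (K * (1 + k)) ≤ (s.factorial : ℝ) := by
    have ht := FloorSemiring.tendsto_pow_div_factorial_atTop (2 : ℝ)
    have hpos : 0 < 1 / (K * (1 + (k : ℝ))) := by positivity
    have := (ht.eventually (gt_mem_nhds hpos))
    obtain ⟨W, hW⟩ := Filter.eventually_atTop.1 this
    refine ⟨W, fun s hs => ?_⟩
    have h := hW s hs
    have hf : (0 : ℝ) < s.factorial := by exact_mod_cast s.factorial_pos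
    rw [div_lt_div_iff₀ hf (by positivity)] at h
    linarith
  refine ⟨(W + 1) * (2 ^ W + k), ?_⟩
  intro N hN b₁ b₂ hb₁ hb₂ hg hne m
  set D : ℤ := a₁ * b₂ - a₂ * b₁ with hD
  have hD0 : D ≠ 0 := sub_ne_zero.2 hne
  set S := D.natAbs.primeFactors with hS
  have hSp : ∀ p ∈ S, p.Prime := fun p hp => Nat.prime_of_mem_primeFactors hp
  set c : ℕ → ℤ := fun p => if ¬ (p : ℤ) ∣ a₁ then a₁ else if ¬ (p : ℤ) ∣ a₂ then a₂ else 1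
    with hc
  set d : ℕ → ℤ := fun p => if ¬ (p : ℤ) ∣ a₁ then b₁ else if ¬ (p : ℤ) ∣ a₂ then b₂ else 0
    with hd
  have hcS : ∀ p ∈ S, ¬ (p : ℤ) ∣ c p := by
    intro p hp
    simp only [hc]
    split_ifs with h1 h2
    all_goals first
      | assumption
      | exact (Nat.prime_iff_prime_int.mp (hSp p hp)).not_dvd_one
  have hsv := sieve_aux S hSp c d hcS m N
  obtain ⟨hp1, hp2⟩ := prod_aux S fun p hp => (hSp p hp).two_le
  have hDle : ∏ p ∈ S, p ≤ D.natAbs :=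
    Nat.le_of_dvd (Int.natAbs_pos.2 hD0) (Nat.prod_primeFactors_dvd _)
  have hDR : (D.natAbs : ℝ) ≤ K * N := by
    rw [Nat.cast_natAbs, hD]
    push_cast
    have h1 := abs_sub ((a₁ : ℝ) * b₂) (a₂ * b₁)
    rw [abs_mul, abs_mul] at h1
    have h2 := mul_le_mul_of_nonneg_left hb₂ (abs_nonneg (a₁ : ℝ))
    have h3 := mul_le_mul_of_nonneg_left hb₁ (abs_nonneg (a₂ : ℝ))
    have : (0 : ℝ) ≤ N := by positivity
    rw [hK]
    linarith
  have hfac : ((S.card + 1).factorial : ℝ) ≤ K * N :=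
    le_trans (by exact_mod_cast hp2.trans hDle) hDR
  have hmain : ((S.card : ℝ) + 1) * (2 ^ S.card + k) ≤ N := by
    rcases le_or_gt W S.card with h | h
    · have h1 := hW _ h
      rw [Nat.factorial_succ] at hfac
      push_cast at hfac
      have h2 : (1 : ℝ) ≤ 2 ^ S.card := one_le_pow₀ (by norm_num)
      have h3 : (2 : ℝ) ^ S.card + k ≤ 2 ^ S.card * (1 + k) := by
        have : (0 : ℝ) ≤ k := by positivity
        nlinarith
      have h4 : K * (2 ^ S.card + k) ≤ (S.card.factorial : ℝ) := by
        have := mul_le_mul_of_nonneg_left h3 hK0.le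
        linarith
      have h5 := mul_le_mul_of_nonneg_left h4 (by positivity : (0 : ℝ) ≤ (S.card : ℝ) + 1)
      refine le_of_mul_le_mul_left ?_ hK0
      linarith
    · have h1 : (S.card + 1) * (2 ^ S.card + k) ≤ (W + 1) * (2 ^ W + k) := by
        have := Nat.pow_le_pow_right (n := 2) (by norm_num) h.le
        exact Nat.mul_le_mul (by omega) (by omega)
      exact_mod_cast h1.trans hN
  have hlow : (k : ℝ) ≤ (((Finset.Ico m (m + (N : ℤ))).filter
      (fun x => ∀ p ∈ S, ¬ (p : ℤ) ∣ c p * x + d p)).card : ℝ) := by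
    have h1 := (abs_le.1 hsv).1
    have h2 := mul_le_mul_of_nonneg_left hp1 (by positivity : (0 : ℝ) ≤ N)
    have h3 : (2 : ℝ) ^ S.card + k ≤ N * (1 / ((S.card : ℝ) + 1)) := by
      rw [mul_one_div, le_div_iff₀ (by positivity)]
      linarith
    linarith
  refine le_trans (by exact_mod_cast hlow) (Finset.card_le_card ?_)
  intro x hx
  rw [Finset.mem_filter] at hx ⊢
  refine ⟨hx.1, ?_⟩
  by_contra hne1
  obtain ⟨p, hp, hpd⟩ := Nat.exists_prime_and_dvd hne1
  have hpd' : (p : ℤ) ∣ (Int.gcd (a₁ * x + b₁) (a₂ * x + b₂) : ℤ) := by exact_mod_cast hpd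
  have d1 : (p : ℤ) ∣ a₁ * x + b₁ := hpd'.trans (Int.gcd_dvd_left ..)
  have d2 : (p : ℤ) ∣ a₂ * x + b₂ := hpd'.trans (Int.gcd_dvd_right ..)
  have dD : (p : ℤ) ∣ D := by
    have : D = a₁ * (a₂ * x + b₂) - a₂ * (a₁ * x + b₁) := by rw [hD]; ring
    rw [this]
    exact dvd_sub (d2.mul_left _) (d1.mul_left _)
  have hpS : p ∈ S := by
    rw [hS, Nat.mem_primeFactors]
    exact ⟨hp, Int.natCast_dvd.1 dD, Int.natAbs_ne_zero.2 hD0⟩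
  have hav := hx.2 p hpS
  by_cases h1 : (p : ℤ) ∣ a₁
  · by_cases h2 : (p : ℤ) ∣ a₂
    · have h3 : (p : ℤ) ∣ b₁ := (dvd_add_right (h1.mul_right x)).1 d1
      have h4 : (p : ℤ) ∣ b₂ := (dvd_add_right (h2.mul_right x)).1 d2
      have h5 : p ∣ 1 := by
        rw [← hg]
        refine Nat.dvd_gcd ?_ ?_
        · exact_mod_cast Int.dvd_coe_gcd h1 h2
        · exact_mod_cast Int.dvd_coe_gcd h3 h4
      exact hp.one_lt.ne' (Nat.dvd_one.1 h5)
    · simp only [hc, hd, h1, h2, not_true_eq_false, not_false_eq_true, if_true, if_false] at hav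
      exact hav d2
  · simp only [hc, hd, h1, not_false_eq_true, if_true] at hav
    exact hav d1
end

section
/- Let U ⊆ (ℝ/ℤ)³ be a 2-dimensional proper subtorus with D(U) = 1/10. Then there is an automorphism σ of (ℝ/ℤ)³ given by permuting the three coordinates and negating some subset of the coordinates such that σ(U) is one of the four subtori U³ = ⟨(0,1,4),(1,0,0)⟩_ℝ, U⁴ = ⟨(0,2,3),(1,0,0)⟩_ℝ, U⁵ = ⟨(0,1,3),(1,0,1)⟩_ℝ, U⁶ = ⟨(0,1,2),(1,1,0)⟩_ℝ. Moreover, each of U³, U⁴, U⁵, U⁶ is a 2-dimensional proper subtorus of (ℝ/ℤ)³ with D-value equal to 1/10. -/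
noncomputable section

/-- The automorphism of `(ℝ/ℤ)^n` given by permuting the coordinates by `π` and
negating the coordinates selected by `ε`. -/
def signedPerm {n : ℕ} (π : Equiv.Perm (Fin n)) (ε : Fin n → Bool) (x : Torus n) : Torus n :=
  fun i => if ε i then -x (π i) else x (π i)

def U3 : Set (Torus 3) := spanTorus ![![0, 1, 4], ![1, 0, 0]]
def U4 : Set (Torus 3) := spanTorus ![![0, 2, 3], ![1, 0, 0]]
def U5 : Set (Torus 3) := spanTorus ![![0, 1, 3], ![1, 0, 1]]
def U6 : Set (Torus 3) := spanTorus ![![0, 1, 2], ![1, 1, 0]]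

/-- The kernel of an integral linear form on the torus. -/
def Hyp (n : Fin 3 → ℤ) : Set (Torus 3) := {x | ∑ i, n i • x i = 0}

lemma mem_Hyp_proj (n : Fin 3 → ℤ) (y : Fin 3 → ℝ) :
    torusProj y ∈ Hyp n ↔ ∃ m : ℤ, ∑ i, (n i : ℝ) * y i = m := by
  have h : ∑ i, n i • (torusProj y) i = ((∑ i, (n i : ℝ) * y i : ℝ) : AddCircle (1 : ℝ)) := by
    simp [torusProj, Fin.sum_univ_three, ← zsmul_eq_mul]
  unfold Hyp
  rw [Set.mem_ofPred_eq, h, AddCircle.coe_eq_zero_iff]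
  constructor
  · rintro ⟨m, hm⟩; exact ⟨m, by rw [← hm]; simp⟩
  · rintro ⟨m, hm⟩; exact ⟨m, by rw [hm]; simp⟩

lemma exists_lift (x : Torus 3) : ∃ y : Fin 3 → ℝ, x = torusProj y := by
  have : ∀ i, ∃ y : ℝ, (y : AddCircle (1 : ℝ)) = x i := fun i => QuotientAddGroup.mk_surjective _
  choose y hy using this
  exact ⟨y, funext fun i => (hy i).symm⟩

lemma span_eq_Hyp (v : Fin 2 → Fin 3 → ℤ) (n p : Fin 3 → ℤ) (g : ℤ) (hg : g ≠ 0)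
    (h0 : v 0 1 * v 1 2 - v 0 2 * v 1 1 = g * n 0)
    (h1 : v 0 2 * v 1 0 - v 0 0 * v 1 2 = g * n 1)
    (h2 : v 0 0 * v 1 1 - v 0 1 * v 1 0 = g * n 2)
    (hp : p 0 * n 0 + p 1 * n 1 + p 2 * n 2 = 1) : spanTorus v = Hyp n := by
  have hgR : (g : ℝ) ≠ 0 := by exact_mod_cast hg
  have h0R : (v 0 1 * v 1 2 - v 0 2 * v 1 1 : ℝ) = g * n 0 := by exact_mod_cast h0
  have h1R : (v 0 2 * v 1 0 - v 0 0 * v 1 2 : ℝ) = g * n 1 := by exact_mod_cast h1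
  have h2R : (v 0 0 * v 1 1 - v 0 1 * v 1 0 : ℝ) = g * n 2 := by exact_mod_cast h2
  have hpR : (p 0 * n 0 + p 1 * n 1 + p 2 * n 2 : ℝ) = 1 := by exact_mod_cast hp
  ext x
  constructor
  · rintro ⟨t, rfl⟩
    rw [mem_Hyp_proj]
    refine ⟨0, ?_⟩
    apply mul_left_cancel₀ hgR
    simp only [Fin.sum_univ_three, Fin.sum_univ_two, Int.cast_zero, mul_zero]
    linear_combination (-(t 0 * v 0 0 + t 1 * v 1 0)) * h0R - (t 0 * v 0 1 + t 1 * v 1 1) * h1R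
      - (t 0 * v 0 2 + t 1 * v 1 2) * h2R
  · obtain ⟨y, rfl⟩ := exists_lift x
    rw [mem_Hyp_proj]
    rintro ⟨m, hm⟩
    -- replace y by z = y - m p, orthogonal to n
    obtain ⟨z, hz⟩ : ∃ z : Fin 3 → ℝ, ∀ i, z i = y i - m * p i := ⟨_, fun i => rfl⟩
    have hzn : n 0 * z 0 + n 1 * z 1 + n 2 * z 2 = (0 : ℝ) := by
      rw [Fin.sum_univ_three] at hm
      rw [hz, hz, hz]; linear_combination hm - m * hpR
    have hN : (n 0 : ℝ) ^ 2 + n 1 ^ 2 + n 2 ^ 2 ≠ 0 := by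
      intro h
      have a0 : (n 0 : ℝ) = 0 := by nlinarith [sq_nonneg (n 0 : ℝ), sq_nonneg (n 1 : ℝ), sq_nonneg (n 2 : ℝ)]
      have a1 : (n 1 : ℝ) = 0 := by nlinarith [sq_nonneg (n 0 : ℝ), sq_nonneg (n 1 : ℝ), sq_nonneg (n 2 : ℝ)]
      have a2 : (n 2 : ℝ) = 0 := by nlinarith [sq_nonneg (n 0 : ℝ), sq_nonneg (n 1 : ℝ), sq_nonneg (n 2 : ℝ)]
      rw [a0, a1, a2] at hpR; norm_num at hpR
    -- Cramer
    obtain ⟨t0, t1, ht⟩ : ∃ t0 t1 : ℝ, ∀ i, z i = t0 * v 0 i + t1 * v 1 i := by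
      have hD : (g : ℝ) * ((n 0 : ℝ) ^ 2 + n 1 ^ 2 + n 2 ^ 2) ≠ 0 := mul_ne_zero hgR hN
      refine ⟨((z 1 * v 1 2 - z 2 * v 1 1) * n 0 + (z 2 * v 1 0 - z 0 * v 1 2) * n 1
          + (z 0 * v 1 1 - z 1 * v 1 0) * n 2) / (g * ((n 0 : ℝ) ^ 2 + n 1 ^ 2 + n 2 ^ 2)),
        ((v 0 1 * z 2 - v 0 2 * z 1) * n 0 + (v 0 2 * z 0 - v 0 0 * z 2) * n 1
          + (v 0 0 * z 1 - v 0 1 * z 0) * n 2) / (g * ((n 0 : ℝ) ^ 2 + n 1 ^ 2 + n 2 ^ 2)), ?_⟩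
      intro i
      rw [div_mul_eq_mul_div, div_mul_eq_mul_div, ← add_div, eq_div_iff hD]
      fin_cases i
      · simp only [Fin.zero_eta, Fin.mk_one, Fin.reduceFinMk]
        linear_combination (n 0 * z 0 - z 0 * n 0) * h0R + (n 0 * z 1 - z 0 * n 1) * h1R + (n 0 * z 2 - z 0 * n 2) * h2R + n 0 * g * hzn
      · simp only [Fin.zero_eta, Fin.mk_one, Fin.reduceFinMk]
        linear_combination (n 1 * z 0 - z 1 * n 0) * h0R + (n 1 * z 1 - z 1 * n 1) * h1R + (n 1 * z 2 - z 1 * n 2) * h2R + n 1 * g * hzn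
      · simp only [Fin.zero_eta, Fin.mk_one, Fin.reduceFinMk]
        linear_combination (n 2 * z 0 - z 2 * n 0) * h0R + (n 2 * z 1 - z 2 * n 1) * h1R + (n 2 * z 2 - z 2 * n 2) * h2R + n 2 * g * hzn
    refine ⟨![t0, t1], ?_⟩
    funext i
    have : y i = (∑ j, (![t0, t1] : Fin 2 → ℝ) j * (v j i : ℝ)) + ((m * p i : ℤ) : ℝ) := by
      have := ht i
      rw [hz] at this
      simp [Fin.sum_univ_two]
      linear_combination this
    simp only [torusProj]
    rw [this, AddCircle.coe_add]
    simp only [add_eq_left]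
    rw [AddCircle.coe_eq_zero_iff]
    exact ⟨m * p i, by simp⟩

lemma subtorus_eq_Hyp (v : Fin 2 → Fin 3 → ℤ)
    (hv : LinearIndependent ℝ (fun j : Fin 2 => fun i : Fin 3 => (v j i : ℝ))) :
    ∃ n p : Fin 3 → ℤ, p 0 * n 0 + p 1 * n 1 + p 2 * n 2 = 1 ∧ spanTorus v = Hyp n := by
  set w0 := v 0 1 * v 1 2 - v 0 2 * v 1 1 with e0
  set w1 := v 0 2 * v 1 0 - v 0 0 * v 1 2 with e1
  set w2 := v 0 0 * v 1 1 - v 0 1 * v 1 0 with e2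
  have hw : ¬ (w0 = 0 ∧ w1 = 0 ∧ w2 = 0) := by
    rintro ⟨a0, a1, a2⟩
    have hv' : LinearIndependent ℝ ![fun i : Fin 3 => (v 0 i : ℝ), fun i : Fin 3 => (v 1 i : ℝ)] := by
      convert hv using 1
      funext j; fin_cases j <;> rfl
    rw [← crossProduct_ne_zero_iff_linearIndependent] at hv'
    apply hv'
    rw [cross_apply]
    have b0 : (v 0 1 * v 1 2 - v 0 2 * v 1 1 : ℝ) = 0 := by exact_mod_cast a0
    have b1 : (v 0 2 * v 1 0 - v 0 0 * v 1 2 : ℝ) = 0 := by exact_mod_cast a1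
    have b2 : (v 0 0 * v 1 1 - v 0 1 * v 1 0 : ℝ) = 0 := by exact_mod_cast a2
    rw [b0, b1, b2]; funext i; fin_cases i <;> rfl
  -- Bezout
  obtain ⟨g, hg⟩ := (IsPrincipalIdealRing.principal (Ideal.span ({w0, w1, w2} : Set ℤ))).principal
  have mem : ∀ w ∈ ({w0, w1, w2} : Set ℤ), ∃ k, w = g * k := by
    intro w hw
    have : w ∈ Ideal.span ({w0, w1, w2} : Set ℤ) := Ideal.subset_span hw
    rw [hg] at this
    exact Ideal.mem_span_singleton.1 this
  obtain ⟨n0, k0⟩ := mem w0 (by simp)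
  obtain ⟨n1, k1⟩ := mem w1 (by simp)
  obtain ⟨n2, k2⟩ := mem w2 (by simp)
  have hg0 : g ≠ 0 := by
    rintro rfl
    exact hw ⟨by simp [k0], by simp [k1], by simp [k2]⟩
  have hgm : g ∈ Ideal.span ({w0, w1, w2} : Set ℤ) := by
    rw [hg]; exact Ideal.mem_span_singleton_self g
  rw [Ideal.mem_span_insert] at hgm
  obtain ⟨a, z, hz, hgz⟩ := hgm
  obtain ⟨b, c, hbc⟩ := Ideal.mem_span_pair.1 hz
  have hB : a * n0 + b * n1 + c * n2 = 1 := by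
    apply mul_left_cancel₀ hg0
    linear_combination (-a) * k0 - b * k1 - c * k2 + hbc - hgz
  exact ⟨![n0, n1, n2], ![a, b, c], by simpa using hB,
    span_eq_Hyp v _ ![a, b, c] g hg0 k0 k1 k2 (by simpa using hB)⟩

/-- the objective function -/
def obj (x : Torus 3) : ℝ := ⨆ i, dist (x i) ((1 / 2 : ℝ) : AddCircle (1 : ℝ))

lemma le_obj (x : Torus 3) (i : Fin 3) : dist (x i) ((1 / 2 : ℝ) : AddCircle (1 : ℝ)) ≤ obj x :=
  le_ciSup (f := fun i => dist (x i) ((1 / 2 : ℝ) : AddCircle (1 : ℝ))) (Set.finite_range _).bddAbove i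

lemma obj_nonneg (x : Torus 3) : 0 ≤ obj x := dist_nonneg.trans (le_obj x 0)

lemma DVal_le (S : Set (Torus 3)) (x : Torus 3) (hx : x ∈ S) : DVal S ≤ obj x :=
  csInf_le ⟨0, by rintro _ ⟨y, -, rfl⟩; exact obj_nonneg y⟩ ⟨x, hx, rfl⟩

lemma le_DVal (S : Set (Torus 3)) (hS : S.Nonempty) (d : ℝ) (h : ∀ x ∈ S, d ≤ obj x) :
    d ≤ DVal S :=
  le_csInf (hS.image _) (by rintro _ ⟨y, hy, rfl⟩; exact h y hy)

lemma obj_half_add (e : Fin 3 → ℝ) (d : ℝ) (h : ∀ i, |e i| ≤ d) :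
    obj (torusProj fun i => 1 / 2 + e i) ≤ d := by
  apply ciSup_le
  intro i
  rw [dist_eq_norm, torusProj, ← AddCircle.coe_sub, add_sub_cancel_left]
  refine le_trans ?_ (h i)
  rw [← Real.norm_eq_abs]
  exact QuotientAddGroup.norm_mk_le_norm

lemma exists_rep (x : Torus 3) : ∃ e : Fin 3 → ℝ, x = (torusProj fun i => 1 / 2 + e i) ∧
    ∀ i, |e i| ≤ obj x := by
  obtain ⟨y, rfl⟩ := exists_lift x
  refine ⟨fun i => y i - 1 / 2 - round (y i - 1 / 2), ?_, ?_⟩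
  · funext i
    simp only [torusProj]
    rw [← sub_eq_zero, ← AddCircle.coe_sub, AddCircle.coe_eq_zero_iff]
    exact ⟨round (y i - 1 / 2), by simp only [zsmul_eq_mul]; ring⟩
  · intro i
    refine le_trans (le_of_eq ?_) (le_obj _ i)
    rw [dist_eq_norm, torusProj, ← AddCircle.coe_sub, AddCircle.norm_eq]
    simp

lemma zero_mem_Hyp (n : Fin 3 → ℤ) : (0 : Torus 3) ∈ Hyp n := by simp [Hyp]

lemma DVal_even (n : Fin 3 → ℤ) (h : Even (n 0 + n 1 + n 2)) : DVal (Hyp n) = 0 := by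
  apply le_antisymm
  · refine (DVal_le _ (torusProj fun i => 1 / 2 + 0) ?_).trans (obj_half_add (fun _ => 0) 0 (by simp))
    rw [mem_Hyp_proj]
    obtain ⟨m, hm⟩ := h
    have : (n 0 + n 1 + n 2 : ℝ) = m + m := by exact_mod_cast hm
    refine ⟨m, ?_⟩
    rw [Fin.sum_univ_three]
    linear_combination this / 2
  · exact le_DVal _ ⟨0, zero_mem_Hyp n⟩ _ fun x _ => obj_nonneg x

lemma DVal_odd (n : Fin 3 → ℤ) (h : Odd (n 0 + n 1 + n 2)) :
    DVal (Hyp n) = 1 / (2 * ((|n 0| + |n 1| + |n 2| : ℤ) : ℝ)) := by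
  obtain ⟨m, hm⟩ := h
  have hmR : (n 0 + n 1 + n 2 : ℝ) = 2 * m + 1 := by exact_mod_cast hm
  have hN : 0 < |n 0| + |n 1| + |n 2| := by
    have := abs_add_le (n 0 + n 1) (n 2)
    have := abs_add_le (n 0) (n 1)
    have : 0 < |n 0 + n 1 + n 2| := abs_pos.2 (by omega)
    omega
  obtain ⟨N, hNN⟩ : ∃ N : ℝ, N = ((|n 0| + |n 1| + |n 2| : ℤ) : ℝ) := ⟨_, rfl⟩
  have hNpos : 0 < N := by rw [hNN]; exact_mod_cast hN
  rw [← hNN]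
  push_cast at hNN
  apply le_antisymm
  · refine (DVal_le _ (torusProj fun i => 1 / 2 + (SignType.sign (n i : ℝ) : ℝ) / (2 * N)) ?_).trans
      (obj_half_add _ _ ?_)
    · rw [mem_Hyp_proj]
      refine ⟨m + 1, ?_⟩
      have hs : ∀ i, (n i : ℝ) * (SignType.sign (n i : ℝ) : ℝ) = |(n i : ℝ)| := fun i => self_mul_sign _
      rw [Fin.sum_univ_three]
      have : ((n 0 : ℝ) * SignType.sign (n 0 : ℝ) + n 1 * SignType.sign (n 1 : ℝ)
         + n 2 * SignType.sign (n 2 : ℝ)) / (2 * N) = 1 / 2 := by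
        rw [hs, hs, hs, ← hNN]; field_simp
      push_cast
      linear_combination this + hmR / 2
    · intro i
      rw [abs_div, abs_of_pos (by positivity : 0 < 2 * N)]
      gcongr
      rcases lt_trichotomy (n i : ℝ) 0 with h | h | h
      · rw [sign_neg h]; simp
      · rw [h]; simp
      · rw [sign_pos h]; simp
  · refine le_DVal _ ⟨0, zero_mem_Hyp n⟩ _ ?_
    intro x hx
    obtain ⟨e, he, hb⟩ := exists_rep x
    rw [he, mem_Hyp_proj] at hx
    obtain ⟨k, hk⟩ := hx
    rw [Fin.sum_univ_three] at hk
    have hE : (n 0 * e 0 + n 1 * e 1 + n 2 * e 2 : ℝ) = (2 * (k - m) - 1 : ℤ) / 2 := by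
      push_cast
      linear_combination hk - hmR / 2
    have h1 : (1 : ℝ) / 2 ≤ |(n 0 * e 0 + n 1 * e 1 + n 2 * e 2 : ℝ)| := by
      rw [hE, abs_div, abs_two]
      gcongr
      have : 1 ≤ |2 * (k - m) - 1| := Int.one_le_abs (by omega)
      exact_mod_cast this
    have h2 : |(n 0 * e 0 + n 1 * e 1 + n 2 * e 2 : ℝ)| ≤ N * obj x := by
      refine (abs_add_three _ _ _).trans ?_
      rw [abs_mul, abs_mul, abs_mul, hNN, add_mul, add_mul]
      gcongr <;> apply hb
    rw [div_le_iff₀ (by positivity)]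
    linarith

lemma proper_of_DVal (S : Set (Torus 3)) (hS : S.Nonempty) (h : DVal S = 1 / 10) :
    IsProperSub S := by
  intro hsub
  have : (1 / 2 : ℝ) ≤ DVal S := by
    apply le_DVal S hS
    intro x hx
    obtain ⟨i, hi⟩ := Set.mem_iUnion.1 (hsub hx)
    refine le_trans (le_of_eq ?_) (le_obj x i)
    rw [show x i = 0 from hi, dist_zero_left]
    have := AddCircle.norm_half_period_eq (p := (1 : ℝ))
    rw [this]; simp
  rw [h] at this
  norm_num at this

lemma image_Hyp (n k : Fin 3 → ℤ) (π : Equiv.Perm (Fin 3)) (ε : Fin 3 → Bool)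
    (h : ∀ i, k i = if ε i then - n (π i) else n (π i)) :
    signedPerm π ε '' Hyp n = Hyp k := by
  have key : ∀ x, signedPerm π ε x ∈ Hyp k ↔ x ∈ Hyp n := by
    intro x
    simp only [Hyp, Set.mem_ofPred_eq]
    rw [← Equiv.sum_comp π (fun i => n i • x i)]
    have : ∀ i, k i • signedPerm π ε x i = n (π i) • x (π i) := by
      intro i
      rw [h, signedPerm]
      split_ifs <;> simp
    simp only [this]
  ext y
  constructor
  · rintro ⟨x, hx, rfl⟩; exact (key x).2 hx
  · intro hy
    have hs : signedPerm π ε (fun j => if ε (π.symm j) then - y (π.symm j) else y (π.symm j)) = y := by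
      funext i
      simp only [signedPerm, Equiv.symm_apply_apply]
      split_ifs <;> simp
    refine ⟨_, ?_, hs⟩
    rw [← key, hs]; exact hy

def k3 : Fin 3 → ℤ := ![0, 4, -1]
def k4 : Fin 3 → ℤ := ![0, 3, -2]
def k5 : Fin 3 → ℤ := ![1, 3, -1]
def k6 : Fin 3 → ℤ := ![2, -2, 1]

lemma U3_eq : U3 = Hyp k3 := span_eq_Hyp _ k3 ![0, 0, -1] (1) (by decide) (by decide) (by decide) (by decide) (by decide)
lemma U4_eq : U4 = Hyp k4 := span_eq_Hyp _ k4 ![0, 1, 1] (1) (by decide) (by decide) (by decide) (by decide) (by decide)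
lemma U5_eq : U5 = Hyp k5 := span_eq_Hyp _ k5 ![1, 0, 0] (1) (by decide) (by decide) (by decide) (by decide) (by decide)
lemma U6_eq : U6 = Hyp k6 := span_eq_Hyp _ k6 ![0, 0, 1] (-1) (by decide) (by decide) (by decide) (by decide) (by decide)

lemma D_of (k : Fin 3 → ℤ) (h : Odd (k 0 + k 1 + k 2)) (h5 : |k 0| + |k 1| + |k 2| = 5) :
    DVal (Hyp k) = 1 / 10 := by
  rw [DVal_odd k h, h5]; norm_num

/-- Each absolute-value pattern is a permutation of one of the four. -/
lemma abs_classify : ∀ a ∈ Finset.range 6, ∀ b ∈ Finset.range 6, ∀ c ∈ Finset.range 6,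
    a + b + c = 5 → Nat.gcd a (Nat.gcd b c) = 1 → ∃ π : Equiv.Perm (Fin 3),
    ∃ k ∈ [k3, k4, k5, k6], ∀ i, (k i).natAbs = ![a, b, c] (π i) := by
  decide +kernel

lemma classify (n p : Fin 3 → ℤ) (hp : p 0 * n 0 + p 1 * n 1 + p 2 * n 2 = 1)
    (h5 : |n 0| + |n 1| + |n 2| = 5) :
    ∃ (π : Equiv.Perm (Fin 3)) (ε : Fin 3 → Bool), ∃ k ∈ [k3, k4, k5, k6],
      ∀ i, k i = if ε i then - n (π i) else n (π i) := by
  have hsum : (n 0).natAbs + (n 1).natAbs + (n 2).natAbs = 5 := by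
    rw [Int.abs_eq_natAbs, Int.abs_eq_natAbs, Int.abs_eq_natAbs] at h5
    exact_mod_cast h5
  have hgcd : Nat.gcd (n 0).natAbs (Nat.gcd (n 1).natAbs (n 2).natAbs) = 1 := by
    set g := Nat.gcd (n 0).natAbs (Nat.gcd (n 1).natAbs (n 2).natAbs) with hg
    have d0 : (g : ℤ) ∣ n 0 := Int.natCast_dvd.2 (Nat.gcd_dvd_left _ _)
    have d1 : (g : ℤ) ∣ n 1 := Int.natCast_dvd.2 ((Nat.gcd_dvd_right _ _).trans (Nat.gcd_dvd_left _ _))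
    have d2 : (g : ℤ) ∣ n 2 := Int.natCast_dvd.2 ((Nat.gcd_dvd_right _ _).trans (Nat.gcd_dvd_right _ _))
    have : (g : ℤ) ∣ 1 := by
      rw [← hp]
      exact dvd_add (dvd_add (d0.mul_left _) (d1.mul_left _)) (d2.mul_left _)
    exact Nat.dvd_one.1 (by exact_mod_cast this)
  obtain ⟨π, k, hk, hπ⟩ := abs_classify (n 0).natAbs (by simp; omega) (n 1).natAbs (by simp; omega)
    (n 2).natAbs (by simp; omega) hsum hgcd
  refine ⟨π, fun i => decide (k i ≠ n (π i)), k, hk, ?_⟩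
  intro i
  have h1 := hπ i
  have h2 : ∀ j, ![(n 0).natAbs, (n 1).natAbs, (n 2).natAbs] j = (n j).natAbs := by
    intro j; fin_cases j <;> rfl
  rw [h2, Int.natAbs_eq_natAbs_iff] at h1
  by_cases hc : k i = n (π i)
  · simp [hc]
  · simp only [ne_eq, hc, not_false_eq_true, decide_true, if_true]; tauto

lemma lin_indep (v : Fin 2 → Fin 3 → ℤ)
    (hw : ¬ (v 0 1 * v 1 2 - v 0 2 * v 1 1 = 0 ∧ v 0 2 * v 1 0 - v 0 0 * v 1 2 = 0 ∧ v 0 0 * v 1 1 - v 0 1 * v 1 0 = 0)) :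
    LinearIndependent ℝ (fun j : Fin 2 => fun i : Fin 3 => (v j i : ℝ)) := by
  have : LinearIndependent ℝ ![fun i : Fin 3 => (v 0 i : ℝ), fun i : Fin 3 => (v 1 i : ℝ)] := by
    rw [← crossProduct_ne_zero_iff_linearIndependent]
    intro h
    rw [cross_apply] at h
    apply hw
    have b0 := congrFun h 0
    have b1 := congrFun h 1
    have b2 := congrFun h 2
    simp at b0 b1 b2
    exact ⟨by exact_mod_cast b0, by exact_mod_cast b1, by exact_mod_cast b2⟩
  convert this using 1
  funext j; fin_cases j <;> rfl

/-- Classification of the 2-dimensional proper subtori `U ⊆ (ℝ/ℤ)³` with `D(U) = 1/10`. -/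
theorem stmt13 (U : Set (Torus 3)) (hU : IsSubtorus 2 U) (hUproper : IsProperSub U)
    (hD : DVal U = 1/10) :
    (∃ (π : Equiv.Perm (Fin 3)) (ε : Fin 3 → Bool),
      signedPerm π ε '' U = U3 ∨ signedPerm π ε '' U = U4 ∨
      signedPerm π ε '' U = U5 ∨ signedPerm π ε '' U = U6) ∧
    (IsSubtorus 2 U3 ∧ IsProperSub U3 ∧ DVal U3 = 1/10) ∧
    (IsSubtorus 2 U4 ∧ IsProperSub U4 ∧ DVal U4 = 1/10) ∧
    (IsSubtorus 2 U5 ∧ IsProperSub U5 ∧ DVal U5 = 1/10) ∧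
    (IsSubtorus 2 U6 ∧ IsProperSub U6 ∧ DVal U6 = 1/10) := by
  have good : ∀ k : Fin 3 → ℤ, Odd (k 0 + k 1 + k 2) → |k 0| + |k 1| + |k 2| = 5 →
      IsProperSub (Hyp k) ∧ DVal (Hyp k) = 1 / 10 := fun k h h5 =>
    ⟨proper_of_DVal _ ⟨0, zero_mem_Hyp k⟩ (D_of k h h5), D_of k h h5⟩
  refine ⟨?_, ⟨⟨_, lin_indep _ (by decide), rfl⟩, ?_⟩, ⟨⟨_, lin_indep _ (by decide), rfl⟩, ?_⟩,
    ⟨⟨_, lin_indep _ (by decide), rfl⟩, ?_⟩, ⟨⟨_, lin_indep _ (by decide), rfl⟩, ?_⟩⟩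
  · obtain ⟨v, hv, rfl⟩ := hU
    obtain ⟨n, p, hp, hn⟩ := subtorus_eq_Hyp v hv
    rw [hn] at hD ⊢
    have h5 : |n 0| + |n 1| + |n 2| = 5 := by
      rcases Int.even_or_odd (n 0 + n 1 + n 2) with h | h
      · rw [DVal_even n h] at hD; norm_num at hD
      · rw [DVal_odd n h, one_div, one_div, inv_inj] at hD
        have : ((|n 0| + |n 1| + |n 2| : ℤ) : ℝ) = (5 : ℤ) := by push_cast at hD ⊢; linarith
        exact_mod_cast this
    obtain ⟨π, ε, k, hk, hke⟩ := classify n p hp h5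
    refine ⟨π, ε, ?_⟩
    rw [image_Hyp n k π ε hke, U3_eq, U4_eq, U5_eq, U6_eq]
    simp only [List.mem_cons, List.not_mem_nil, or_false] at hk
    rcases hk with rfl | rfl | rfl | rfl <;> simp
  · rw [U3_eq]; exact good _ (by decide) (by decide)
  · rw [U4_eq]; exact good _ (by decide) (by decide)
  · rw [U5_eq]; exact good _ (by decide) (by decide)
  · rw [U6_eq]; exact good _ (by decide) (by decide)
end
end

section
/- Let U ⊆ (ℝ/ℤ)⁴ be a 2-dimensional proper subtorus with D(U) = 1/4. Then there is an automorphism σ of (ℝ/ℤ)⁴ given by permuting the four coordinates and negating some subset of the coordinates such that σ(U) is one of the two subtori U¹ = ⟨(0,1,2,3),(1,0,0,0)⟩_ℝ, U² = ⟨(1,0,1,1),(1,1,0,2)⟩_ℝ. Moreover, each of U¹ and U² is a 2-dimensional proper subtorus of (ℝ/ℤ)⁴ with D-value equal to 1/4. -/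
noncomputable section

def U1 : Set (Torus 4) := spanTorus ![![0, 1, 2, 3], ![1, 0, 0, 0]]
def U2 : Set (Torus 4) := spanTorus ![![1, 0, 1, 1], ![1, 1, 0, 2]]

def SliceC (r0 r1 r2 r3 b0 b1 b2 b3 h k : ℤ) : Prop :=
  ∀ d e0 e1 e2 e3 : ℤ, (0 < d ∧ (-d ≤ e0 ∧ e0 ≤ d) ∧ (-d ≤ e1 ∧ e1 ≤ d) ∧
    (-d ≤ e2 ∧ e2 ≤ d) ∧ (-d ≤ e3 ∧ e3 ≤ d) ∧
    r0 * e0 + r1 * e1 + r2 * e2 + r3 * e3 = d * h) →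
    d * (4 * k + 2 * (b0 + b1 + b2 + b3)) ≤ b0 * e0 + b1 * e1 + b2 * e2 + b3 * e3 ∧
    b0 * e0 + b1 * e1 + b2 * e2 + b3 * e3 ≤ d * (4 * k + 4 + 2 * (b0 + b1 + b2 + b3))

/-- No relation is supported on a single coordinate. -/
def PropC (r b : Fin 4 → ℤ) : Prop :=
  ∀ (x y : ℤ) (i : Fin 4), (∀ j, j ≠ i → x * r j + y * b j = 0) → x * r i + y * b i = 0

lemma PropC.use {r b : Fin 4 → ℤ} (h : PropC r b) (x y : ℤ) (i : Fin 4) :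
    ((0 = i ∨ x * r 0 + y * b 0 = 0) ∧ (1 = i ∨ x * r 1 + y * b 1 = 0) ∧
     (2 = i ∨ x * r 2 + y * b 2 = 0) ∧ (3 = i ∨ x * r 3 + y * b 3 = 0)) →
    x * r i + y * b i = 0 := by
  rintro ⟨h0, h1, h2, h3⟩
  refine h x y i ?_
  intro j hj
  fin_cases j
  · exact h0.resolve_left hj
  · exact h1.resolve_left hj
  · exact h2.resolve_left hj
  · exact h3.resolve_left hj

lemma small_0011 (b0 b1 b2 b3 k : ℤ)
    (_ : b0 ≤ b1)
    (_ : b2 ≤ b3)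
    (_ : 0 ≤ b0)
    (_ : 0 ≤ b1)
    (_ : 0 ≤ b3)
    (_ : b3 < 1)
    (_ : (b0 + b1 + b2 + b3) % 2 = 1)
    (hP : PropC ![0, 0, 1, 1] ![b0, b1, b2, b3])
    (_ : ¬ (b0 = 0 ∧ b1 = 0 ∧ b2 = 0 ∧ b3 = 0))
    (H : SliceC 0 0 1 1 b0 b1 b2 b3 0 k) :
    False := by
  have p0 := PropC.use hP (-b3) 1 0
  have p1 := PropC.use hP (-b3) 1 1
  have p2 := PropC.use hP (-b3) 1 2
  have p3 := PropC.use hP (-b2) 1 3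
  simp at p0 p1 p2 p3
  have v0 := H 1 (-1) (-1) (-1) (1) (by norm_num)
  have v1 := H 1 (-1) (-1) (1) (-1) (by norm_num)
  have v2 := H 1 (-1) (1) (-1) (1) (by norm_num)
  have v3 := H 1 (-1) (1) (1) (-1) (by norm_num)
  have v4 := H 1 (1) (-1) (-1) (1) (by norm_num)
  have v5 := H 1 (1) (-1) (1) (-1) (by norm_num)
  have v6 := H 1 (1) (1) (-1) (1) (by norm_num)
  have v7 := H 1 (1) (1) (1) (-1) (by norm_num)
  clear hP H
  have l0 : 0 ≤ b0 := by omega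
  have u0 : b0 ≤ 3 := by omega
  have l1 : 0 ≤ b1 := by omega
  have u1 : b1 ≤ 4 := by omega
  have l2 : -4 ≤ b2 := by omega
  have u2 : b2 ≤ 2 := by omega
  interval_cases b3 <;> interval_cases b0 <;> first | omega | skip
  all_goals (interval_cases b1 <;> first | omega | (interval_cases b2 <;> omega))

lemma small_0012 (b0 b1 b2 b3 k : ℤ)
    (_ : b0 ≤ b1)
    (_ : 0 ≤ b0)
    (_ : 0 ≤ b1)
    (_ : 0 ≤ b3)
    (_ : b3 < 2)
    (hP : PropC ![0, 0, 1, 2] ![b0, b1, b2, b3])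
    (_ : ¬ (b0 = 0 ∧ b1 = 0 ∧ b2 = 0 ∧ b3 = 0))
    (H : SliceC 0 0 1 2 b0 b1 b2 b3 2 k) :
    (b0 = 0 ∧ b1 = 1 ∧ b2 = -1 ∧ b3 = 1) ∨
    (b0 = 0 ∧ b1 = 1 ∧ b2 = 2 ∧ b3 = 1) := by
  have p0 := PropC.use hP (-b3) 2 0
  have p1 := PropC.use hP (-b3) 2 1
  have p2 := PropC.use hP (-b3) 2 2
  have p3 := PropC.use hP (-b2) 1 3
  simp at p0 p1 p2 p3
  have v0 := H 1 (-1) (-1) (0) (1) (by norm_num)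
  have v1 := H 2 (-2) (-2) (2) (1) (by norm_num)
  have v2 := H 1 (-1) (1) (0) (1) (by norm_num)
  have v3 := H 2 (-2) (2) (2) (1) (by norm_num)
  have v4 := H 1 (1) (-1) (0) (1) (by norm_num)
  have v5 := H 2 (2) (-2) (2) (1) (by norm_num)
  have v6 := H 1 (1) (1) (0) (1) (by norm_num)
  have v7 := H 2 (2) (2) (2) (1) (by norm_num)
  clear hP H
  have l0 : 0 ≤ b0 := by omega
  have u0 : b0 ≤ 3 := by omega
  have l1 : 0 ≤ b1 := by omega
  have u1 : b1 ≤ 4 := by omega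
  have l2 : -6 ≤ b2 := by omega
  have u2 : b2 ≤ 6 := by omega
  interval_cases b3 <;> interval_cases b0 <;> first | omega | skip
  all_goals (interval_cases b1 <;> first | omega | (interval_cases b2 <;> omega))

lemma small_0013 (b0 b1 b2 b3 k : ℤ)
    (_ : b0 ≤ b1)
    (_ : 0 ≤ b0)
    (_ : 0 ≤ b1)
    (_ : 0 ≤ b3)
    (_ : b3 < 3)
    (_ : (b0 + b1 + b2 + b3) % 2 = 1)
    (hP : PropC ![0, 0, 1, 3] ![b0, b1, b2, b3])
    (hM : 4 ≤ |b0| + |b1| + |b2| + |b3|)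
    (H : SliceC 0 0 1 3 b0 b1 b2 b3 0 k) :
    False := by
  have p0 := PropC.use hP (-b3) 3 0
  have p1 := PropC.use hP (-b3) 3 1
  have p2 := PropC.use hP (-b3) 3 2
  have p3 := PropC.use hP (-b2) 1 3
  simp at p0 p1 p2 p3
  have v0 := H 3 (-3) (-3) (-3) (1) (by norm_num)
  have v1 := H 3 (-3) (-3) (3) (-1) (by norm_num)
  have v2 := H 3 (-3) (3) (-3) (1) (by norm_num)
  have v3 := H 3 (-3) (3) (3) (-1) (by norm_num)
  have v4 := H 3 (3) (-3) (-3) (1) (by norm_num)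
  have v5 := H 3 (3) (-3) (3) (-1) (by norm_num)
  have v6 := H 3 (3) (3) (-3) (1) (by norm_num)
  have v7 := H 3 (3) (3) (3) (-1) (by norm_num)
  simp only [abs_eq_max_neg] at hM
  clear hP H
  have l0 : 0 ≤ b0 := by omega
  have u0 : b0 ≤ 3 := by omega
  have l1 : 0 ≤ b1 := by omega
  have u1 : b1 ≤ 4 := by omega
  have l2 : -4 ≤ b2 := by omega
  have u2 : b2 ≤ 4 := by omega
  interval_cases b3 <;> interval_cases b0 <;> first | omega | skip
  all_goals (interval_cases b1 <;> first | omega | (interval_cases b2 <;> omega))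

lemma small_0022 (b0 b1 b2 b3 k : ℤ)
    (_ : b0 ≤ b1)
    (_ : b2 ≤ b3)
    (_ : 0 ≤ b0)
    (_ : 0 ≤ b1)
    (_ : 0 ≤ b3)
    (_ : b3 < 2)
    (_ : (b0 + b1 + b2 + b3) % 2 = 1)
    (hP : PropC ![0, 0, 2, 2] ![b0, b1, b2, b3])
    (_ : ¬ (b0 = 0 ∧ b1 = 0 ∧ b2 = 0 ∧ b3 = 0))
    (H : SliceC 0 0 2 2 b0 b1 b2 b3 0 k) :
    False := by
  have p0 := PropC.use hP (-b3) 2 0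
  have p1 := PropC.use hP (-b3) 2 1
  have p2 := PropC.use hP (-b3) 2 2
  have p3 := PropC.use hP (-b2) 2 3
  simp at p0 p1 p2 p3
  have v0 := H 1 (-1) (-1) (-1) (1) (by norm_num)
  have v1 := H 1 (-1) (-1) (1) (-1) (by norm_num)
  have v2 := H 1 (-1) (1) (-1) (1) (by norm_num)
  have v3 := H 1 (-1) (1) (1) (-1) (by norm_num)
  have v4 := H 1 (1) (-1) (-1) (1) (by norm_num)
  have v5 := H 1 (1) (-1) (1) (-1) (by norm_num)
  have v6 := H 1 (1) (1) (-1) (1) (by norm_num)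
  have v7 := H 1 (1) (1) (1) (-1) (by norm_num)
  clear hP H
  have l0 : 0 ≤ b0 := by omega
  have u0 : b0 ≤ 3 := by omega
  have l1 : 0 ≤ b1 := by omega
  have u1 : b1 ≤ 4 := by omega
  have l2 : -4 ≤ b2 := by omega
  have u2 : b2 ≤ 3 := by omega
  interval_cases b3 <;> interval_cases b0 <;> first | omega | skip
  all_goals (interval_cases b1 <;> first | omega | (interval_cases b2 <;> omega))

lemma small_0014 (b0 b1 b2 b3 k : ℤ)
    (_ : b0 ≤ b1)
    (_ : 0 ≤ b0)
    (_ : 0 ≤ b1)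
    (_ : 0 ≤ b3)
    (_ : b3 < 4)
    (hP : PropC ![0, 0, 1, 4] ![b0, b1, b2, b3])
    (_ : ¬ (b0 = 0 ∧ b1 = 0 ∧ b2 = 0 ∧ b3 = 0))
    (H : SliceC 0 0 1 4 b0 b1 b2 b3 2 k) :
    False := by
  have p0 := PropC.use hP (-b3) 4 0
  have p1 := PropC.use hP (-b3) 4 1
  have p2 := PropC.use hP (-b3) 4 2
  have p3 := PropC.use hP (-b2) 1 3
  simp at p0 p1 p2 p3
  have v0 := H 4 (-4) (-4) (-4) (3) (by norm_num)
  have v1 := H 4 (-4) (-4) (4) (1) (by norm_num)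
  have v2 := H 4 (-4) (4) (-4) (3) (by norm_num)
  have v3 := H 4 (-4) (4) (4) (1) (by norm_num)
  have v4 := H 4 (4) (-4) (-4) (3) (by norm_num)
  have v5 := H 4 (4) (-4) (4) (1) (by norm_num)
  have v6 := H 4 (4) (4) (-4) (3) (by norm_num)
  have v7 := H 4 (4) (4) (4) (1) (by norm_num)
  clear hP H
  have l0 : 0 ≤ b0 := by omega
  have u0 : b0 ≤ 3 := by omega
  have l1 : 0 ≤ b1 := by omega
  have u1 : b1 ≤ 4 := by omega
  have l2 : -4 ≤ b2 := by omega
  have u2 : b2 ≤ 4 := by omega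
  interval_cases b3 <;> interval_cases b0 <;> first | omega | skip
  all_goals (interval_cases b1 <;> first | omega | (interval_cases b2 <;> omega))

lemma small_0023 (b0 b1 b2 b3 k : ℤ)
    (_ : b0 ≤ b1)
    (_ : 0 ≤ b0)
    (_ : 0 ≤ b1)
    (_ : 0 ≤ b3)
    (_ : b3 < 3)
    (hP : PropC ![0, 0, 2, 3] ![b0, b1, b2, b3])
    (hM : 5 ≤ |b0| + |b1| + |b2| + |b3|)
    (H : SliceC 0 0 2 3 b0 b1 b2 b3 2 k) :
    False := by
  have p0 := PropC.use hP (-b3) 3 0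
  have p1 := PropC.use hP (-b3) 3 1
  have p2 := PropC.use hP (-b3) 3 2
  have p3 := PropC.use hP (-b2) 2 3
  simp at p0 p1 p2 p3
  have v0 := H 2 (-2) (-2) (-1) (2) (by norm_num)
  have v1 := H 1 (-1) (-1) (1) (0) (by norm_num)
  have v2 := H 2 (-2) (2) (-1) (2) (by norm_num)
  have v3 := H 1 (-1) (1) (1) (0) (by norm_num)
  have v4 := H 2 (2) (-2) (-1) (2) (by norm_num)
  have v5 := H 1 (1) (-1) (1) (0) (by norm_num)
  have v6 := H 2 (2) (2) (-1) (2) (by norm_num)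
  have v7 := H 1 (1) (1) (1) (0) (by norm_num)
  simp only [abs_eq_max_neg] at hM
  clear hP H
  have l0 : 0 ≤ b0 := by omega
  have u0 : b0 ≤ 3 := by omega
  have l1 : 0 ≤ b1 := by omega
  have u1 : b1 ≤ 4 := by omega
  have l2 : -4 ≤ b2 := by omega
  have u2 : b2 ≤ 6 := by omega
  interval_cases b3 <;> interval_cases b0 <;> first | omega | skip
  all_goals (interval_cases b1 <;> first | omega | (interval_cases b2 <;> omega))

lemma small_0111 (b0 b1 b2 b3 k : ℤ)
    (_ : b1 ≤ b2)
    (_ : b2 ≤ b3)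
    (_ : 0 ≤ b0)
    (_ : 0 ≤ b3)
    (_ : b3 < 1)
    (hP : PropC ![0, 1, 1, 1] ![b0, b1, b2, b3])
    (_ : ¬ (b0 = 0 ∧ b1 = 0 ∧ b2 = 0 ∧ b3 = 0))
    (H : SliceC 0 1 1 1 b0 b1 b2 b3 2 k) :
    (b0 = 0 ∧ b1 = -3 ∧ b2 = -2 ∧ b3 = 0) ∨
    (b0 = 0 ∧ b1 = -3 ∧ b2 = -1 ∧ b3 = 0) ∨
    (b0 = 1 ∧ b1 = -2 ∧ b2 = -1 ∧ b3 = 0) := by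
  have p0 := PropC.use hP (-b3) 1 0
  have p1 := PropC.use hP (-b3) 1 1
  have p2 := PropC.use hP (-b3) 1 2
  have p3 := PropC.use hP (-b2) 1 3
  simp at p0 p1 p2 p3
  have v0 := H 1 (-1) (0) (1) (1) (by norm_num)
  have v1 := H 1 (-1) (1) (0) (1) (by norm_num)
  have v2 := H 1 (-1) (1) (1) (0) (by norm_num)
  have v3 := H 1 (1) (0) (1) (1) (by norm_num)
  have v4 := H 1 (1) (1) (0) (1) (by norm_num)
  have v5 := H 1 (1) (1) (1) (0) (by norm_num)
  clear hP H
  have l0 : 0 ≤ b0 := by omega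
  have u0 : b0 ≤ 4 := by omega
  have l1 : -6 ≤ b1 := by omega
  have u1 : b1 ≤ 2 := by omega
  have l2 : -6 ≤ b2 := by omega
  have u2 : b2 ≤ 2 := by omega
  interval_cases b3 <;> interval_cases b0 <;> first | omega | skip
  all_goals (interval_cases b1 <;> first | omega | (interval_cases b2 <;> omega))

set_option maxHeartbeats 1600000 in
lemma small_0112 (b0 b1 b2 b3 k : ℤ)
    (_ : b1 ≤ b2)
    (_ : 0 ≤ b0)
    (_ : 0 ≤ b3)
    (_ : b3 < 2)
    (_ : (b0 + b1 + b2 + b3) % 2 = 1)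
    (hP : PropC ![0, 1, 1, 2] ![b0, b1, b2, b3])
    (hM : 4 ≤ |b0| + |b1| + |b2| + |b3|)
    (H : SliceC 0 1 1 2 b0 b1 b2 b3 0 k) :
    False := by
  have p0 := PropC.use hP (-b3) 2 0
  have p1 := PropC.use hP (-b3) 2 1
  have p2 := PropC.use hP (-b3) 2 2
  have p3 := PropC.use hP (-b2) 1 3
  simp at p0 p1 p2 p3
  have v0 := H 1 (-1) (-1) (-1) (1) (by norm_num)
  have v1 := H 1 (-1) (-1) (1) (0) (by norm_num)
  have v2 := H 1 (-1) (1) (-1) (0) (by norm_num)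
  have v3 := H 1 (-1) (1) (1) (-1) (by norm_num)
  have v4 := H 1 (1) (-1) (-1) (1) (by norm_num)
  have v5 := H 1 (1) (-1) (1) (0) (by norm_num)
  have v6 := H 1 (1) (1) (-1) (0) (by norm_num)
  have v7 := H 1 (1) (1) (1) (-1) (by norm_num)
  simp only [abs_eq_max_neg] at hM
  clear hP H
  have l0 : 0 ≤ b0 := by omega
  have u0 : b0 ≤ 4 := by omega
  have l1 : -4 ≤ b1 := by omega
  have u1 : b1 ≤ 3 := by omega
  have l2 : -3 ≤ b2 := by omega
  have u2 : b2 ≤ 4 := by omega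
  interval_cases b3 <;> interval_cases b0 <;> first | omega | skip
  all_goals (interval_cases b1 <;> first | omega | (interval_cases b2 <;> omega))

lemma small_0113 (b0 b1 b2 b3 k : ℤ)
    (_ : b1 ≤ b2)
    (_ : 0 ≤ b0)
    (_ : 0 ≤ b3)
    (_ : b3 < 3)
    (hP : PropC ![0, 1, 1, 3] ![b0, b1, b2, b3])
    (_ : ¬ (b0 = 0 ∧ b1 = 0 ∧ b2 = 0 ∧ b3 = 0))
    (H : SliceC 0 1 1 3 b0 b1 b2 b3 2 k) :
    False := by
  have p0 := PropC.use hP (-b3) 3 0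
  have p1 := PropC.use hP (-b3) 3 1
  have p2 := PropC.use hP (-b3) 3 2
  have p3 := PropC.use hP (-b2) 1 3
  simp at p0 p1 p2 p3
  have v0 := H 1 (-1) (-1) (0) (1) (by norm_num)
  have v1 := H 3 (-3) (-3) (3) (2) (by norm_num)
  have v2 := H 1 (-1) (0) (-1) (1) (by norm_num)
  have v3 := H 3 (-3) (3) (-3) (2) (by norm_num)
  have v4 := H 1 (-1) (1) (1) (0) (by norm_num)
  have v5 := H 1 (1) (-1) (0) (1) (by norm_num)
  have v6 := H 3 (3) (-3) (3) (2) (by norm_num)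
  have v7 := H 1 (1) (0) (-1) (1) (by norm_num)
  have v8 := H 3 (3) (3) (-3) (2) (by norm_num)
  have v9 := H 1 (1) (1) (1) (0) (by norm_num)
  clear hP H
  have l0 : 0 ≤ b0 := by omega
  have u0 : b0 ≤ 4 := by omega
  have l1 : -4 ≤ b1 := by omega
  have u1 : b1 ≤ 4 := by omega
  have l2 : -3 ≤ b2 := by omega
  have u2 : b2 ≤ 4 := by omega
  interval_cases b3 <;> interval_cases b0 <;> first | omega | skip
  all_goals (interval_cases b1 <;> first | omega | (interval_cases b2 <;> omega))

lemma small_0122 (b0 b1 b2 b3 k : ℤ)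
    (_ : b2 ≤ b3)
    (_ : 0 ≤ b0)
    (_ : 0 ≤ b3)
    (_ : b3 < 2)
    (hP : PropC ![0, 1, 2, 2] ![b0, b1, b2, b3])
    (_ : ¬ (b0 = 0 ∧ b1 = 0 ∧ b2 = 0 ∧ b3 = 0))
    (H : SliceC 0 1 2 2 b0 b1 b2 b3 2 k) :
    False := by
  have p0 := PropC.use hP (-b3) 2 0
  have p1 := PropC.use hP (-b3) 2 1
  have p2 := PropC.use hP (-b3) 2 2
  have p3 := PropC.use hP (-b2) 2 3
  simp at p0 p1 p2 p3
  have v0 := H 2 (-2) (-2) (1) (2) (by norm_num)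
  have v1 := H 2 (-2) (-2) (2) (1) (by norm_num)
  have v2 := H 2 (-2) (2) (-1) (2) (by norm_num)
  have v3 := H 2 (-2) (2) (2) (-1) (by norm_num)
  have v4 := H 2 (2) (-2) (1) (2) (by norm_num)
  have v5 := H 2 (2) (-2) (2) (1) (by norm_num)
  have v6 := H 2 (2) (2) (-1) (2) (by norm_num)
  have v7 := H 2 (2) (2) (2) (-1) (by norm_num)
  clear hP H
  have l0 : 0 ≤ b0 := by omega
  have u0 : b0 ≤ 4 := by omega
  have l1 : -4 ≤ b1 := by omega
  have u1 : b1 ≤ 4 := by omega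
  have l2 : -4 ≤ b2 := by omega
  have u2 : b2 ≤ 3 := by omega
  interval_cases b3 <;> interval_cases b0 <;> first | omega | skip
  all_goals (interval_cases b1 <;> first | omega | (interval_cases b2 <;> omega))

lemma small_1111 (b0 b1 b2 b3 k : ℤ)
    (_ : b0 ≤ b1)
    (_ : b1 ≤ b2)
    (_ : b2 ≤ b3)
    (_ : 0 ≤ b3)
    (_ : b3 < 1)
    (_ : (b0 + b1 + b2 + b3) % 2 = 1)
    (hP : PropC ![1, 1, 1, 1] ![b0, b1, b2, b3])
    (_ : ¬ (b0 = 0 ∧ b1 = 0 ∧ b2 = 0 ∧ b3 = 0))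
    (H : SliceC 1 1 1 1 b0 b1 b2 b3 0 k) :
    False := by
  have p0 := PropC.use hP (-b3) 1 0
  have p1 := PropC.use hP (-b3) 1 1
  have p2 := PropC.use hP (-b3) 1 2
  have p3 := PropC.use hP (-b2) 1 3
  simp at p0 p1 p2 p3
  have v0 := H 1 (-1) (-1) (1) (1) (by norm_num)
  have v1 := H 1 (-1) (1) (-1) (1) (by norm_num)
  have v2 := H 1 (-1) (1) (1) (-1) (by norm_num)
  have v3 := H 1 (1) (-1) (-1) (1) (by norm_num)
  have v4 := H 1 (1) (-1) (1) (-1) (by norm_num)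
  have v5 := H 1 (1) (1) (-1) (-1) (by norm_num)
  clear hP H
  have l0 : -4 ≤ b0 := by omega
  have u0 : b0 ≤ 2 := by omega
  have l1 : -4 ≤ b1 := by omega
  have u1 : b1 ≤ 2 := by omega
  have l2 : -4 ≤ b2 := by omega
  have u2 : b2 ≤ 2 := by omega
  interval_cases b3 <;> interval_cases b0 <;> first | omega | skip
  all_goals (interval_cases b1 <;> first | omega | (interval_cases b2 <;> omega))

lemma small_1112 (b0 b1 b2 b3 k : ℤ)
    (_ : b0 ≤ b1)
    (_ : b1 ≤ b2)
    (_ : 0 ≤ b3)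
    (_ : b3 < 2)
    (hP : PropC ![1, 1, 1, 2] ![b0, b1, b2, b3])
    (_ : ¬ (b0 = 0 ∧ b1 = 0 ∧ b2 = 0 ∧ b3 = 0))
    (H : SliceC 1 1 1 2 b0 b1 b2 b3 2 k) :
    False := by
  have p0 := PropC.use hP (-b3) 2 0
  have p1 := PropC.use hP (-b3) 2 1
  have p2 := PropC.use hP (-b3) 2 2
  have p3 := PropC.use hP (-b2) 1 3
  simp at p0 p1 p2 p3
  have v0 := H 1 (-1) (0) (1) (1) (by norm_num)
  have v1 := H 1 (-1) (1) (0) (1) (by norm_num)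
  have v2 := H 2 (-2) (2) (2) (1) (by norm_num)
  have v3 := H 1 (0) (-1) (1) (1) (by norm_num)
  have v4 := H 1 (0) (1) (-1) (1) (by norm_num)
  have v5 := H 1 (1) (-1) (0) (1) (by norm_num)
  have v6 := H 2 (2) (-2) (2) (1) (by norm_num)
  have v7 := H 1 (1) (0) (-1) (1) (by norm_num)
  have v8 := H 2 (2) (2) (-2) (1) (by norm_num)
  have v9 := H 2 (2) (2) (2) (-1) (by norm_num)
  clear hP H
  have l0 : -4 ≤ b0 := by omega
  have u0 : b0 ≤ 3 := by omega
  have l1 : -3 ≤ b1 := by omega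
  have u1 : b1 ≤ 3 := by omega
  have l2 : -3 ≤ b2 := by omega
  have u2 : b2 ≤ 4 := by omega
  interval_cases b3 <;> interval_cases b0 <;> first | omega | skip
  all_goals (interval_cases b1 <;> first | omega | (interval_cases b2 <;> omega))


/-- Pairing of an integer covector with a real vector. -/
def dotR (r : Fin 4 → ℤ) (x : Fin 4 → ℝ) : ℝ := ∑ i, (r i : ℝ) * x i

def l1N (r : Fin 4 → ℤ) : ℤ := ∑ i, |r i|

/-- A point of the subtorus strictly closer than `1/4` to the centre. -/
def GoodC (r b : Fin 4 → ℤ) : Prop :=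
  ∃ e : Fin 4 → ℝ, (∀ i, |e i| < 1) ∧ (∃ k : ℤ, dotR r e = 4 * k + 2 * ∑ i, (r i : ℝ)) ∧
    (∃ k : ℤ, dotR b e = 4 * k + 2 * ∑ i, (b i : ℝ))

def MinC (r b : Fin 4 → ℤ) : Prop :=
  ∀ x y : ℤ, (x ≠ 0 ∨ y ≠ 0) → l1N r ≤ l1N (fun i => x * r i + y * b i)

lemma dotR_add (r : Fin 4 → ℤ) (x y : Fin 4 → ℝ) : dotR r (x + y) = dotR r x + dotR r y := by
  simp [dotR, mul_add, Finset.sum_add_distrib]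

lemma dotR_smul (r : Fin 4 → ℤ) (c : ℝ) (x : Fin 4 → ℝ) : dotR r (c • x) = c * dotR r x := by
  simp only [dotR, Finset.mul_sum, Pi.smul_apply, smul_eq_mul]
  exact Finset.sum_congr rfl fun i _ => by ring

def dotL (r : Fin 4 → ℤ) : (Fin 4 → ℝ) →ₗ[ℝ] ℝ where
  toFun := dotR r
  map_add' := dotR_add r
  map_smul' := dotR_smul r

lemma functional_prod (φ : ℝ × ℝ →ₗ[ℝ] ℝ) (p : ℝ × ℝ) :
    φ p = φ (1, 0) * p.1 + φ (0, 1) * p.2 := by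
  have : p = p.1 • (1, 0) + p.2 • (0, 1) := by ext <;> simp
  conv_lhs => rw [this]
  rw [map_add, map_smul, map_smul]
  simp; ring

lemma separation (r b : Fin 4 → ℤ) (h g : ℝ)
    (H : ∀ α β : ℝ, (α ≠ 0 ∨ β ≠ 0) → α * h + β * g < ∑ i, |α * r i + β * b i|) :
    ∃ e : Fin 4 → ℝ, (∀ i, |e i| < 1) ∧ dotR r e = h ∧ dotR b e = g := by
  classical
  let T : (Fin 4 → ℝ) →ₗ[ℝ] ℝ × ℝ := (dotL r).prod (dotL b)
  have hT : ∀ e, T e = (dotR r e, dotR b e) := fun e => rfl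
  have hsurj : Function.Surjective T := by
    rw [← LinearMap.range_eq_top]
    by_contra hne
    obtain ⟨φ, hφ, hle⟩ := Submodule.exists_le_ker_of_lt_top _ (lt_top_iff_ne_top.mpr hne)
    set α := φ (1, 0) with hα
    set β := φ (0, 1) with hβ
    have hnz : α ≠ 0 ∨ β ≠ 0 := by
      by_contra hcon
      push Not at hcon
      apply hφ
      ext <;> simp [← hα, ← hβ, hcon.1, hcon.2]
    have hz : ∀ i, α * r i + β * b i = 0 := by
      intro i
      have h1 : φ (T (Pi.single i 1)) = 0 := hle ⟨_, rfl⟩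
      rw [functional_prod, hT] at h1
      simpa [dotR, Pi.single_apply] using h1
    have h1 := H α β hnz
    have h2 := H (-α) (-β) (by simpa using hnz)
    have hz' : ∀ i, -α * r i + -β * b i = 0 := fun i => by linarith [hz i]
    simp only [hz, hz', abs_zero, Finset.sum_const_zero] at h1 h2
    linarith
  let B : Set (Fin 4 → ℝ) := Set.pi Set.univ fun _ => Set.Ioo (-1 : ℝ) 1
  have hBo : IsOpen B := isOpen_set_pi Set.finite_univ fun _ _ => isOpen_Ioo
  have hBc : Convex ℝ B := convex_pi fun _ _ => convex_Ioo _ _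
  have hKo : IsOpen (T '' B) := by
    have := (ContinuousLinearMap.isOpenMap (LinearMap.toContinuousLinearMap T) hsurj)
    exact this B hBo
  have hKc : Convex ℝ (T '' B) := hBc.linear_image T
  by_cases hmem : (h, g) ∈ T '' B
  · obtain ⟨e, he, hTe⟩ := hmem
    rw [hT, Prod.mk.injEq] at hTe
    refine ⟨e, fun i => ?_, hTe.1, hTe.2⟩
    have := he i (Set.mem_univ i)
    exact abs_lt.mpr ⟨this.1, this.2⟩
  exfalso
  obtain ⟨φ, hφ⟩ := geometric_hahn_banach_open_point hKc hKo hmem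
  set α := φ (1, 0) with hα
  set β := φ (0, 1) with hβ
  have hφe : ∀ p : ℝ × ℝ, φ p = α * p.1 + β * p.2 := fun p =>
    functional_prod (φ : ℝ × ℝ →ₗ[ℝ] ℝ) p
  have h0 : (0 : Fin 4 → ℝ) ∈ B := by
    intro i _; simp
  have hpos : 0 < φ (h, g) := by
    have := hφ (T 0) ⟨0, h0, rfl⟩
    simpa using this
  have hnz : α ≠ 0 ∨ β ≠ 0 := by
    by_contra hcon
    push Not at hcon
    rw [hφe, hcon.1, hcon.2] at hpos
    simp at hpos
  have h1 := H α β hnz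
  rw [hφe] at hpos
  simp only at hpos
  set F := ∑ i, |α * r i + β * b i| with hF
  have hFpos : 0 < F := by linarith
  -- test vector
  obtain ⟨c, hc0, hc1, hc2⟩ : ∃ c : ℝ, 0 < c ∧ c < 1 ∧ α * h + β * g < c * F := by
    refine ⟨((α * h + β * g) / F + 1) / 2, by positivity, ?_, ?_⟩
    · have : (α * h + β * g) / F < 1 := (div_lt_one hFpos).mpr h1
      linarith
    · have : ((α * h + β * g) / F + 1) / 2 * F = ((α * h + β * g) + F) / 2 := by
        field_simp
      rw [this]; linarith
  let e : Fin 4 → ℝ := fun i => c * (SignType.sign (α * r i + β * b i) : ℝ)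
  have heB : e ∈ B := by
    intro i _
    rcases lt_trichotomy (α * r i + β * b i) 0 with hs | hs | hs
    · simp [e, sign_neg hs]; constructor <;> linarith
    · simp [e, hs]
    · simp [e, sign_pos hs]; constructor <;> linarith
  have h2 := hφ (T e) ⟨e, heB, rfl⟩
  rw [hφe, hφe, hT] at h2
  have h3 : α * dotR r e + β * dotR b e = c * F := by
    simp only [dotR, hF, Finset.mul_sum]
    rw [← Finset.sum_add_distrib]
    refine Finset.sum_congr rfl fun i _ => ?_
    have : |α * r i + β * b i| = (SignType.sign (α * r i + β * b i) : ℝ) * (α * r i + β * b i) :=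
      (sign_mul_self _).symm
    rw [this]; simp only [e]; ring
  simp only at h2
  linarith

lemma slice (r b : Fin 4 → ℤ) (h : ℤ) (hr : ∀ i, 0 ≤ r i) (hh : 0 ≤ h ∧ h < ∑ i, r i)
    (hpar : ∃ k : ℤ, h = 4 * k + 2 * ∑ i, r i) (hG : ¬ GoodC r b) :
    ∃ k : ℤ, ∀ e : Fin 4 → ℝ, (∀ i, |e i| ≤ 1) → dotR r e = h →
      4 * (k : ℝ) + 2 * ∑ i, (b i : ℝ) ≤ dotR b e ∧
      dotR b e ≤ 4 * (k : ℝ) + 4 + 2 * ∑ i, (b i : ℝ) := by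
  set S : ℝ := ∑ i, (b i : ℝ) with hS
  set N : ℝ := ∑ i, (r i : ℝ) with hN
  obtain ⟨kr, hkr⟩ := hpar
  have hNpos : 0 < N := by
    have : 0 < ∑ i, r i := by omega
    rw [hN]; exact_mod_cast this
  have hno : ∀ e : Fin 4 → ℝ, (∀ i, |e i| < 1) → dotR r e = h → ∀ k : ℤ,
      dotR b e ≠ 4 * (k : ℝ) + 2 * S := by
    intro e he h1 k hk
    refine hG ⟨e, he, ⟨kr, ?_⟩, k, hk⟩
    rw [h1, hkr]; push_cast; ring
  let e0 : Fin 4 → ℝ := fun _ => (h : ℝ) / N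
  have he0 : ∀ i, |e0 i| < 1 := by
    intro i
    have h0 : (0 : ℝ) ≤ h := by exact_mod_cast hh.1
    have h1 : (h : ℝ) < N := by rw [hN]; exact_mod_cast hh.2
    rw [abs_of_nonneg (by positivity)]
    exact (div_lt_one hNpos).mpr h1
  have hd0 : dotR r e0 = h := by
    simp only [dotR, e0, ← Finset.sum_mul, ← hN]
    field_simp
  set k := ⌊(dotR b e0 - 2 * S) / 4⌋ with hk
  have hk1 : 4 * (k : ℝ) + 2 * S ≤ dotR b e0 := by
    have := Int.floor_le ((dotR b e0 - 2 * S) / 4); rw [← hk] at this; linarith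
  have hk2 : dotR b e0 < 4 * (k : ℝ) + 4 + 2 * S := by
    have := Int.lt_floor_add_one ((dotR b e0 - 2 * S) / 4); rw [← hk] at this; linarith
  -- interpolation
  have comb : ∀ e : Fin 4 → ℝ, (∀ i, |e i| ≤ 1) → dotR r e = h → ∀ l : ℝ, 0 ≤ l → l < 1 →
      ∀ m : ℤ, (1 - l) * dotR b e0 + l * dotR b e ≠ 4 * (m : ℝ) + 2 * S := by
    intro e he hd l hl0 hl1 m hm
    refine hno ((1 - l) • e0 + l • e) ?_ ?_ m ?_
    · intro i
      simp only [Pi.add_apply, Pi.smul_apply, smul_eq_mul]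
      have h1 := abs_lt.mp (he0 i)
      have h2 := abs_le.mp (he i)
      rw [abs_lt]
      constructor <;> nlinarith
    · rw [dotR_add, dotR_smul, dotR_smul, hd0, hd]; ring
    · rw [dotR_add, dotR_smul, dotR_smul, hm]
  refine ⟨k, fun e he hd => ⟨?_, ?_⟩⟩
  · by_contra hlt
    push Not at hlt
    have hden : 0 < dotR b e0 - dotR b e := by linarith
    refine comb e he hd ((dotR b e0 - (4 * (k : ℝ) + 2 * S)) / (dotR b e0 - dotR b e))
      (by apply div_nonneg <;> linarith) ((div_lt_one hden).mpr (by linarith)) k ?_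
    field_simp; ring
  · by_contra hlt
    push Not at hlt
    have hden : 0 < dotR b e - dotR b e0 := by linarith
    refine comb e he hd (((4 * (k : ℝ) + 4 + 2 * S) - dotR b e0) / (dotR b e - dotR b e0))
      (by apply div_nonneg <;> linarith) ((div_lt_one hden).mpr (by linarith)) (k + 1) ?_
    push_cast
    field_simp; ring

lemma sliceC_of (r b : Fin 4 → ℤ) (h : ℤ) (hr : ∀ i, 0 ≤ r i) (hh : 0 ≤ h ∧ h < ∑ i, r i)
    (hpar : ∃ k : ℤ, h = 4 * k + 2 * ∑ i, r i) (hG : ¬ GoodC r b) :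
    ∃ k : ℤ, SliceC (r 0) (r 1) (r 2) (r 3) (b 0) (b 1) (b 2) (b 3) h k := by
  obtain ⟨k, hk⟩ := slice r b h hr hh hpar hG
  refine ⟨k, ?_⟩
  rintro d e0 e1 e2 e3 ⟨hd, h0, h1, h2, h3, hs⟩
  have hdR : (0 : ℝ) < d := by exact_mod_cast hd
  have key : ∀ e : ℤ, (-d ≤ e ∧ e ≤ d) → |(e : ℝ) / d| ≤ 1 := by
    intro e he
    rw [abs_le]
    constructor
    · rw [le_div_iff₀ hdR]; have : (-(d : ℝ)) ≤ e := by exact_mod_cast he.1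
      linarith
    · rw [div_le_one hdR]; exact_mod_cast he.2
  have := hk ![(e0 : ℝ) / d, (e1 : ℝ) / d, (e2 : ℝ) / d, (e3 : ℝ) / d] (by
    intro i; fin_cases i
    · exact key _ h0
    · exact key _ h1
    · exact key _ h2
    · exact key _ h3) (by
    simp only [dotR, Fin.sum_univ_four, Matrix.cons_val]
    field_simp
    have : ((r 0 * e0 + r 1 * e1 + r 2 * e2 + r 3 * e3 : ℤ) : ℝ) = ((d * h : ℤ) : ℝ) := by rw [hs]
    push_cast at this
    linarith)
  simp only [dotR, Fin.sum_univ_four, Matrix.cons_val] at this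
  have hrw : (b 0 : ℝ) * (e0 / d) + b 1 * (e1 / d) + b 2 * (e2 / d) + b 3 * (e3 / d) =
    ((b 0 * e0 + b 1 * e1 + b 2 * e2 + b 3 * e3 : ℤ) : ℝ) / d := by push_cast; field_simp
  rw [hrw, le_div_iff₀ hdR, div_le_iff₀ hdR] at this
  constructor
  · have h4 := this.1
    have : ((d * (4 * k + 2 * (b 0 + b 1 + b 2 + b 3)) : ℤ) : ℝ) ≤
      ((b 0 * e0 + b 1 * e1 + b 2 * e2 + b 3 * e3 : ℤ) : ℝ) := by
        refine le_trans (le_of_eq ?_) h4; push_cast; ring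
    exact_mod_cast this
  · have h4 := this.2
    have : ((b 0 * e0 + b 1 * e1 + b 2 * e2 + b 3 * e3 : ℤ) : ℝ) ≤
      ((d * (4 * k + 4 + 2 * (b 0 + b 1 + b 2 + b 3)) : ℤ) : ℝ) := by
        refine le_trans h4 (le_of_eq ?_); push_cast; ring
    exact_mod_cast this

lemma f_lower (r b : Fin 4 → ℤ) (hM : MinC r b) (t : ℝ) :
    ((l1N r : ℤ) : ℝ) / 2 ≤ ∑ i, |(b i : ℝ) + t * r i| := by
  set N : ℝ := ((l1N r : ℤ) : ℝ) with hN
  have hN' : N = ∑ i, |(r i : ℝ)| := by rw [hN, l1N]; push_cast; rfl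
  have hN0 : 0 ≤ N := by rw [hN']; positivity
  have h1 : N ≤ ∑ i, |(b i : ℝ) + (round t : ℝ) * r i| := by
    have := hM (round t) 1 (Or.inr one_ne_zero)
    have h2 : N ≤ ((l1N (fun i => round t * r i + 1 * b i) : ℤ) : ℝ) := by
      rw [hN]; exact_mod_cast this
    refine h2.trans (le_of_eq ?_)
    rw [l1N]; push_cast
    refine Finset.sum_congr rfl fun i _ => ?_
    congr 1; ring
  have h2 : |t - round t| ≤ 1 / 2 := abs_sub_round t
  have h3 : ∑ i, |(b i : ℝ) + (round t : ℝ) * r i| ≤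
      ∑ i, (|(b i : ℝ) + t * r i| + |t - round t| * |(r i : ℝ)|) := by
    refine Finset.sum_le_sum fun i _ => ?_
    have : (b i : ℝ) + (round t : ℝ) * r i = (b i + t * r i) - (t - round t) * r i := by ring
    rw [this, ← abs_mul]
    exact abs_sub _ _
  rw [Finset.sum_add_distrib, ← Finset.mul_sum, ← hN'] at h3
  nlinarith

lemma scale_pos (r b : Fin 4 → ℤ) (α β : ℝ) (hβ : 0 < β) :
    ∑ i, |α * r i + β * b i| = β * ∑ i, |(b i : ℝ) + (α / β) * r i| := by
  rw [Finset.mul_sum]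
  refine Finset.sum_congr rfl fun i _ => ?_
  have : α * r i + β * b i = β * ((b i : ℝ) + (α / β) * r i) := by field_simp; ring
  rw [this, abs_mul, abs_of_pos hβ]

lemma scale_neg (r b : Fin 4 → ℤ) (α β : ℝ) (hβ : β < 0) :
    ∑ i, |α * r i + β * b i| = (-β) * ∑ i, |(b i : ℝ) + (α / β) * r i| := by
  rw [Finset.mul_sum]
  refine Finset.sum_congr rfl fun i _ => ?_
  have hb : β ≠ 0 := hβ.ne
  have : α * r i + β * b i = β * ((b i : ℝ) + (α / β) * r i) := by field_simp; ring
  rw [this, abs_mul, abs_of_neg hβ]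

lemma scale_zero (r b : Fin 4 → ℤ) (α : ℝ) :
    ∑ i, |α * r i + 0 * b i| = |α| * ((l1N r : ℤ) : ℝ) := by
  rw [l1N]; push_cast; rw [Finset.mul_sum]
  refine Finset.sum_congr rfl fun i _ => ?_
  rw [zero_mul, add_zero, abs_mul]

/-- Criterion in terms of the one-parameter function. -/
lemma crit (r b : Fin 4 → ℤ) (h g : ℝ) (hh : |h| < ((l1N r : ℤ) : ℝ))
    (H1 : ∀ t : ℝ, g < ∑ i, |(b i : ℝ) + t * r i| - t * h)
    (H2 : ∀ t : ℝ, -g < ∑ i, |(b i : ℝ) + t * r i| + t * h) :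
    ∃ e : Fin 4 → ℝ, (∀ i, |e i| < 1) ∧ dotR r e = h ∧ dotR b e = g := by
  refine separation r b h g fun α β hab => ?_
  rcases lt_trichotomy β 0 with hβ | hβ | hβ
  · rw [scale_neg r b α β hβ]
    have h1 := H2 (α / β)
    have h2 : α * h + β * g = (-β) * (-g - (α / β) * h) := by
      have := hβ.ne
      field_simp; ring
    rw [h2]
    exact mul_lt_mul_of_pos_left (by linarith) (by linarith)
  · subst hβ
    rw [scale_zero]
    have ha : α ≠ 0 := by simpa using hab
    have h1 : α * h ≤ |α| * |h| := by rw [← abs_mul]; exact le_abs_self _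
    have h2 : |α| * |h| < |α| * ((l1N r : ℤ) : ℝ) :=
      mul_lt_mul_of_pos_left hh (abs_pos.mpr ha)
    linarith
  · rw [scale_pos r b α β hβ]
    have h1 := H1 (α / β)
    have h2 : α * h + β * g = β * (g + (α / β) * h) := by
      field_simp; ring
    rw [h2]
    exact mul_lt_mul_of_pos_left (by linarith) hβ

lemma big_even (r b : Fin 4 → ℤ) (hr : ∀ i, 0 ≤ r i) (hM : MinC r b) (hN : 6 ≤ l1N r)
    (hev : (∑ i, r i) % 2 = 0) : GoodC r b := by
  have hNR : (6 : ℝ) ≤ ((l1N r : ℤ) : ℝ) := by exact_mod_cast hN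
  have key : ∀ g : ℝ, |g| ≤ 2 → ∃ e : Fin 4 → ℝ, (∀ i, |e i| < 1) ∧ dotR r e = 0 ∧ dotR b e = g := by
    intro g hg
    rw [abs_le] at hg
    refine crit r b 0 g (by simp; linarith) ?_ ?_ <;> intro t <;>
      have := f_lower r b hM t <;> linarith
  have hrk : ∃ k : ℤ, (0 : ℝ) = 4 * k + 2 * ∑ i, (r i : ℝ) := by
    refine ⟨-((∑ i, r i) / 2), ?_⟩
    have : (0 : ℤ) = 4 * (-((∑ i, r i) / 2)) + 2 * ∑ i, r i := by omega
    exact_mod_cast this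
  rcases Int.emod_two_eq_zero_or_one (∑ i, b i) with h2 | h2
  · obtain ⟨e, he, h3, h4⟩ := key 0 (by simp)
    refine ⟨e, he, ?_, -((∑ i, b i) / 2), ?_⟩
    · rw [h3]; exact hrk
    · rw [h4]
      have : (0 : ℤ) = 4 * (-((∑ i, b i) / 2)) + 2 * ∑ i, b i := by omega
      exact_mod_cast this
  · obtain ⟨e, he, h3, h4⟩ := key 2 (by simp)
    refine ⟨e, he, ?_, -((∑ i, b i) / 2), ?_⟩
    · rw [h3]; exact hrk
    · rw [h4]
      have : (2 : ℤ) = 4 * (-((∑ i, b i) / 2)) + 2 * ∑ i, b i := by omega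
      exact_mod_cast this

lemma l1N_nonneg_eq (r : Fin 4 → ℤ) (hr : ∀ i, 0 ≤ r i) : l1N r = ∑ i, r i :=
  Finset.sum_congr rfl fun i _ => abs_of_nonneg (hr i)

lemma big_odd (r b : Fin 4 → ℤ) (hr : ∀ i, 0 ≤ r i) (hM : MinC r b) (hN : 7 ≤ l1N r)
    (hod : (∑ i, r i) % 2 = 1) : GoodC r b := by
  set N : ℝ := ((l1N r : ℤ) : ℝ) with hNdef
  have hNR : (7 : ℝ) ≤ N := by rw [hNdef]; exact_mod_cast hN
  have hNs : N = ∑ i, (r i : ℝ) := by rw [hNdef, l1N_nonneg_eq r hr]; push_cast; rfl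
  let f : ℝ → ℝ := fun t => ∑ i, |(b i : ℝ) + t * r i|
  have key : ∀ t u : ℝ, (4.5 : ℝ) ≤ (f t - t * 2) + (f u + u * 2) := by
    intro t u
    have hmid : 2 * f ((t + u) / 2) ≤ f t + f u := by
      simp only [f, Finset.mul_sum]
      rw [← Finset.sum_add_distrib]
      refine Finset.sum_le_sum fun i _ => ?_
      rw [← abs_two, ← abs_mul]
      refine le_trans (le_of_eq ?_) (abs_add_le _ _)
      congr 1; rw [abs_two]; ring
    have hl : N / 2 ≤ f ((t + u) / 2) := f_lower r b hM _
    have hdiff : N * (t - u) ≤ f t + f u := by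
      rw [hNs, Finset.sum_mul]
      simp only [f]
      rw [← Finset.sum_add_distrib]
      refine Finset.sum_le_sum fun i _ => ?_
      have h1 := le_abs_self ((b i : ℝ) + t * r i)
      have h2 := neg_abs_le ((b i : ℝ) + u * r i)
      linarith
    by_cases hd : t - u ≤ 1.2
    · linarith
    · push Not at hd
      nlinarith
  set A := ⨅ t, (f t - t * 2) with hA
  have hAb : BddBelow (Set.range fun t => f t - t * 2) := by
    refine ⟨4.5 - (f 0 + 0 * 2), ?_⟩
    rintro _ ⟨t, rfl⟩
    have := key t 0
    simp only; linarith
  have hA1 : ∀ t, A ≤ f t - t * 2 := fun t => ciInf_le hAb t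
  have hA2 : ∀ u, 4.5 - (f u + u * 2) ≤ A := fun u => le_ciInf fun t => by
    have := key t u; linarith
  set S : ℝ := ∑ i, (b i : ℝ) with hS
  set k : ℤ := ⌈(A - 2 * S) / 4⌉ - 1 with hk
  have hk1 : 4 * (k : ℝ) + 2 * S < A := by
    have := Int.ceil_lt_add_one ((A - 2 * S) / 4)
    rw [hk]; push_cast; linarith
  have hk2 : A - 4 ≤ 4 * (k : ℝ) + 2 * S := by
    have := Int.le_ceil ((A - 2 * S) / 4)
    rw [hk]; push_cast; linarith
  obtain ⟨e, he, h3, h4⟩ := crit r b 2 (4 * (k : ℝ) + 2 * S) (by rw [abs_two]; linarith)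
    (fun t => lt_of_lt_of_le hk1 (hA1 t)) (fun t => by
      have := hA2 t
      change _ < f t + t * 2
      linarith)
  refine ⟨e, he, ⟨-((∑ i, r i) / 2), ?_⟩, k, h4⟩
  rw [h3]
  have : (2 : ℤ) = 4 * (-((∑ i, r i) / 2)) + 2 * ∑ i, r i := by omega
  exact_mod_cast this

def R1 (y : Fin 4 → ℝ) : Prop := y 2 = 2 * y 1 ∧ y 3 = 3 * y 1
def R2 (y : Fin 4 → ℝ) : Prop := y 0 = y 1 + y 2 ∧ y 3 = y 0 + y 1

def ExcC (r b : Fin 4 → ℤ) : Prop :=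
  ∃ (π : Equiv.Perm (Fin 4)) (s : Fin 4 → ℤ), (∀ i, s i = 1 ∨ s i = -1) ∧
    ((∀ x : Fin 4 → ℝ, (dotR r x = 0 ∧ dotR b x = 0) ↔ R1 (fun i => s i * x (π i))) ∨
     (∀ x : Fin 4 → ℝ, (dotR r x = 0 ∧ dotR b x = 0) ↔ R2 (fun i => s i * x (π i))))

lemma exc_a : ExcC ![0, 0, 1, 2] ![0, 1, -1, 1] := by
  refine ⟨⟨![0, 3, 2, 1], ![0, 3, 2, 1], by decide, by decide⟩, ![1, 1, -1, -1], by decide, Or.inl ?_⟩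
  intro x
  simp [dotR, R1, Fin.sum_univ_four]
  constructor <;> rintro ⟨h1, h2⟩ <;> constructor <;> linarith

lemma exc_b : ExcC ![0, 0, 1, 2] ![0, 1, 2, 1] := by
  refine ⟨⟨![0, 3, 2, 1], ![0, 3, 2, 1], by decide, by decide⟩, ![1, 1, -1, 1], by decide, Or.inl ?_⟩
  intro x
  simp [dotR, R1, Fin.sum_univ_four]
  constructor <;> rintro ⟨h1, h2⟩ <;> constructor <;> linarith

lemma exc_c : ExcC ![0, 1, 1, 1] ![0, -3, -2, 0] := by
  refine ⟨⟨![0, 3, 1, 2], ![0, 2, 3, 1], by decide, by decide⟩, ![1, 1, 1, -1], by decide, Or.inl ?_⟩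
  intro x
  simp [dotR, R1, Fin.sum_univ_four]
  constructor <;> rintro ⟨h1, h2⟩ <;> constructor <;> linarith

lemma exc_d : ExcC ![0, 1, 1, 1] ![0, -3, -1, 0] := by
  refine ⟨⟨![0, 1, 3, 2], ![0, 1, 3, 2], by decide, by decide⟩, ![1, 1, 1, -1], by decide, Or.inl ?_⟩
  intro x
  simp [dotR, R1, Fin.sum_univ_four]
  constructor <;> rintro ⟨h1, h2⟩ <;> constructor <;> linarith

lemma exc_e : ExcC ![0, 1, 1, 1] ![1, -2, -1, 0] := by
  refine ⟨⟨![3, 1, 2, 0], ![3, 1, 2, 0], by decide, by decide⟩, ![-1, 1, 1, 1], by decide, Or.inr ?_⟩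
  intro x
  simp [dotR, R2, Fin.sum_univ_four]
  constructor <;> rintro ⟨h1, h2⟩ <;> constructor <;> linarith

lemma even_case (r b : Fin 4 → ℤ) (hr : ∀ i, 0 ≤ r i) (hpos : 0 < ∑ i, r i)
    (hev : (∑ i, r i) % 2 = 0) (hG : ¬ GoodC r b) :
    (b 0 + b 1 + b 2 + b 3) % 2 = 1 ∧
    ∃ k : ℤ, SliceC (r 0) (r 1) (r 2) (r 3) (b 0) (b 1) (b 2) (b 3) 0 k := by
  refine ⟨?_, sliceC_of r b 0 hr ⟨le_rfl, hpos⟩ ⟨-((∑ i, r i) / 2), by omega⟩ hG⟩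
  by_contra hne
  apply hG
  have h2 : (∑ i, b i) % 2 = 0 := by rw [Fin.sum_univ_four]; omega
  refine ⟨0, by simp, ⟨-((∑ i, r i) / 2), ?_⟩, ⟨-((∑ i, b i) / 2), ?_⟩⟩
  · have : (0 : ℤ) = 4 * (-((∑ i, r i) / 2)) + 2 * ∑ i, r i := by omega
    simp only [dotR, Pi.zero_apply, mul_zero, Finset.sum_const_zero]
    exact_mod_cast this
  · have : (0 : ℤ) = 4 * (-((∑ i, b i) / 2)) + 2 * ∑ i, b i := by omega
    simp only [dotR, Pi.zero_apply, mul_zero, Finset.sum_const_zero]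
    exact_mod_cast this

lemma odd_case (r b : Fin 4 → ℤ) (hr : ∀ i, 0 ≤ r i) (hpos : 2 < ∑ i, r i)
    (hev : (∑ i, r i) % 2 = 1) (hG : ¬ GoodC r b) :
    ∃ k : ℤ, SliceC (r 0) (r 1) (r 2) (r 3) (b 0) (b 1) (b 2) (b 3) 2 k :=
  sliceC_of r b 2 hr ⟨by norm_num, hpos⟩ ⟨-((∑ i, r i) / 2), by omega⟩ hG

lemma hcases_aux (r0 r1 r2 r3 : ℤ) (h0 : 0 ≤ r0) (i1 : r0 ≤ r1) (i2 : r1 ≤ r2) (i3 : r2 ≤ r3)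
    (hle : r0 + r1 + r2 + r3 ≤ 5) (hP3 : ¬ (r0 = 0 ∧ r1 = 0 ∧ r2 = 0)) :
    (r0 = 0 ∧ r1 = 0 ∧ r2 = 1 ∧ r3 = 1) ∨ (r0 = 0 ∧ r1 = 0 ∧ r2 = 1 ∧ r3 = 2) ∨
      (r0 = 0 ∧ r1 = 0 ∧ r2 = 1 ∧ r3 = 3) ∨ (r0 = 0 ∧ r1 = 0 ∧ r2 = 2 ∧ r3 = 2) ∨
      (r0 = 0 ∧ r1 = 0 ∧ r2 = 1 ∧ r3 = 4) ∨ (r0 = 0 ∧ r1 = 0 ∧ r2 = 2 ∧ r3 = 3) ∨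
      (r0 = 0 ∧ r1 = 1 ∧ r2 = 1 ∧ r3 = 1) ∨ (r0 = 0 ∧ r1 = 1 ∧ r2 = 1 ∧ r3 = 2) ∨
      (r0 = 0 ∧ r1 = 1 ∧ r2 = 1 ∧ r3 = 3) ∨ (r0 = 0 ∧ r1 = 1 ∧ r2 = 2 ∧ r3 = 2) ∨
      (r0 = 1 ∧ r1 = 1 ∧ r2 = 1 ∧ r3 = 1) ∨ (r0 = 1 ∧ r1 = 1 ∧ r2 = 1 ∧ r3 = 2) := by
  have i4 : r0 ≤ 1 := by omega
  have i5 : r1 ≤ 1 := by omega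
  have i6 : r2 ≤ 2 := by omega
  have i7 : r3 ≤ 5 := by omega
  have i8 : 0 ≤ r1 := by omega
  have i9 : 0 ≤ r2 := by omega
  interval_cases r0 <;> interval_cases r1 <;> interval_cases r2 <;>
    first
    | (exfalso; omega)
    | (interval_cases r3 <;> first | (exfalso; omega) | decide)

set_option maxHeartbeats 2000000 in
lemma core_s14 (r0 r1 r2 r3 b0 b1 b2 b3 : ℤ) (h0 : 0 ≤ r0)
    (h01 : r0 < r1 ∨ (r0 = r1 ∧ b0 ≤ b1)) (h12 : r1 < r2 ∨ (r1 = r2 ∧ b1 ≤ b2))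
    (h23 : r2 < r3 ∨ (r2 = r3 ∧ b2 ≤ b3)) (hz0 : r0 = 0 → 0 ≤ b0) (hz1 : r1 = 0 → 0 ≤ b1)
    (hb : 0 ≤ b3) (hb' : b3 < r3) (hM : MinC ![r0, r1, r2, r3] ![b0, b1, b2, b3])
    (hP : PropC ![r0, r1, r2, r3] ![b0, b1, b2, b3]) :
    GoodC ![r0, r1, r2, r3] ![b0, b1, b2, b3] ∨ ExcC ![r0, r1, r2, r3] ![b0, b1, b2, b3] := by
  by_cases hG : GoodC ![r0, r1, r2, r3] ![b0, b1, b2, b3]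
  · exact Or.inl hG
  right
  have hr : ∀ i, 0 ≤ (![r0, r1, r2, r3] : Fin 4 → ℤ) i := by
    intro i; fin_cases i <;> simp <;> omega
  have hsum : ∑ i, (![r0, r1, r2, r3] : Fin 4 → ℤ) i = r0 + r1 + r2 + r3 := by
    simp [Fin.sum_univ_four]
  have hl1 := l1N_nonneg_eq _ hr
  have hl1' : l1N ![r0, r1, r2, r3] = r0 + r1 + r2 + r3 := hl1.trans hsum
  have hle : r0 + r1 + r2 + r3 ≤ 5 := by
    by_contra hlt
    apply hG
    rcases Int.emod_two_eq_zero_or_one (∑ i, (![r0, r1, r2, r3] : Fin 4 → ℤ) i) with h | h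
    · exact big_even _ _ hr hM (by rw [hl1']; omega) h
    · exact big_odd _ _ hr hM (by rw [hl1']; rw [hsum] at h; omega) h
  have hM0 : r0 + r1 + r2 + r3 ≤ |b0| + |b1| + |b2| + |b3| := by
    have := hM 0 1 (by simp)
    rw [hl1, hsum] at this
    simpa [l1N, Fin.sum_univ_four] using this
  have hP3 : ¬ (r0 = 0 ∧ r1 = 0 ∧ r2 = 0) := by
    rintro ⟨rfl, rfl, rfl⟩
    have := PropC.use hP 1 0 3 (by simp)
    simp at this
    omega
  have hnz : ¬ (b0 = 0 ∧ b1 = 0 ∧ b2 = 0 ∧ b3 = 0) := by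
    rintro ⟨rfl, rfl, rfl, rfl⟩
    simp at hM0
    omega
  have hev := even_case _ ![b0, b1, b2, b3] hr
  have hod := odd_case _ ![b0, b1, b2, b3] hr
  rw [hsum] at hev hod
  simp only [Matrix.cons_val] at hev hod
  clear hl1 hl1' hr hsum
  have hcases := hcases_aux r0 r1 r2 r3 h0 (by omega) (by omega) (by omega) hle hP3
  rcases hcases with h | h | h | h | h | h | h | h | h | h | h | h <;>
    obtain ⟨rfl, rfl, rfl, rfl⟩ := h
  · obtain ⟨hs, k, hk⟩ := hev (by norm_num) (by norm_num) hG
    exact (small_0011 b0 b1 b2 b3 k (by omega) (by omega) (by omega) (by omega) hb hb' hs hP hnz hk).elim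
  · obtain ⟨k, hk⟩ := hod (by norm_num) (by norm_num) hG
    rcases small_0012 b0 b1 b2 b3 k (by omega) (by omega) (by omega) hb hb' hP hnz hk with h | h <;>
      obtain ⟨rfl, rfl, rfl, rfl⟩ := h
    · exact exc_a
    · exact exc_b
  · obtain ⟨hs, k, hk⟩ := hev (by norm_num) (by norm_num) hG
    exact (small_0013 b0 b1 b2 b3 k (by omega) (by omega) (by omega) hb hb' hs hP (by simpa using hM0) hk).elim
  · obtain ⟨hs, k, hk⟩ := hev (by norm_num) (by norm_num) hG
    exact (small_0022 b0 b1 b2 b3 k (by omega) (by omega) (by omega) (by omega) hb hb' hs hP hnz hk).elim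
  · obtain ⟨k, hk⟩ := hod (by norm_num) (by norm_num) hG
    exact (small_0014 b0 b1 b2 b3 k (by omega) (by omega) (by omega) hb hb' hP hnz hk).elim
  · obtain ⟨k, hk⟩ := hod (by norm_num) (by norm_num) hG
    exact (small_0023 b0 b1 b2 b3 k (by omega) (by omega) (by omega) hb hb' hP (by simpa using hM0) hk).elim
  · obtain ⟨k, hk⟩ := hod (by norm_num) (by norm_num) hG
    rcases small_0111 b0 b1 b2 b3 k (by omega) (by omega) (by omega) hb hb' hP hnz hk with h | h | h <;>
      obtain ⟨rfl, rfl, rfl, rfl⟩ := h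
    · exact exc_c
    · exact exc_d
    · exact exc_e
  · obtain ⟨hs, k, hk⟩ := hev (by norm_num) (by norm_num) hG
    exact (small_0112 b0 b1 b2 b3 k (by omega) (by omega) hb hb' hs hP (by simpa using hM0) hk).elim
  · obtain ⟨k, hk⟩ := hod (by norm_num) (by norm_num) hG
    exact (small_0113 b0 b1 b2 b3 k (by omega) (by omega) hb hb' hP hnz hk).elim
  · obtain ⟨k, hk⟩ := hod (by norm_num) (by norm_num) hG
    exact (small_0122 b0 b1 b2 b3 k (by omega) (by omega) hb hb' hP hnz hk).elim
  · obtain ⟨hs, k, hk⟩ := hev (by norm_num) (by norm_num) hG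
    exact (small_1111 b0 b1 b2 b3 k (by omega) (by omega) (by omega) hb hb' hs hP hnz hk).elim
  · obtain ⟨k, hk⟩ := hod (by norm_num) (by norm_num) hG
    exact (small_1112 b0 b1 b2 b3 k (by omega) (by omega) hb hb' hP hnz hk).elim

/-! Invariance under signed permutations and shears. -/

def sp (π : Equiv.Perm (Fin 4)) (s : Fin 4 → ℤ) (r : Fin 4 → ℤ) : Fin 4 → ℤ := fun i => s i * r (π i)

lemma sign_sq {s : ℤ} (h : s = 1 ∨ s = -1) : s * s = 1 := by rcases h with rfl | rfl <;> rfl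
lemma sign_abs {s : ℤ} (h : s = 1 ∨ s = -1) (x : ℤ) : |s * x| = |x| := by
  rcases h with rfl | rfl <;> simp

lemma l1N_sp (π : Equiv.Perm (Fin 4)) (s : Fin 4 → ℤ) (hs : ∀ i, s i = 1 ∨ s i = -1)
    (r : Fin 4 → ℤ) : l1N (sp π s r) = l1N r := by
  simp only [l1N, sp, sign_abs (hs _)]
  exact Equiv.sum_comp π fun i => |r i|

lemma MinC_sp (π : Equiv.Perm (Fin 4)) (s : Fin 4 → ℤ) (hs : ∀ i, s i = 1 ∨ s i = -1)
    (r b : Fin 4 → ℤ) (h : MinC r b) : MinC (sp π s r) (sp π s b) := by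
  intro x y hxy
  have h1 := h x y hxy
  have h2 : (fun i => x * sp π s r i + y * sp π s b i) = sp π s (fun i => x * r i + y * b i) := by
    funext i; simp only [sp]; ring
  rw [h2, l1N_sp π s hs, l1N_sp π s hs]; exact h1

lemma PropC_sp (π : Equiv.Perm (Fin 4)) (s : Fin 4 → ℤ) (hs : ∀ i, s i = 1 ∨ s i = -1)
    (r b : Fin 4 → ℤ) (h : PropC r b) : PropC (sp π s r) (sp π s b) := by
  intro x y i hi
  have hfac : ∀ j, x * sp π s r j + y * sp π s b j = s j * (x * r (π j) + y * b (π j)) := by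
    intro j; simp only [sp]; ring
  have hsn : ∀ j, s j ≠ 0 := fun j => by rcases hs j with h | h <;> rw [h] <;> norm_num
  rw [hfac, h x y (π i) ?_, mul_zero]
  intro j hj
  have h1 := hi (π.symm j) (fun hc => hj (by rw [← hc]; simp))
  rw [hfac] at h1
  simpa [hsn] using h1

lemma dotR_sp (π : Equiv.Perm (Fin 4)) (s : Fin 4 → ℤ) (hs : ∀ i, s i = 1 ∨ s i = -1)
    (r : Fin 4 → ℤ) (x : Fin 4 → ℝ) : dotR (sp π s r) (fun i => s i * x (π i)) = dotR r x := by
  simp only [dotR, sp]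
  rw [← Equiv.sum_comp π fun i => (r i : ℝ) * x i]
  refine Finset.sum_congr rfl fun i _ => ?_
  have : (s i : ℝ) * s i = 1 := by exact_mod_cast sign_sq (hs i)
  push_cast
  linear_combination ((r (π i) : ℝ) * x (π i)) * this

lemma sum_sp (π : Equiv.Perm (Fin 4)) (s : Fin 4 → ℤ) (hs : ∀ i, s i = 1 ∨ s i = -1)
    (r : Fin 4 → ℤ) : ∃ k : ℤ, ∑ i, sp π s r i = ∑ i, r i + 2 * k := by
  refine ⟨∑ i, (if s i = 1 then 0 else - r (π i)), ?_⟩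
  rw [← Equiv.sum_comp π r, Finset.mul_sum, ← Finset.sum_add_distrib]
  refine Finset.sum_congr rfl fun i _ => ?_
  rcases hs i with h | h
  · simp [sp, h]
  · simp [sp, h]; ring

/-- Undo a signed permutation on a real vector. -/
lemma undo (π : Equiv.Perm (Fin 4)) (s : Fin 4 → ℤ) (hs : ∀ i, s i = 1 ∨ s i = -1)
    (e : Fin 4 → ℝ) : ∃ x : Fin 4 → ℝ, e = (fun i => s i * x (π i)) ∧ ∀ i, |x (π i)| = |e i| := by
  have hsq : ∀ i, (s i : ℝ) * s i = 1 := fun i => by exact_mod_cast sign_sq (hs i)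
  refine ⟨fun j => s (π.symm j) * e (π.symm j), ?_, ?_⟩
  · funext i
    simp only [Equiv.symm_apply_apply]
    rw [← mul_assoc, hsq, one_mul]
  · intro i
    simp only [Equiv.symm_apply_apply]
    rcases hs i with h | h <;> rw [h] <;> simp

lemma GoodC_sp (π : Equiv.Perm (Fin 4)) (s : Fin 4 → ℤ) (hs : ∀ i, s i = 1 ∨ s i = -1)
    (r b : Fin 4 → ℤ) (h : GoodC (sp π s r) (sp π s b)) : GoodC r b := by
  obtain ⟨e, he, ⟨k, hk⟩, l, hl⟩ := h
  obtain ⟨x, rfl, hx⟩ := undo π s hs e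
  obtain ⟨m, hm⟩ := sum_sp π s hs r
  obtain ⟨n, hn⟩ := sum_sp π s hs b
  rw [dotR_sp π s hs] at hk hl
  refine ⟨x, fun i => ?_, ⟨k + m, ?_⟩, l + n, ?_⟩
  · have h1 := hx (π.symm i)
    have h2 := he (π.symm i)
    rw [← h1] at h2
    simpa using h2
  · have : ∑ i, (sp π s r i : ℝ) = ∑ i, (r i : ℝ) + 2 * m := by exact_mod_cast hm
    rw [hk, this]; push_cast; ring
  · have : ∑ i, (sp π s b i : ℝ) = ∑ i, (b i : ℝ) + 2 * n := by exact_mod_cast hn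
    rw [hl, this]; push_cast; ring

lemma ExcC_sp (π : Equiv.Perm (Fin 4)) (s : Fin 4 → ℤ) (hs : ∀ i, s i = 1 ∨ s i = -1)
    (r b : Fin 4 → ℤ) (h : ExcC (sp π s r) (sp π s b)) : ExcC r b := by
  obtain ⟨ρ, u, hu, h⟩ := h
  refine ⟨ρ.trans π, fun i => u i * s (ρ i), fun i => ?_, ?_⟩
  · rcases hu i with h1 | h1 <;> rcases hs (ρ i) with h2 | h2 <;> simp [h1, h2]
  have e1 : ∀ x : Fin 4 → ℝ, (fun i => ((u i * s (ρ i) : ℤ) : ℝ) * x ((ρ.trans π) i)) =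
      fun i => (u i : ℝ) * (fun i => (s i : ℝ) * x (π i)) (ρ i) := by
    intro x; funext i; simp [mul_assoc]
  rcases h with h | h
  · left; intro x
    have := h (fun i => s i * x (π i))
    rw [dotR_sp π s hs, dotR_sp π s hs] at this
    rw [this, e1]
  · right; intro x
    have := h (fun i => s i * x (π i))
    rw [dotR_sp π s hs, dotR_sp π s hs] at this
    rw [this, e1]

def sh (k : ℤ) (r b : Fin 4 → ℤ) : Fin 4 → ℤ := fun i => b i + k * r i

lemma dotR_sh (k : ℤ) (r b : Fin 4 → ℤ) (x : Fin 4 → ℝ) :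
    dotR (sh k r b) x = dotR b x + k * dotR r x := by
  simp only [dotR, sh, Finset.mul_sum]
  rw [← Finset.sum_add_distrib]
  refine Finset.sum_congr rfl fun i _ => ?_
  push_cast; ring

lemma MinC_sh (k : ℤ) (r b : Fin 4 → ℤ) (h : MinC r b) : MinC r (sh k r b) := by
  intro x y hxy
  have h1 := h (x + y * k) y (by
    by_cases hy : y = 0
    · subst hy; simpa using hxy
    · exact Or.inr hy)
  refine h1.trans (le_of_eq ?_)
  congr 1; funext i; simp only [sh]; ring

lemma PropC_sh (k : ℤ) (r b : Fin 4 → ℤ) (h : PropC r b) : PropC r (sh k r b) := by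
  intro x y i hi
  have h1 := h (x + y * k) y i (fun j hj => by
    rw [← hi j hj]; simp only [sh]; ring)
  rw [← h1]; simp only [sh]; ring

lemma GoodC_sh (k : ℤ) (r b : Fin 4 → ℤ) (h : GoodC r (sh k r b)) : GoodC r b := by
  obtain ⟨e, he, ⟨m, hm⟩, n, hn⟩ := h
  refine ⟨e, he, ⟨m, hm⟩, n - k * m, ?_⟩
  rw [dotR_sh, hm] at hn
  have : ∑ i, (sh k r b i : ℝ) = ∑ i, (b i : ℝ) + k * ∑ i, (r i : ℝ) := by
    rw [Finset.mul_sum, ← Finset.sum_add_distrib]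
    refine Finset.sum_congr rfl fun i _ => ?_
    simp only [sh]; push_cast; ring
  rw [this] at hn
  push_cast
  linarith

lemma ExcC_sh (k : ℤ) (r b : Fin 4 → ℤ) (h : ExcC r (sh k r b)) : ExcC r b := by
  obtain ⟨ρ, u, hu, h⟩ := h
  refine ⟨ρ, u, hu, ?_⟩
  have e1 : ∀ x, (dotR r x = 0 ∧ dotR b x = 0) ↔ (dotR r x = 0 ∧ dotR (sh k r b) x = 0) := by
    intro x
    rw [dotR_sh]
    constructor
    · rintro ⟨h1, h2⟩; exact ⟨h1, by rw [h1, h2]; ring⟩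
    · rintro ⟨h1, h2⟩; rw [h1] at h2; exact ⟨h1, by linarith⟩
  rcases h with h | h
  · left; intro x; rw [e1, h]
  · right; intro x; rw [e1, h]

theorem main_rel (r b : Fin 4 → ℤ) (h0 : 0 < l1N r) (hM : MinC r b) (hP : PropC r b) :
    GoodC r b ∨ ExcC r b := by
  -- signs
  let s : Fin 4 → ℤ := fun i => if r i < 0 ∨ (r i = 0 ∧ b i < 0) then -1 else 1
  have hs : ∀ i, s i = 1 ∨ s i = -1 := by
    intro i; simp only [s]; split_ifs <;> simp
  suffices GoodC (sp 1 s r) (sp 1 s b) ∨ ExcC (sp 1 s r) (sp 1 s b) from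
    this.imp (GoodC_sp 1 s hs r b) (ExcC_sp 1 s hs r b)
  have hr1 : ∀ i, 0 ≤ sp 1 s r i := by
    intro i; simp only [sp, s, Equiv.Perm.one_apply]; split_ifs <;> omega
  have hb1 : ∀ i, sp 1 s r i = 0 → 0 ≤ sp 1 s b i := by
    intro i; simp only [sp, s, Equiv.Perm.one_apply]; split_ifs <;> omega
  replace hM := MinC_sp 1 s hs r b hM
  replace hP := PropC_sp 1 s hs r b hP
  rw [← l1N_sp 1 s hs r] at h0
  generalize sp 1 s r = r at *
  generalize sp 1 s b = b at *
  clear hs s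
  -- sorting
  let F : Fin 4 → ℤ ×ₗ ℤ := fun i => toLex (r i, b i)
  let π := Tuple.sort F
  have hmono : Monotone (F ∘ π) := Tuple.monotone_sort F
  have hone : ∀ i : Fin 4, (fun _ => 1 : Fin 4 → ℤ) i = 1 ∨ (fun _ => 1 : Fin 4 → ℤ) i = -1 :=
    fun _ => Or.inl rfl
  suffices GoodC (sp π (fun _ => 1) r) (sp π (fun _ => 1) b) ∨
      ExcC (sp π (fun _ => 1) r) (sp π (fun _ => 1) b) from
    this.imp (GoodC_sp π _ hone r b) (ExcC_sp π _ hone r b)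
  have hsort : ∀ i j, i ≤ j → sp π (fun _ => 1) r i < sp π (fun _ => 1) r j ∨
      (sp π (fun _ => 1) r i = sp π (fun _ => 1) r j ∧
        sp π (fun _ => 1) b i ≤ sp π (fun _ => 1) b j) := by
    intro i j hij
    have := hmono hij
    simp only [Function.comp, F] at this
    rw [Prod.Lex.toLex_le_toLex] at this
    simpa [sp] using this
  have hr2 : ∀ i, 0 ≤ sp π (fun _ => 1) r i := by
    intro i; simpa [sp] using hr1 (π i)
  have hb2 : ∀ i, sp π (fun _ => 1) r i = 0 → 0 ≤ sp π (fun _ => 1) b i := by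
    intro i; simpa [sp] using hb1 (π i)
  replace hM := MinC_sp π _ hone r b hM
  replace hP := PropC_sp π _ hone r b hP
  rw [← l1N_sp π _ hone r] at h0
  clear hr1 hb1 hmono
  generalize sp π (fun _ => 1) r = r at *
  generalize sp π (fun _ => 1) b = b at *
  clear F π
  -- shear
  have s01 := hsort 0 1 (by decide)
  have s12 := hsort 1 2 (by decide)
  have s23 := hsort 2 3 (by decide)
  have hr3 : 0 < r 3 := by
    rw [l1N_nonneg_eq r hr2, Fin.sum_univ_four] at h0
    have := hr2 0
    omega
  set k := -(b 3 / r 3) with hk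
  suffices GoodC r (sh k r b) ∨ ExcC r (sh k r b) from
    this.imp (GoodC_sh k r b) (ExcC_sh k r b)
  have hM' := MinC_sh k r b hM
  have hP' := PropC_sh k r b hP
  have hb3 : sh k r b 3 = b 3 % r 3 := by
    have := Int.emod_add_mul_ediv (b 3) (r 3)
    simp only [sh, hk]; linarith
  have er : r = ![r 0, r 1, r 2, r 3] := by
    funext i; fin_cases i <;> rfl
  have eb : sh k r b = ![sh k r b 0, sh k r b 1, sh k r b 2, sh k r b 3] := by
    funext i; fin_cases i <;> rfl
  have step : ∀ i j, (r i < r j ∨ (r i = r j ∧ b i ≤ b j)) →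
      (r i < r j ∨ (r i = r j ∧ sh k r b i ≤ sh k r b j)) := by
    intro i j h
    refine h.imp id ?_
    rintro ⟨h1, h2⟩
    refine ⟨h1, ?_⟩
    simp only [sh, h1]; linarith
  have hz : ∀ i, r i = 0 → 0 ≤ sh k r b i := by
    intro i hi
    have := hb2 i hi
    simp only [sh, hi]; linarith
  have t01 := step 0 1 s01
  have t12 := step 1 2 s12
  have t23 := step 2 3 s23
  have z0 := hz 0
  have z1 := hz 1
  have c1 : 0 ≤ sh k r b 3 := by rw [hb3]; exact Int.emod_nonneg _ hr3.ne'
  have c2 : sh k r b 3 < r 3 := by rw [hb3]; exact Int.emod_lt_of_pos _ hr3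
  have q0 := hr2 0
  generalize sh k r b = c at *
  rw [eb] at hM' hP' ⊢
  rw [er] at hM' hP' ⊢
  exact core_s14 _ _ _ _ _ _ _ _ q0 t01 t12 t23 z0 z1 c1 c2 hM' hP'


lemma dotR_int (r n : Fin 4 → ℤ) : dotR r (fun i => (n i : ℝ)) = ((∑ i, r i * n i : ℤ) : ℝ) := by
  simp [dotR]

lemma lattice (v : Fin 2 → Fin 4 → ℤ)
    (hv : LinearIndependent ℝ (fun j : Fin 2 => fun i : Fin 4 => (v j i : ℝ))) :
    ∃ r b : Fin 4 → ℤ,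
      (∀ x : Fin 4 → ℝ, (∃ t : Fin 2 → ℝ, x = fun i => ∑ j, t j * (v j i : ℝ)) ↔
        (dotR r x = 0 ∧ dotR b x = 0)) ∧
      (∀ m1 m2 : ℤ, ∃ n : Fin 4 → ℤ, ∑ i, r i * n i = m1 ∧ ∑ i, b i * n i = m2) := by
  classical
  have hvZ : LinearIndependent ℤ v := by
    rw [Fintype.linearIndependent_iff] at hv ⊢
    intro g hg i
    have := hv (fun j => (g j : ℝ)) (by
      funext k
      have h1 := congrFun hg k
      simp only [Finset.sum_apply, Pi.smul_apply, smul_eq_mul, Pi.zero_apply] at h1 ⊢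
      exact_mod_cast h1) i
    exact_mod_cast this
  let N : Submodule ℤ (Fin 4 → ℤ) := Submodule.span ℤ (Set.range v)
  obtain ⟨n, S⟩ := Submodule.smithNormalForm (Pi.basisFun ℤ (Fin 4)) N
  have hn : n = 2 := by
    have h1 := finrank_span_eq_card hvZ
    have h2 := Module.finrank_eq_card_basis S.bN
    simp only [Fintype.card_fin] at h1 h2
    rw [← h2]; exact h1
  subst hn
  have hpq : ∃ p q : Fin 4, p ≠ q ∧ p ∉ Set.range S.f ∧ q ∉ Set.range S.f := by
    have hc : (Finset.univ \ Finset.univ.map S.f : Finset (Fin 4)).card = 2 := by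
      rw [Finset.card_sdiff_of_subset (Finset.subset_univ _)]
      simp
    obtain ⟨p, q, hne, he⟩ := Finset.card_eq_two.mp hc
    refine ⟨p, q, hne, ?_, ?_⟩
    · have : p ∈ (Finset.univ \ Finset.univ.map S.f : Finset (Fin 4)) := by rw [he]; simp
      simpa using this
    · have : q ∈ (Finset.univ \ Finset.univ.map S.f : Finset (Fin 4)) := by rw [he]; simp
      simpa using this
  obtain ⟨p, q, hne, hp, hq⟩ := hpq
  let c : Fin 4 → Fin 4 → ℤ := fun p j => S.bM.coord p (Pi.single j 1)
  have hc : ∀ p n, ∑ i, c p i * n i = S.bM.coord p n := by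
    intro p n
    conv_rhs => rw [← Finset.univ_sum_single n]
    rw [map_sum]
    refine Finset.sum_congr rfl fun i _ => ?_
    have : (Pi.single i (n i) : Fin 4 → ℤ) = n i • Pi.single i 1 := by
      rw [← Pi.single_smul]; simp
    rw [this, map_smul, smul_eq_mul, mul_comm]
  have hii : ∀ m1 m2 : ℤ, ∃ n : Fin 4 → ℤ, ∑ i, c p i * n i = m1 ∧ ∑ i, c q i * n i = m2 := by
    intro m1 m2
    refine ⟨m1 • S.bM p + m2 • S.bM q, ?_, ?_⟩
    · rw [hc, map_add, map_smul, map_smul]; simp [Finsupp.single_apply, hne.symm]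
    · rw [hc, map_add, map_smul, map_smul]; simp [Finsupp.single_apply, hne]
  have hzero : ∀ p, p ∉ Set.range S.f → ∀ j, dotR (c p) (fun i => (v j i : ℝ)) = 0 := by
    intro p hp j
    rw [dotR_int, hc]
    have := S.repr_eq_zero_of_notMem_range ⟨v j, Submodule.subset_span ⟨j, rfl⟩⟩ hp
    exact_mod_cast this
  refine ⟨c p, c q, ?_, hii⟩
  let V : Submodule ℝ (Fin 4 → ℝ) := Submodule.span ℝ (Set.range (fun j : Fin 2 => fun i : Fin 4 => (v j i : ℝ)))
  let T : (Fin 4 → ℝ) →ₗ[ℝ] ℝ × ℝ := (dotL (c p)).prod (dotL (c q))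
  have hT : ∀ e, T e = (dotR (c p) e, dotR (c q) e) := fun e => rfl
  have hle : V ≤ LinearMap.ker T := by
    refine Submodule.span_le.mpr ?_
    rintro _ ⟨j, rfl⟩
    show T _ = 0
    rw [hT, hzero p hp, hzero q hq]; rfl
  have hsurj : Function.Surjective T := by
    rintro ⟨α, β⟩
    obtain ⟨n1, h1, h2⟩ := hii 1 0
    obtain ⟨n2, h3, h4⟩ := hii 0 1
    refine ⟨α • (fun i => (n1 i : ℝ)) + β • (fun i => (n2 i : ℝ)), ?_⟩
    rw [hT, dotR_add, dotR_add, dotR_smul, dotR_smul, dotR_smul, dotR_smul, dotR_int, dotR_int,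
      dotR_int, dotR_int, h1, h2, h3, h4]
    simp
  have hdim : Module.finrank ℝ V = Module.finrank ℝ (LinearMap.ker T) := by
    have h1 := finrank_span_eq_card hv
    have h2 := LinearMap.finrank_range_add_finrank_ker T
    rw [LinearMap.range_eq_top.mpr hsurj, finrank_top] at h2
    simp at h1 h2
    show Module.finrank ℝ (Submodule.span ℝ _) = _
    rw [h1]; omega
  have heq := Submodule.eq_of_le_of_finrank_eq hle hdim
  intro x
  have h1 : (∃ t : Fin 2 → ℝ, x = fun i => ∑ j, t j * (v j i : ℝ)) ↔ x ∈ V := by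
    rw [Submodule.mem_span_range_iff_exists_fun]
    refine exists_congr fun t => ?_
    have : (∑ j, t j • fun i => (v j i : ℝ)) = fun i => ∑ j, t j * (v j i : ℝ) := by
      funext i; simp
    rw [this, eq_comm]
  rw [h1, heq, LinearMap.mem_ker, hT]
  simp

lemma dotR_comb (x y : ℤ) (r b : Fin 4 → ℤ) (e : Fin 4 → ℝ) :
    dotR (fun i => x * r i + y * b i) e = x * dotR r e + y * dotR b e := by
  simp only [dotR, Finset.mul_sum]
  rw [← Finset.sum_add_distrib]
  refine Finset.sum_congr rfl fun i _ => ?_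
  push_cast; ring

lemma sum_comb (x y : ℤ) (r b n : Fin 4 → ℤ) :
    ∑ i, (x * r i + y * b i) * n i = x * ∑ i, r i * n i + y * ∑ i, b i * n i := by
  simp only [Finset.mul_sum]
  rw [← Finset.sum_add_distrib]
  refine Finset.sum_congr rfl fun i _ => ?_
  ring

lemma l1N_nonneg (r : Fin 4 → ℤ) : 0 ≤ l1N r := Finset.sum_nonneg fun i _ => abs_nonneg _

lemma reduce (r0 b0 : Fin 4 → ℤ)
    (hii : ∀ m1 m2 : ℤ, ∃ n : Fin 4 → ℤ, ∑ i, r0 i * n i = m1 ∧ ∑ i, b0 i * n i = m2) :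
    ∃ r b : Fin 4 → ℤ,
      (∀ x : Fin 4 → ℝ, (dotR r0 x = 0 ∧ dotR b0 x = 0) ↔ (dotR r x = 0 ∧ dotR b x = 0)) ∧
      (∀ m1 m2 : ℤ, ∃ n : Fin 4 → ℤ, ∑ i, r i * n i = m1 ∧ ∑ i, b i * n i = m2) ∧
      MinC r b ∧ 0 < l1N r := by
  classical
  have hex : ∃ k : ℕ, ∃ x y : ℤ, (x ≠ 0 ∨ y ≠ 0) ∧ l1N (fun i => x * r0 i + y * b0 i) = k := by
    refine ⟨(l1N (fun i => 1 * r0 i + 0 * b0 i)).toNat, 1, 0, by simp, ?_⟩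
    rw [Int.toNat_of_nonneg (l1N_nonneg _)]
  obtain ⟨x, y, hxy, hk⟩ := Nat.find_spec hex
  have hmin : ∀ X Y : ℤ, (X ≠ 0 ∨ Y ≠ 0) →
      l1N (fun i => x * r0 i + y * b0 i) ≤ l1N (fun i => X * r0 i + Y * b0 i) := by
    intro X Y h
    rw [hk]
    have := Nat.find_min' hex (m := (l1N (fun i => X * r0 i + Y * b0 i)).toNat) ⟨X, Y, h, by
      rw [Int.toNat_of_nonneg (l1N_nonneg _)]⟩
    have h2 := Int.toNat_of_nonneg (l1N_nonneg (fun i => X * r0 i + Y * b0 i))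
    omega
  have hgpos : 0 < Int.gcd x y := by
    rw [Int.gcd_pos_iff]; exact hxy
  obtain ⟨x', y', hcop, hx, hy⟩ := Int.exists_gcd_one hgpos
  set g : ℤ := (Int.gcd x y : ℤ) with hg
  have hg1 : 1 ≤ g := by omega
  obtain ⟨a, d, had⟩ := Int.isCoprime_iff_gcd_eq_one.mpr hcop
  have hle : l1N (fun i => x' * r0 i + y' * b0 i) ≤ l1N (fun i => x * r0 i + y * b0 i) := by
    refine Finset.sum_le_sum fun i _ => ?_
    have : x * r0 i + y * b0 i = g * (x' * r0 i + y' * b0 i) := by rw [hx, hy]; ring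
    simp only [this, abs_mul]
    rw [abs_of_pos (by omega : 0 < g)]
    exact le_mul_of_one_le_left (abs_nonneg _) hg1
  have hadR : (a : ℝ) * x' + d * y' = 1 := by exact_mod_cast had
  have hiiN : ∀ m1 m2 : ℤ, ∃ n : Fin 4 → ℤ, ∑ i, (x' * r0 i + y' * b0 i) * n i = m1 ∧
      ∑ i, ((-d) * r0 i + a * b0 i) * n i = m2 := by
    intro m1 m2
    obtain ⟨n, h1, h2⟩ := hii (a * m1 - y' * m2) (d * m1 + x' * m2)
    refine ⟨n, ?_, ?_⟩
    · rw [sum_comb, h1, h2]; linear_combination m1 * had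
    · rw [sum_comb, h1, h2]; linear_combination m2 * had
  refine ⟨fun i => x' * r0 i + y' * b0 i, fun i => (-d) * r0 i + a * b0 i, ?_, hiiN, ?_, ?_⟩
  · intro e
    rw [dotR_comb, dotR_comb]
    constructor
    · rintro ⟨h1, h2⟩; rw [h1, h2]; simp
    · rintro ⟨h1, h2⟩
      push_cast at h2
      constructor
      · linear_combination (-dotR r0 e) * hadR + a * h1 - y' * h2
      · linear_combination (-dotR b0 e) * hadR + d * h1 + x' * h2
  · intro X Y hXY
    refine hle.trans ((hmin (X * x' - Y * d) (X * y' + Y * a) ?_).trans (le_of_eq ?_))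
    · by_contra hcon
      push Not at hcon
      obtain ⟨h1, h2⟩ := hcon
      have e1 : X = 0 := by linear_combination (-X) * had + a * h1 + d * h2
      have e2 : Y = 0 := by linear_combination (-Y) * had - y' * h1 + x' * h2
      exact hXY.elim (· e1) (· e2)
    · congr 1; funext i; ring
  · by_contra hcon
    have h0 : l1N (fun i => x' * r0 i + y' * b0 i) = 0 := le_antisymm (not_lt.mp hcon) (l1N_nonneg _)
    obtain ⟨n, h1, -⟩ := hiiN 1 0
    have hz : ∀ i, x' * r0 i + y' * b0 i = 0 := by
      intro i
      have := (Finset.sum_eq_zero_iff_of_nonneg (fun i _ => abs_nonneg _)).mp h0 i (Finset.mem_univ i)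
      exact abs_eq_zero.mp this
    simp [hz] at h1

lemma dist_le_aux (a : ℝ) (n : ℤ) :
    dist (a : AddCircle (1 : ℝ)) ((1 / 2 : ℝ) : AddCircle (1 : ℝ)) ≤ |a - 1 / 2 - n| := by
  rw [dist_eq_norm, ← AddCircle.coe_sub, UnitAddCircle.norm_eq]
  exact round_le _ _

lemma dist_lt_aux (a : ℝ)
    (h : dist (a : AddCircle (1 : ℝ)) ((1 / 2 : ℝ) : AddCircle (1 : ℝ)) < 1 / 4) :
    ∃ n : ℤ, |a - 1 / 2 - n| < 1 / 4 := by
  rw [dist_eq_norm, ← AddCircle.coe_sub, UnitAddCircle.norm_eq] at h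
  exact ⟨_, h⟩

lemma bdd_aux (S : Set (Torus 4)) : BddBelow
    ((fun x : Torus 4 => ⨆ i, dist (x i) ((1 / 2 : ℝ) : AddCircle (1 : ℝ))) '' S) := by
  refine ⟨0, ?_⟩
  rintro _ ⟨x, -, rfl⟩
  exact Real.iSup_nonneg fun i => dist_nonneg

lemma DVal_lt (S : Set (Torus 4)) (x : Fin 4 → ℝ) (hx : torusProj x ∈ S) (n : Fin 4 → ℤ)
    (h : ∀ i, |x i - 1 / 2 - n i| < 1 / 4) : DVal S < 1 / 4 := by
  refine lt_of_le_of_lt (csInf_le (bdd_aux S) ⟨_, hx, rfl⟩) ?_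
  obtain ⟨i, hi⟩ := exists_eq_ciSup_of_finite
    (f := fun i => dist (torusProj x i) ((1 / 2 : ℝ) : AddCircle (1 : ℝ)))
  simp only []
  rw [← hi]
  exact lt_of_le_of_lt (dist_le_aux (x i) (n i)) (h i)

lemma DVal_eq (S : Set (Torus 4)) (x : Fin 4 → ℝ) (hx : torusProj x ∈ S)
    (h : ∀ i, |x i - 1 / 2| ≤ 1 / 4)
    (hlow : ∀ p ∈ S, ∃ y : Fin 4 → ℝ, p = torusProj y ∧
      ∀ n : Fin 4 → ℤ, ¬ ∀ i, |y i - 1 / 2 - n i| < 1 / 4) : DVal S = 1 / 4 := by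
  apply le_antisymm
  · refine (csInf_le (bdd_aux S) ⟨_, hx, rfl⟩).trans (ciSup_le fun i => ?_)
    refine (dist_le_aux (x i) 0).trans ?_
    simpa using h i
  · refine le_csInf ⟨_, _, hx, rfl⟩ ?_
    rintro _ ⟨p, hp, rfl⟩
    obtain ⟨y, rfl, hy⟩ := hlow p hp
    by_contra hcon
    push Not at hcon
    have : ∀ i, ∃ n : ℤ, |y i - 1 / 2 - n| < 1 / 4 := by
      intro i
      refine dist_lt_aux (y i) (lt_of_le_of_lt ?_ hcon)
      exact le_ciSup (f := fun i => dist (torusProj y i) ((1 / 2 : ℝ) : AddCircle (1 : ℝ)))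
        (Set.finite_range _).bddAbove i
    choose n hn using this
    exact hy n hn

lemma U1_eq : U1 = torusProj '' {y | R1 y} := by
  ext p
  constructor
  · rintro ⟨t, rfl⟩
    refine ⟨_, ?_, rfl⟩
    simp [R1, Fin.sum_univ_two]
    constructor <;> ring
  · rintro ⟨y, ⟨h1, h2⟩, rfl⟩
    refine ⟨![y 1, y 0], ?_⟩
    congr 1
    funext i
    fin_cases i <;> simp [Fin.sum_univ_two, h1, h2] <;> ring

lemma U2_eq : U2 = torusProj '' {y | R2 y} := by
  ext p
  constructor
  · rintro ⟨t, rfl⟩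
    refine ⟨_, ?_, rfl⟩
    simp [R2, Fin.sum_univ_two]
    constructor <;> ring
  · rintro ⟨y, ⟨h1, h2⟩, rfl⟩
    refine ⟨![y 2, y 1], ?_⟩
    congr 1
    funext i
    fin_cases i <;> simp [Fin.sum_univ_two, h1, h2] <;> ring

lemma half_aux (z : ℤ) (a : ℝ) (ha : |a| < 1) (h : a = z + 1 / 2) : z = 0 ∨ z = -1 := by
  rw [abs_lt] at ha
  have h1 : (z : ℝ) < 1 := by linarith
  have h2 : (-2 : ℝ) < z := by linarith
  have h3 : z < 1 := by exact_mod_cast h1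
  have h4 : -2 < z := by exact_mod_cast h2
  omega

lemma U1_facts : IsSubtorus 2 U1 ∧ IsProperSub U1 ∧ DVal U1 = 1 / 4 := by
  refine ⟨⟨_, ?_, rfl⟩, ?_, ?_⟩
  · rw [Fintype.linearIndependent_iff]
    intro g hg
    have h0 := congrFun hg 0
    have h1 := congrFun hg 1
    simp [Fin.sum_univ_two] at h0 h1
    intro i
    fin_cases i <;> simp [h0, h1]
  · intro hsub
    have hmem : torusProj ![1 / 2, 1 / 4, 1 / 2, 3 / 4] ∈ U1 := by
      rw [U1_eq]
      refine ⟨_, ?_, rfl⟩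
      constructor <;> simp [Matrix.cons_val] <;> norm_num
    have := hsub hmem
    rw [Set.mem_iUnion] at this
    obtain ⟨i, hi⟩ := this
    have hi' : ((![1 / 2, 1 / 4, 1 / 2, 3 / 4] : Fin 4 → ℝ) i : AddCircle (1 : ℝ)) = 0 := hi
    rw [AddCircle.coe_eq_zero_iff] at hi'
    obtain ⟨n, hn⟩ := hi'
    simp only [zsmul_eq_mul, mul_one] at hn
    have a1 : (0 : ℝ) < n ∧ (n : ℝ) < 1 := by
      rw [hn]; fin_cases i <;> norm_num
    have a2 : 0 < n := by exact_mod_cast a1.1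
    have a3 : n < 1 := by exact_mod_cast a1.2
    omega
  · refine DVal_eq U1 ![1 / 2, 1 / 4, 1 / 2, 3 / 4] ?_ ?_ ?_
    · rw [U1_eq]
      refine ⟨_, ?_, rfl⟩
      constructor <;> simp [Matrix.cons_val] <;> norm_num
    · intro i; fin_cases i <;> norm_num [abs_le]
    · intro p hp
      rw [U1_eq] at hp
      obtain ⟨y, ⟨h1, h2⟩, rfl⟩ := hp
      refine ⟨y, rfl, fun n hn => ?_⟩
      have c1 := abs_lt.mp (hn 1)
      have c2 := abs_lt.mp (hn 2)
      have c3 := abs_lt.mp (hn 3)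
      have k1 := half_aux (n 2 - 2 * n 1 - 1) (2 * (y 1 - 1 / 2 - n 1) - (y 2 - 1 / 2 - n 2))
        (abs_lt.mpr ⟨by linarith, by linarith⟩) (by push_cast; linarith)
      have k2 := half_aux (n 3 - n 1 - n 2 - 1)
        ((y 1 - 1 / 2 - n 1) + (y 2 - 1 / 2 - n 2) - (y 3 - 1 / 2 - n 3))
        (abs_lt.mpr ⟨by linarith, by linarith⟩) (by push_cast; linarith)
      rcases k1 with k1 | k1 <;> rcases k2 with k2 | k2 <;>
        (have k1' := congrArg (fun z : ℤ => (z : ℝ)) k1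
         have k2' := congrArg (fun z : ℤ => (z : ℝ)) k2
         push_cast at k1' k2'
         linarith)

lemma U2_facts : IsSubtorus 2 U2 ∧ IsProperSub U2 ∧ DVal U2 = 1 / 4 := by
  refine ⟨⟨_, ?_, rfl⟩, ?_, ?_⟩
  · rw [Fintype.linearIndependent_iff]
    intro g hg
    have h0 := congrFun hg 2
    have h1 := congrFun hg 1
    simp [Fin.sum_univ_two] at h0 h1
    intro i
    fin_cases i <;> simp [h0, h1]
  · intro hsub
    have hmem : torusProj ![1 / 2, 1 / 4, 1 / 4, 3 / 4] ∈ U2 := by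
      rw [U2_eq]
      refine ⟨_, ?_, rfl⟩
      constructor <;> simp [Matrix.cons_val] <;> norm_num
    have := hsub hmem
    rw [Set.mem_iUnion] at this
    obtain ⟨i, hi⟩ := this
    have hi' : ((![1 / 2, 1 / 4, 1 / 4, 3 / 4] : Fin 4 → ℝ) i : AddCircle (1 : ℝ)) = 0 := hi
    rw [AddCircle.coe_eq_zero_iff] at hi'
    obtain ⟨n, hn⟩ := hi'
    simp only [zsmul_eq_mul, mul_one] at hn
    have a1 : (0 : ℝ) < n ∧ (n : ℝ) < 1 := by
      rw [hn]; fin_cases i <;> norm_num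
    have a2 : 0 < n := by exact_mod_cast a1.1
    have a3 : n < 1 := by exact_mod_cast a1.2
    omega
  · refine DVal_eq U2 ![1 / 2, 1 / 4, 1 / 4, 3 / 4] ?_ ?_ ?_
    · rw [U2_eq]
      refine ⟨_, ?_, rfl⟩
      constructor <;> simp [Matrix.cons_val] <;> norm_num
    · intro i; fin_cases i <;> norm_num [abs_le]
    · intro p hp
      rw [U2_eq] at hp
      obtain ⟨y, ⟨h1, h2⟩, rfl⟩ := hp
      refine ⟨y, rfl, fun n hn => ?_⟩
      have c0 := abs_lt.mp (hn 0)
      have c1 := abs_lt.mp (hn 1)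
      have c2 := abs_lt.mp (hn 2)
      have c3 := abs_lt.mp (hn 3)
      have k1 := half_aux (n 1 + n 2 - n 0)
        ((y 0 - 1 / 2 - n 0) - (y 1 - 1 / 2 - n 1) - (y 2 - 1 / 2 - n 2))
        (abs_lt.mpr ⟨by linarith, by linarith⟩) (by push_cast; linarith)
      have k2 := half_aux (n 0 + n 1 - n 3)
        ((y 3 - 1 / 2 - n 3) - (y 0 - 1 / 2 - n 0) - (y 1 - 1 / 2 - n 1))
        (abs_lt.mpr ⟨by linarith, by linarith⟩) (by push_cast; linarith)
      rcases k1 with k1 | k1 <;> rcases k2 with k2 | k2 <;>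
        (have k1' := congrArg (fun z : ℤ => (z : ℝ)) k1
         have k2' := congrArg (fun z : ℤ => (z : ℝ)) k2
         push_cast at k1' k2'
         linarith)

lemma signed_image (P R : (Fin 4 → ℝ) → Prop) (π : Equiv.Perm (Fin 4)) (s : Fin 4 → ℤ)
    (hs : ∀ i, s i = 1 ∨ s i = -1) (h : ∀ x, P x ↔ R (fun i => s i * x (π i))) :
    signedPerm π (fun i => decide (s i = -1)) '' (torusProj '' {x | P x}) =
      torusProj '' {y | R y} := by
  have key : ∀ x : Fin 4 → ℝ, signedPerm π (fun i => decide (s i = -1)) (torusProj x) =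
      torusProj (fun i => s i * x (π i)) := by
    intro x
    funext i
    rcases hs i with h1 | h1
    · simp [signedPerm, torusProj, h1]
    · simp [signedPerm, torusProj, h1]
  ext p
  constructor
  · rintro ⟨_, ⟨x, hx, rfl⟩, rfl⟩
    exact ⟨_, (h x).mp hx, (key x).symm⟩
  · rintro ⟨y, hy, rfl⟩
    obtain ⟨x, rfl, -⟩ := undo π s hs y
    exact ⟨_, ⟨x, (h x).mpr hy, rfl⟩, key x⟩

/-- Classification of the 2-dimensional proper subtori `U ⊆ (ℝ/ℤ)⁴` with `D(U) = 1/4`. -/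
theorem stmt14 (U : Set (Torus 4)) (hU : IsSubtorus 2 U) (hUproper : IsProperSub U)
    (hD : DVal U = 1/4) :
    (∃ (π : Equiv.Perm (Fin 4)) (ε : Fin 4 → Bool),
      signedPerm π ε '' U = U1 ∨ signedPerm π ε '' U = U2) ∧
    (IsSubtorus 2 U1 ∧ IsProperSub U1 ∧ DVal U1 = 1/4) ∧
    (IsSubtorus 2 U2 ∧ IsProperSub U2 ∧ DVal U2 = 1/4) := by
  refine ⟨?_, U1_facts, U2_facts⟩
  obtain ⟨v, hv, hUv⟩ := hU
  obtain ⟨r0, b0, hi, hii⟩ := lattice v hv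
  obtain ⟨r, b, hi2, hii2, hM, hpos⟩ := reduce r0 b0 hii
  have hUeq : U = torusProj '' {x | dotR r x = 0 ∧ dotR b x = 0} := by
    rw [hUv]
    ext p
    constructor
    · rintro ⟨t, rfl⟩
      exact ⟨_, (hi2 _).mp ((hi _).mp ⟨t, rfl⟩), rfl⟩
    · rintro ⟨x, hx, rfl⟩
      obtain ⟨t, ht⟩ := (hi x).mpr ((hi2 x).mpr hx)
      exact ⟨t, by rw [← ht]⟩
  have hP : PropC r b := by
    intro x y i hij
    by_contra hne
    apply hUproper
    rw [hUeq]
    rintro _ ⟨z, ⟨h1, h2⟩, rfl⟩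
    rw [Set.mem_iUnion]
    refine ⟨i, ?_⟩
    have h3 := dotR_comb x y r b z
    rw [h1, h2] at h3
    simp only [dotR] at h3
    rw [Finset.sum_eq_single i (fun j _ hj => by rw [hij j hj]; simp) (by simp)] at h3
    simp only [mul_zero, add_zero] at h3
    have hz : z i = 0 := (mul_eq_zero.mp h3).resolve_left (by exact_mod_cast hne)
    show ((z i : ℝ) : AddCircle (1 : ℝ)) = 0
    rw [hz]; simp
  rcases main_rel r b hpos hM hP with hG | hE
  · exfalso
    obtain ⟨e, he, ⟨k, hk⟩, l, hl⟩ := hG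
    obtain ⟨n, hn1, hn2⟩ := hii2 (k + ∑ i, r i) (l + ∑ i, b i)
    have hdot : ∀ (c : Fin 4 → ℤ) (m : ℤ), dotR c e = 4 * m + 2 * ∑ i, (c i : ℝ) →
        ∑ i, c i * n i = m + ∑ i, c i → dotR c (fun i => 1 / 2 + e i / 4 - n i) = 0 := by
      intro c m h1 h2
      have h2' : ∑ i, (c i : ℝ) * n i = m + ∑ i, (c i : ℝ) := by exact_mod_cast h2
      simp only [dotR, Fin.sum_univ_four] at h1 h2' ⊢
      linarith
    have := DVal_lt U (fun i => 1 / 2 + e i / 4 - n i)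
      (by rw [hUeq]; exact ⟨_, ⟨hdot r k hk hn1, hdot b l hl hn2⟩, rfl⟩) (fun i => - n i) (fun i => by
        have h1 := abs_lt.mp (he i)
        push_cast
        rw [abs_lt]
        constructor <;> linarith)
    linarith
  · obtain ⟨π, s, hs, h⟩ := hE
    refine ⟨π, fun i => decide (s i = -1), ?_⟩
    rw [hUeq, U1_eq, U2_eq]
    rcases h with h | h
    · exact Or.inl (signed_image _ _ π s hs h)
    · exact Or.inr (signed_image _ _ π s hs h)
end
end

section
/- Let U¹ := ⟨(0,1,2,3),(1,0,0,0)⟩_ℝ ⊆ (ℝ/ℤ)⁴. Then the set 𝒮₁(U¹) has finite symmetric difference with the set { 1/4 + 1/(4(4s + 5)) : s ∈ ℤ, s ≥ 0 }. -/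
noncomputable section

def okR (r x : ℝ) : Prop := ∃ n : ℤ, |x - n - 1/2| ≤ r

lemma ok_iff (r x : ℝ) :
    dist (x : AddCircle (1 : ℝ)) ((1 / 2 : ℝ) : AddCircle (1 : ℝ)) ≤ r ↔ okR r x := by
  rw [dist_eq_norm, ← AddCircle.coe_sub, UnitAddCircle.norm_eq]
  constructor
  · intro h
    refine ⟨round (x - 1/2), ?_⟩
    rw [show x - (round (x - 1/2) : ℝ) - 1/2 = x - 1/2 - round (x - 1/2) by ring]
    exact h
  · rintro ⟨n, hn⟩
    refine (round_le (x - 1/2) n).trans ?_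
    rw [show x - 1/2 - (n : ℝ) = x - n - 1/2 by ring]
    exact hn

lemma ok_neg (r x : ℝ) (h : okR r x) : okR r (-x) := by
  obtain ⟨n, hn⟩ := h
  refine ⟨-n - 1, ?_⟩
  rw [← abs_neg]
  push_cast
  rw [show -(-x - (-(n:ℝ) - 1) - 1/2) = x - n - 1/2 by ring]
  exact hn

lemma ok_neg_iff (r x : ℝ) : okR r (-x) ↔ okR r x :=
  ⟨fun h => by simpa using ok_neg r (-x) h, ok_neg r x⟩

/-- admissible at level r for the slope x -/
def okS (x r : ℝ) : Prop := ∃ y : ℝ, okR r (x * y) ∧ okR r y ∧ okR r (2 * y) ∧ okR r (3 * y)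

lemma okS_neg (x r : ℝ) : okS (-x) r ↔ okS x r := by
  unfold okS
  simp only [neg_mul, ok_neg_iff]

def vec (a b : ℤ) : Fin 1 → Fin 4 → ℤ := fun _ => ![a, b, 2 * b, 3 * b]

lemma DVal_eq_s15 (a b : ℤ) (hb : b ≠ 0) (d : ℝ) (h1 : okS ((a : ℝ) / b) d)
    (h2 : ∀ r, okS ((a : ℝ) / b) r → d ≤ r) : DVal (spanTorus (vec a b)) = d := by
  have hb' : (b : ℝ) ≠ 0 := by exact_mod_cast hb
  apply IsLeast.csInf_eq
  have key : ∀ (p : Torus 4) (r : ℝ), (⨆ i, dist (p i) ((1 / 2 : ℝ) : AddCircle (1 : ℝ))) ≤ r ↔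
      ∀ i, dist (p i) ((1 / 2 : ℝ) : AddCircle (1 : ℝ)) ≤ r := by
    intro p r
    exact ciSup_le_iff (Set.finite_range _).bddAbove
  have lower : ∀ p ∈ spanTorus (vec a b),
      d ≤ ⨆ i, dist (p i) ((1 / 2 : ℝ) : AddCircle (1 : ℝ)) := by
    rintro p ⟨t, rfl⟩
    apply h2
    have h := (key (torusProj fun i => ∑ j, t j * (vec a b j i : ℝ)) _).1 le_rfl
    generalize (⨆ i, dist ((torusProj fun i => ∑ j, t j * (vec a b j i : ℝ)) i)
      ((1 / 2 : ℝ) : AddCircle (1 : ℝ))) = r at h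
    simp only [torusProj, ok_iff] at h
    have e0 := h 0
    have e1 := h 1
    have e2 := h 2
    have e3 := h 3
    simp [vec] at e0 e1 e2 e3
    refine ⟨t 0 * b, ?_, e1, ?_, ?_⟩
    · convert e0 using 1; field_simp
    · convert e2 using 1; ring
    · convert e3 using 1; ring
  constructor
  · obtain ⟨y, e0, e1, e2, e3⟩ := h1
    refine ⟨torusProj fun i => ∑ j, (fun _ : Fin 1 => y / b) j * (vec a b j i : ℝ), ⟨_, rfl⟩, ?_⟩
    apply le_antisymm
    · simp only []
      rw [key]
      intro i
      simp only [torusProj, ok_iff]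
      fin_cases i <;> simp [vec]
      · convert e0 using 1; field_simp
      · convert e1 using 1; field_simp
      · convert e2 using 1; field_simp
      · convert e3 using 1; field_simp
    · exact lower _ ⟨_, rfl⟩
  · rintro _ ⟨p, hp, rfl⟩
    exact lower p hp

lemma lower_quarter (x r : ℝ) (h : okS x r) : 1/4 ≤ r := by
  obtain ⟨y, -, ⟨n1, h1⟩, ⟨n2, h2⟩, ⟨n3, h3⟩⟩ := h
  by_contra! hr
  rw [abs_le] at h1 h2 h3
  obtain ⟨z, rfl⟩ : ∃ z, y = z + n1 := ⟨y - n1, by ring⟩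
  obtain ⟨m2, rfl⟩ : ∃ m, n2 = m + 2 * n1 := ⟨n2 - 2 * n1, by ring⟩
  obtain ⟨m3, rfl⟩ : ∃ m, n3 = m + 3 * n1 := ⟨n3 - 3 * n1, by ring⟩
  push_cast at *
  have a1 : -1 < m3 := by
    have : (-1 : ℝ) < m3 := by linarith
    exact_mod_cast this
  have a2 : m3 < 3 := by
    have : (m3 : ℝ) < 3 := by linarith
    exact_mod_cast this
  have b1 : -1 < m2 := by
    have : (-1 : ℝ) < m2 := by linarith
    exact_mod_cast this
  have b2 : m2 < 2 := by
    have : (m2 : ℝ) < 2 := by linarith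
    exact_mod_cast this
  interval_cases m3 <;> interval_cases m2 <;> push_cast at * <;> linarith

lemma ok_quarter (k : ℤ) : okR (1/4) (1/4 + k) ∧ okR (1/4) (2 * (1/4 + k)) ∧
    okR (1/4) (3 * (1/4 + k)) := by
  refine ⟨⟨k, ?_⟩, ⟨2 * k, ?_⟩, ⟨3 * k, ?_⟩⟩ <;> rw [abs_le] <;> push_cast <;>
    constructor <;> linarith

/-- non-integral slopes -/
lemma okS_frac (p q : ℤ) (hq : 2 ≤ q) (hc : IsCoprime p q) : okS ((p : ℝ) / q) (1/4) := by
  have hq' : (0 : ℝ) < q := by exact_mod_cast (by omega : 0 < q)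
  obtain ⟨j, hj1, hj2⟩ : ∃ j : ℤ, q ≤ p + 4 * j ∧ p + 4 * j ≤ 3 * q := by
    refine ⟨(q - p + 3) / 4, ?_, ?_⟩ <;> omega
  obtain ⟨u, w, huw⟩ := hc
  -- p * (u*j) = j - w*j*q
  refine ⟨1/4 + (u * j : ℤ), ?_, ok_quarter _⟩
  refine ⟨-(w * j), ?_⟩
  have huw' : (u : ℝ) * p + w * q = 1 := by exact_mod_cast huw
  have hj1' : (q : ℝ) ≤ p + 4 * j := by exact_mod_cast hj1
  have hj2' : (p : ℝ) + 4 * j ≤ 3 * q := by exact_mod_cast hj2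
  have e : (p : ℝ) / q * (1/4 + (u * j : ℤ)) - (-(w * j) : ℤ) = (p + 4 * j) / (4 * q) := by
    push_cast
    field_simp
    linear_combination 4 * (j : ℝ) * huw'
  rw [e, abs_le]
  constructor
  · have : 1/4 ≤ ((p : ℝ) + 4 * j) / (4 * q) := by
      rw [le_div_iff₀ (by positivity)]; linarith
    linarith
  · have : ((p : ℝ) + 4 * j) / (4 * q) ≤ 3/4 := by
      rw [div_le_iff₀ (by positivity)]; linarith
    linarith

lemma okS_int (c : ℤ) (hc : c % 4 ≠ 0) : okS c (1/4) := by
  refine ⟨1/4 + (0 : ℤ), ⟨c / 4, ?_⟩, ok_quarter 0⟩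
  have h1 : c / 4 * 4 + 1 ≤ c := by omega
  have h2 : c ≤ c / 4 * 4 + 3 := by omega
  have h1' : ((c / 4 : ℤ) : ℝ) * 4 + 1 ≤ c := by exact_mod_cast h1
  have h2' : (c : ℝ) ≤ ((c / 4 : ℤ) : ℝ) * 4 + 3 := by exact_mod_cast h2
  rw [abs_le]
  push_cast
  constructor <;> linarith

lemma okS_four (s : ℕ) : okS (4 * ((s : ℝ) + 1)) (1/4 + 1/(4 * (4 * (s : ℝ) + 5))) := by
  have hs : (0 : ℝ) ≤ s := by positivity
  obtain ⟨δ, hδ⟩ : ∃ δ : ℝ, δ = 1/(4 * (4 * (s : ℝ) + 5)) := ⟨_, rfl⟩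
  have hm : δ * (4 * (4 * (s : ℝ) + 5)) = 1 := by rw [hδ]; field_simp
  have hpos : 0 < δ := by rw [hδ]; positivity
  have hle : δ ≤ 1/20 := by nlinarith
  rw [← hδ]
  refine ⟨1/4 - δ, ⟨s, ?_⟩, ⟨0, ?_⟩, ⟨0, ?_⟩, ⟨0, ?_⟩⟩ <;> rw [abs_le] <;> push_cast <;>
    constructor <;> nlinarith

lemma lower_four_aux (s : ℕ) (r : ℝ) (hr : r < 1/4 + 1/(4 * (4 * (s : ℝ) + 5)))
    (z : ℝ) (hz0 : 0 ≤ z) (hz : z ≤ 1/2) (h0 : okR r (4 * ((s : ℝ) + 1) * z)) (h1 : okR r z)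
    (h2 : okR r (2 * z)) (h3 : okR r (3 * z)) : False := by
  have hs : (0 : ℝ) ≤ s := by positivity
  obtain ⟨δ, hδ⟩ : ∃ δ : ℝ, δ = 1/(4 * (4 * (s : ℝ) + 5)) := ⟨_, rfl⟩
  have hm : δ * (4 * (4 * (s : ℝ) + 5)) = 1 := by rw [hδ]; field_simp
  have hpos : 0 < δ := by rw [hδ]; positivity
  have hle : δ ≤ 1/20 := by nlinarith
  rw [← hδ] at hr
  obtain ⟨n0, h0⟩ := h0
  obtain ⟨n1, h1⟩ := h1
  obtain ⟨n2, h2⟩ := h2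
  obtain ⟨n3, h3⟩ := h3
  rw [abs_le] at h0 h1 h2 h3
  have c1 : -1 < n1 := by
    have : (-1 : ℝ) < n1 := by linarith
    exact_mod_cast this
  have c2 : n1 < 1 := by
    have : (n1 : ℝ) < 1 := by linarith
    exact_mod_cast this
  have b1 : -1 < n2 := by
    have : (-1 : ℝ) < n2 := by linarith
    exact_mod_cast this
  have b2 : n2 < 1 := by
    have : (n2 : ℝ) < 1 := by linarith
    exact_mod_cast this
  have a1 : -1 < n3 := by
    have : (-1 : ℝ) < n3 := by linarith
    exact_mod_cast this
  have a2 : n3 < 2 := by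
    have : (n3 : ℝ) < 2 := by linarith
    exact_mod_cast this
  obtain rfl : n1 = 0 := by omega
  obtain rfl : n2 = 0 := by omega
  have : n3 = 0 := by
    by_contra hne
    obtain rfl : n3 = 1 := by omega
    push_cast at *
    linarith
  subst this
  push_cast at *
  -- z = 1/4 + e, with -δ < e < δ/3
  obtain ⟨e, rfl⟩ : ∃ e, z = 1/4 + e := ⟨z - 1/4, by ring⟩
  have e1 : -δ < e := by linarith
  have e2 : e < δ / 3 := by linarith
  -- 4(s+1) z = (s+1) + 4(s+1)e
  have f1 : -(1/4 - δ) < 4 * ((s : ℝ) + 1) * e := by nlinarith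
  have f2 : 4 * ((s : ℝ) + 1) * e < 1/4 - δ := by nlinarith
  have g1 : (n0 : ℝ) < s + 1 := by nlinarith
  have g2 : (s : ℝ) < n0 := by nlinarith
  have g1' : n0 < s + 1 := by exact_mod_cast g1
  have g2' : (s : ℤ) < n0 := by exact_mod_cast g2
  omega

lemma ok_shift (r x : ℝ) (k : ℤ) (h : okR r x) : okR r (x + k) := by
  obtain ⟨n, hn⟩ := h
  refine ⟨n + k, ?_⟩
  push_cast
  rw [show x + k - ((n : ℝ) + k) - 1/2 = x - n - 1/2 by ring]
  exact hn

lemma lower_four (s : ℕ) (r : ℝ) (h : okS (4 * ((s : ℝ) + 1)) r) :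
    1/4 + 1/(4 * (4 * (s : ℝ) + 5)) ≤ r := by
  by_contra! hr
  obtain ⟨y, h0, h1, h2, h3⟩ := h
  have hy := abs_le.1 (abs_sub_round y)
  obtain ⟨z, hz⟩ : ∃ z, z = y - round y := ⟨_, rfl⟩
  rw [← hz] at hy
  have k0 : okR r (4 * ((s : ℝ) + 1) * z) := by
    convert ok_shift _ _ (-(4 * ((s : ℤ) + 1) * round y)) h0 using 1
    rw [hz]; push_cast; ring
  have k1 : okR r z := by
    convert ok_shift _ _ (-(round y)) h1 using 1
    rw [hz]; push_cast; ring
  have k2 : okR r (2 * z) := by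
    convert ok_shift _ _ (-(2 * round y)) h2 using 1
    rw [hz]; push_cast; ring
  have k3 : okR r (3 * z) := by
    convert ok_shift _ _ (-(3 * round y)) h3 using 1
    rw [hz]; push_cast; ring
  rcases le_total 0 z with hz0 | hz0
  · exact lower_four_aux s r hr z hz0 hy.2 k0 k1 k2 k3
  · refine lower_four_aux s r hr (-z) (by linarith) (by linarith) ?_ ?_ ?_ ?_
    · simpa using ok_neg _ _ k0
    · exact ok_neg _ _ k1
    · simpa using ok_neg _ _ k2
    · simpa using ok_neg _ _ k3

lemma coe_eq (x y : ℝ) (h : (x : AddCircle (1 : ℝ)) = y) : ∃ n : ℤ, (n : ℝ) = x - y := by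
  have : ((x - y : ℝ) : AddCircle (1 : ℝ)) = 0 := by rw [AddCircle.coe_sub, h, sub_self]
  rw [AddCircle.coe_eq_zero_iff] at this
  simpa using this

lemma int_zero (c : ℤ) (h : ∀ t : ℝ, ∃ n : ℤ, (n : ℝ) = t * c) : c = 0 := by
  by_contra hc
  have hc' : (c : ℝ) ≠ 0 := by exact_mod_cast hc
  obtain ⟨n, hn⟩ := h (1 / (2 * c))
  have : (n : ℝ) * 2 = 1 := by rw [hn]; field_simp
  have : n * 2 = 1 := by exact_mod_cast this
  omega

lemma sub_form (v : Fin 1 → Fin 4 → ℤ) (h : spanTorus v ⊆ U1) :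
    v = vec (v 0 0) (v 0 1) := by
  have key : ∀ t : ℝ, (∃ n : ℤ, (n : ℝ) = t * (v 0 2 - 2 * v 0 1 : ℤ)) ∧
      (∃ n : ℤ, (n : ℝ) = t * (v 0 3 - 3 * v 0 1 : ℤ)) := by
    intro t
    obtain ⟨u, hu⟩ := h (show (torusProj fun i => ∑ j, (fun _ : Fin 1 => t) j * (v j i : ℝ)) ∈
      spanTorus v from ⟨_, rfl⟩)
    have e1 := coe_eq _ _ (congrFun hu 1)
    have e2 := coe_eq _ _ (congrFun hu 2)
    have e3 := coe_eq _ _ (congrFun hu 3)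
    simp [Fin.sum_univ_two] at e1 e2 e3
    obtain ⟨n1, e1⟩ := e1
    obtain ⟨n2, e2⟩ := e2
    obtain ⟨n3, e3⟩ := e3
    refine ⟨⟨n2 - 2 * n1, ?_⟩, ⟨n3 - 3 * n1, ?_⟩⟩
    · push_cast; linarith
    · push_cast; linarith
  have z2 := int_zero _ fun t => (key t).1
  have z3 := int_zero _ fun t => (key t).2
  funext j i
  fin_cases j
  fin_cases i <;> simp [vec] <;> omega

lemma spectrum_sub (d : ℝ) (h : d ∈ relSpec1 U1) :
    d = 1/4 ∨ ∃ s : ℕ, d = 1/4 + 1/(4 * (4 * (s : ℝ) + 5)) := by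
  obtain ⟨T, ⟨v, -, rfl⟩, hp, hU, rfl⟩ := h
  have hv := sub_form v hU
  generalize v 0 0 = a at hv
  generalize v 0 1 = b at hv
  subst hv
  have ha : a ≠ 0 := by
    rintro rfl
    apply hp
    rintro _ ⟨t, rfl⟩
    refine Set.mem_iUnion.2 ⟨0, ?_⟩
    simp [torusProj, vec]
  have hb : b ≠ 0 := by
    rintro rfl
    apply hp
    rintro _ ⟨t, rfl⟩
    refine Set.mem_iUnion.2 ⟨1, ?_⟩
    simp [torusProj, vec]
  obtain ⟨x, hx⟩ : ∃ x : ℚ, x = (a : ℚ) / b := ⟨_, rfl⟩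
  have hx0 : x ≠ 0 := by
    rw [hx]; exact div_ne_zero (by exact_mod_cast ha) (by exact_mod_cast hb)
  have hxr : (a : ℝ) / b = x := by rw [hx]; push_cast; rfl
  have quarter : okS (x : ℝ) (1/4) → DVal (spanTorus (vec a b)) = 1/4 := by
    intro h
    refine DVal_eq_s15 a b hb _ (by rw [hxr]; exact h) fun r hr => lower_quarter _ _ hr
  by_cases hd : x.den = 1
  · have hxn : (x : ℝ) = x.num := by
      have : x = x.num := ((Rat.den_eq_one_iff x).1 hd).symm
      exact_mod_cast congrArg (fun q : ℚ => (q : ℝ)) this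
    have hn0 : x.num ≠ 0 := by simpa using hx0
    by_cases h4 : x.num % 4 = 0
    · right
      obtain ⟨s, hs⟩ : ∃ s : ℕ, x.num = 4 * (s + 1) ∨ x.num = -(4 * (s + 1)) :=
        ⟨x.num.natAbs / 4 - 1, by omega⟩
      have hiff : ∀ r, okS (x : ℝ) r ↔ okS (4 * ((s : ℝ) + 1)) r := by
        intro r
        rw [hxn]
        rcases hs with hs | hs
        · rw [hs]; push_cast; rfl
        · rw [hs]; push_cast; exact okS_neg _ _
      refine ⟨s, DVal_eq_s15 a b hb _ ?_ ?_⟩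
      · rw [hxr, hiff]; exact okS_four s
      · intro r hr
        rw [hxr, hiff] at hr
        exact lower_four s r hr
    · left
      apply quarter
      rw [hxn]
      exact okS_int _ h4
  · left
    apply quarter
    have hpos := x.den_pos
    have := okS_frac x.num x.den (by omega) (by
      rw [Int.isCoprime_iff_gcd_eq_one]
      exact x.reduced)
    rw [Rat.cast_def]
    exact_mod_cast this

lemma spectrum_sup (s : ℕ) : 1/4 + 1/(4 * (4 * (s : ℝ) + 5)) ∈ relSpec1 U1 := by
  refine ⟨spanTorus (vec (4 * (s + 1)) 1), ⟨_, ?_, rfl⟩, ?_, ?_, ?_⟩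
  · rw [linearIndependent_unique_iff]
    intro h
    have := congrFun h 1
    simp [vec] at this
  · intro h
    have hs : (0 : ℝ) ≤ s := by positivity
    have := h (show (torusProj fun i => ∑ j, (fun _ : Fin 1 => 1 / (20 * ((s : ℝ) + 1))) j *
      (vec (4 * (s + 1)) 1 j i : ℝ)) ∈ _ from ⟨_, rfl⟩)
    obtain ⟨i, hi⟩ := Set.mem_iUnion.1 this
    have e := coe_eq _ 0 hi
    obtain ⟨n, hn⟩ := e
    have hn' : (n : ℝ) * (20 * (s + 1)) = (vec (4 * (s + 1)) 1 0 i : ℝ) := by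
      rw [hn]; simp; field_simp
    have hn2 : n * (20 * (s + 1)) = vec (4 * (s + 1)) 1 0 i := by exact_mod_cast hn'
    have pos : 0 < vec (4 * (s + 1)) 1 0 i ∧ vec (4 * (s + 1)) 1 0 i < 20 * (s + 1) := by
      fin_cases i <;> simp [vec] <;> omega
    rw [← hn2] at pos
    have q1 : 0 < n := by
      by_contra! hc
      nlinarith
    nlinarith
  · rintro _ ⟨t, rfl⟩
    refine ⟨![t 0, t 0 * (4 * (s + 1))], ?_⟩
    congr 1
    funext i
    fin_cases i <;> simp [vec, Fin.sum_univ_two]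
  · symm
    apply DVal_eq_s15 _ _ one_ne_zero
    · push_cast; rw [div_one]; exact okS_four s
    · intro r hr
      push_cast at hr; rw [div_one] at hr; exact lower_four s r hr

/-- `𝒮₁(U¹)` has finite symmetric difference with `1/4 + 1/4Prog(4,5)`. -/
theorem stmt15 :
    (symmDiff (relSpec1 U1)
      {x : ℝ | ∃ s : ℕ, x = 1/4 + 1/(4 * (4 * (s : ℝ) + 5))}).Finite := by
  apply (Set.finite_singleton (1/4 : ℝ)).subset
  rintro d (⟨h1, h2⟩ | ⟨⟨s, rfl⟩, h2⟩)
  · rcases spectrum_sub d h1 with h | h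
    · exact h
    · exact absurd h h2
  · exact absurd (spectrum_sup s) h2
end
end
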